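/- Theorem 1 (fractional incomplete lumped formulation, linear case). Let a, λ, α, γ, A > 0, 0 < β < 1/2, and let h : [0,∞) → ℝ be continuous and bounded with h(0) = 0. Define f₁(τ,s) = (2βτ/s^{2β+1})·M(τ/s^{2β}; 2β) and f₂(τ,z,s) = (β(z+ατ)/(a√π s^{2β+1}))·∫_0^∞ u^{-1/2} exp(−(z+ατ)²/(4a²u) − λ²u/(4a²))·M(u/s^{2β}; 2β) du for s > 0, let g₁(t,τ,z) = (f₁(τ,·) ⋆ h ⋆ f₂(τ,z,·))(t) be the double Laplace convolution, and set u(x,z,t) = (A e^{γx}/(2√π)) ∫_0^∞ x τ^{−3/2} exp(−x²/(4τ) − γ²τ)·exp(λ(z+ατ)/(2a²))·g₁(t,τ,z) dτ. Then u solves the fractional boundary value problem: (i) D_*^{2β}u(x,z,·)(t) = a² ∂²u/∂z²(x,z,t) − λ ∂u/∂z(x,z,t) for all x, z, t > 0; (ii) D_*^{2β}u(x,0,·)(t) = ∂²u/∂x²(x,0,t) − 2γ ∂u/∂x(x,0,t) + α ∂u/∂z(x,0,t) for all x, t > 0; (iii) u(x,z,t) → A·h(t) as (x,z) → (0,0)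 for each t > 0; (iv) u(x,z,t) → 0 as x² + z² → ∞ for each t > 0; (v) u(x,z,t) → 0 as t → 0⁺ for all x, z > 0. -/

import Mathlib

open MeasureTheory Real Filter Set

/-- The Wright-type auxiliary function `M(y; δ)`. -/
noncomputable def Mwr (y δ : ℝ) : ℝ :=
  ∑' n : ℕ, (-y) ^ n / ((n.factorial : ℝ) * Real.Gamma (-δ * (n : ℝ) + 1 - δ))

/-- The Caputo fractional derivative of order `0 < δ < 1`. -/
noncomputable def caputo (δ : ℝ) (v : ℝ → ℝ) (t : ℝ) : ℝ :=
  (1 / Real.Gamma (1 - δ)) * ∫ s in (0 : ℝ)..t, deriv v s * (t - s) ^ (-δ)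

/-- The Laplace convolution `(f ⋆ g)(t) = ∫_0^t f(t−s) g(s) ds`. -/
noncomputable def lconv (f g : ℝ → ℝ) (t : ℝ) : ℝ :=
  ∫ s in (0 : ℝ)..t, f (t - s) * g s

/-!
Convolving with `f₁ τ`, and with `f₂ τ z` weighted by `exp (λ (z + α τ) / (2 a²))`, averages the
data over the stable subordinator of index `δ = 2 β`, run for the time `τ` plus the passage time of
a drifted Brownian motion through the level `z + α τ`; the remaining integral takes for `τ` the
passage time of a second one through `x`. Hence the Laplace transform of `u` in time is that of
`A h` times `exp (-X(q) x - Z(q) z)` at `q = p ^ δ`, where `Z(q)` is the root of `a² Z² + λ Z = q`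
and `X(q)` that of `X² + 2 γ X = q + α Z(q)` with nonnegative real part. These two equations are (i)
and (ii) in the transform, where the Caputo derivative is multiplication by `q`.

For `x, z ≥ 0` not both zero, `exp (-X(q) x - Z(q) z)` decays like `exp (-κ |p| ^ (δ / 2))` on the
line `Re p = 1`, so the inversion integral may be differentiated, and (iv) and (v) follow by
dominated convergence. It gives no control at the boundary: the `z`-derivative at `z = 0`, where
negative `z` are seen too, and the limit (iii) are taken under the integral over `τ`. As `u` at time
`t` depends only on `h` on `[0, t]`, the data may be assumed integrable.
-/

section ContourShift

variable {E : Type*} [NormedAddCommGroup E] [NormedSpace ℂ E]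

theorem frequently_lt_of_integrable {B : ℝ → ℝ} (hB : Integrable B) {ε : ℝ} (hε : 0 < ε) :
    ∃ᶠ T in atTop, B T < ε := by
  intro hge
  obtain ⟨T₀, hT₀⟩ := eventually_atTop.1 hge
  have hconst : IntegrableOn (fun _ : ℝ => ε) (Ioi T₀) := by
    refine hB.integrableOn.mono' aestronglyMeasurable_const ?_
    filter_upwards [ae_restrict_mem measurableSet_Ioi] with T hT
    rw [Real.norm_of_nonneg hε.le]
    exact not_lt.1 (hT₀ T (mem_Ioi.1 hT).le)
  rw [integrableOn_const_iff] at hconst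
  simp [hε.ne'] at hconst

theorem intervalIntegral_sub_eq_of_strip {f : ℂ → E} {a b : ℝ} (hab : a ≤ b)
    (hf : ContinuousOn f (Complex.im ⁻¹' Icc a b))
    (hf' : DifferentiableOn ℂ f (Complex.im ⁻¹' Ioo a b)) (T : ℝ) :
    (∫ x in -T..T, f (x + a * Complex.I)) - ∫ x in -T..T, f (x + b * Complex.I)
      = Complex.I • (∫ y in a..b, f ((-T : ℝ) + y * Complex.I))
        - Complex.I • ∫ y in a..b, f (T + y * Complex.I) := by
  have hrect := Complex.integral_boundary_rect_eq_zero_of_continuousOn_of_differentiableOn f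
    ⟨-T, a⟩ ⟨T, b⟩ (hf.mono fun w hw => by simpa [uIcc_of_le hab] using hw.2)
    (hf'.mono fun w hw => by simpa [hab] using hw.2)
  rw [← sub_eq_zero, ← hrect]
  abel

theorem integral_horizontal_line_eq {f : ℂ → E} {a b : ℝ} (hab : a ≤ b)
    (hf : ContinuousOn f (Complex.im ⁻¹' Icc a b))
    (hf' : DifferentiableOn ℂ f (Complex.im ⁻¹' Ioo a b)) {B : ℝ → ℝ} (hB : Integrable B)
    (hfB : ∀ x : ℝ, ∀ y ∈ Icc a b, ‖f (x + y * Complex.I)‖ ≤ B x) :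
    ∫ x : ℝ, f (x + a * Complex.I) = ∫ x : ℝ, f (x + b * Complex.I) := by
  have hcont : ∀ y ∈ Icc a b, Continuous fun x : ℝ => f (x + y * Complex.I) := fun y hy =>
    hf.comp_continuous (by fun_prop) fun x => by simpa using hy
  have hlim : ∀ y ∈ Icc a b, Tendsto (fun T : ℝ => ∫ x in -T..T, f (x + y * Complex.I)) atTop
      (nhds (∫ x : ℝ, f (x + y * Complex.I))) := fun y hy =>
    intervalIntegral_tendsto_integral
      (hB.mono' (hcont y hy).aestronglyMeasurable (Eventually.of_forall fun x => hfB x y hy))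
      tendsto_neg_atTop_atBot tendsto_id
  have hside : ∀ T : ℝ, ‖Complex.I • ∫ y in a..b, f (T + y * Complex.I)‖ ≤ B T * (b - a) := by
    intro T
    rw [norm_smul, Complex.norm_I, one_mul, ← abs_of_nonneg (sub_nonneg.2 hab)]
    exact intervalIntegral.norm_integral_le_of_norm_le_const fun y hy =>
      hfB T y (uIcc_of_le hab ▸ uIoc_subset_uIcc hy)
  have hle : ∀ T : ℝ, ‖(∫ x in -T..T, f (x + a * Complex.I)) - ∫ x in -T..T, f (x + b * Complex.I)‖
      ≤ (B T + B (-T)) * (b - a) := by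
    intro T
    rw [intervalIntegral_sub_eq_of_strip hab hf hf']
    linarith [norm_sub_le (Complex.I • ∫ y in a..b, f ((-T : ℝ) + y * Complex.I))
      (Complex.I • ∫ y in a..b, f (T + y * Complex.I)), hside T, hside (-T)]
  have hdiff := ((hlim a ⟨le_rfl, hab⟩).sub (hlim b ⟨hab, le_rfl⟩)).norm
  refine sub_eq_zero.1 (norm_le_zero_iff.1 (le_of_forall_pos_lt_add fun ε hε => ?_))
  by_contra! hfar
  rw [zero_add] at hfar
  obtain ⟨T, hsmall, hlarge⟩ := ((frequently_lt_of_integrable (hB.add hB.comp_neg)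
    (by have := sub_nonneg.2 hab; positivity : 0 < ε / 2 / (b - a + 1))).and_eventually
    (hdiff.eventually (lt_mem_nhds ((half_lt_self hε).trans_le hfar)))).exists
  simp only [Pi.add_apply, lt_div_iff₀ (by linarith : 0 < b - a + 1)] at hsmall
  have hB0 : 0 ≤ B T + B (-T) := add_nonneg ((norm_nonneg _).trans (hfB T a ⟨le_rfl, hab⟩))
    ((norm_nonneg _).trans (hfB (-T) a ⟨le_rfl, hab⟩))
  linarith [hle T]

end ContourShift

section ExpSubstitution

variable {E : Type*} [NormedAddCommGroup E] [NormedSpace ℝ E]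

theorem integral_exp_smul_comp_exp (g : ℝ → E) :
    ∫ x, exp x • g (exp x) = ∫ r in Ioi 0, g r := by
  have h := integral_image_eq_integral_abs_deriv_smul MeasurableSet.univ
    (fun x _ => (hasDerivAt_exp x).hasDerivWithinAt) exp_injective.injOn g
  simpa only [image_univ, range_exp, abs_exp, setIntegral_univ] using h.symm

theorem integrable_exp_smul_comp_exp_iff (g : ℝ → E) :
    Integrable (fun x => exp x • g (exp x)) ↔ IntegrableOn g (Ioi 0) := by
  have h := integrableOn_image_iff_integrableOn_abs_deriv_smul MeasurableSet.univ
    (fun x _ => (hasDerivAt_exp x).hasDerivWithinAt) exp_injective.injOn g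
  simpa only [image_univ, range_exp, abs_exp, integrableOn_univ] using h.symm

end ExpSubstitution

open ComplexConjugate in
theorem integral_eq_two_mul_re_of_neg_eq_conj {F : ℝ → ℂ} (hF : Integrable F)
    (hconj : ∀ x, F (-x) = conj (F x)) : ∫ x, F x = (2 * (∫ x in Ioi 0, F x).re : ℝ) := by
  have hneg : ∫ x in Iic 0, F x = conj (∫ x in Ioi 0, F x) := by
    have := integral_comp_neg_Ioi 0 F
    rw [neg_zero] at this
    rw [← this, ← integral_conj]
    exact integral_congr_ae (Eventually.of_forall fun x => hconj x)
  rw [← intervalIntegral.integral_Iic_add_Ioi hF.integrableOn hF.integrableOn (b := 0), hneg,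
    add_comm, Complex.add_conj]

section StretchedExponential

variable {δ s C κ : ℝ}

theorem mul_rpow_le_half_mul_add (hδ₀ : 0 < δ) (hδ₁ : δ < 1) (hs : 0 < s) (hC : 0 ≤ C) :
    ∃ D : ℝ, ∀ r : ℝ, 0 < r → C * r ^ δ ≤ s / 2 * r + D := by
  have hdecay : Tendsto (fun r : ℝ => C * r ^ (-(1 - δ))) atTop (nhds (C * 0)) :=
    (tendsto_rpow_neg_atTop (sub_pos.2 hδ₁)).const_mul C
  rw [mul_zero] at hdecay
  obtain ⟨R, hR⟩ := eventually_atTop.1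
    ((hdecay.eventually (ge_mem_nhds (half_pos hs))).and (eventually_gt_atTop 0))
  have hR₀ : 0 < R := (hR R le_rfl).2
  have hCR : 0 ≤ C * R ^ δ := by positivity
  refine ⟨C * R ^ δ, fun r hr => ?_⟩
  rcases le_total r R with hrR | hRr
  · have hmono : C * r ^ δ ≤ C * R ^ δ := by gcongr
    have : 0 ≤ s / 2 * r := by positivity
    linarith
  · have hsplit : C * r ^ δ = C * r ^ (-(1 - δ)) * r := by
      rw [mul_assoc, ← rpow_add_one hr.ne']
      ring_nf
    have := mul_le_mul_of_nonneg_right (hR r hRr).1 hr.le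
    linarith

theorem integrableOn_exp_neg_mul_rpow (hδ₀ : 0 < δ) (hκ : 0 < κ) :
    IntegrableOn (fun r : ℝ => exp (-κ * r ^ δ)) (Ioi 0) := by
  simpa using integrableOn_rpow_mul_exp_neg_mul_rpow (s := 0) (by norm_num) hδ₀ hκ

theorem integrable_exp_neg_mul_abs_rpow (hδ₀ : 0 < δ) (hκ : 0 < κ) :
    Integrable fun x : ℝ => exp (-κ * |x| ^ δ) :=
  Integrable.of_integral_ne_zero <| by
    rw [integral_comp_abs (f := fun x => exp (-κ * x ^ δ)), integral_exp_neg_mul_rpow hδ₀ hκ]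
    positivity

theorem integrableOn_one_add_mul_exp_rpow_sub (hδ₀ : 0 < δ) (hδ₁ : δ < 1) (hs : 0 < s)
    (hC : 0 ≤ C) :
    IntegrableOn (fun r : ℝ => (1 + r) * exp (C * r ^ δ - s * r)) (Ioi 0) := by
  obtain ⟨D, hD⟩ := mul_rpow_le_half_mul_add hδ₀ hδ₁ hs hC
  have hlin : IntegrableOn (fun r : ℝ => (1 + r) * exp (-(s / 2) * r)) (Ioi 0) := by
    have hpow (n : ℝ) (hn : -1 < n) :=
      integrableOn_rpow_mul_exp_neg_mul_rpow hn one_pos (half_pos hs)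
    refine ((hpow 0 (by norm_num)).add (hpow 1 (by norm_num))).congr_fun (fun r _ => ?_)
      measurableSet_Ioi
    simp only [Pi.add_apply, rpow_zero, rpow_one]
    ring
  refine (hlin.const_mul (exp D)).mono' (by fun_prop) ?_
  filter_upwards [ae_restrict_mem measurableSet_Ioi] with r hr
  have hr₀ : 0 < r := hr
  rw [Real.norm_of_nonneg (by positivity), mul_left_comm, ← exp_add]
  gcongr
  linarith [hD r hr₀]

theorem integrableOn_exp_rpow_sub (hδ₀ : 0 < δ) (hδ₁ : δ < 1) (hs : 0 < s) (hC : 0 ≤ C) :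
    IntegrableOn (fun r : ℝ => exp (C * r ^ δ - s * r)) (Ioi 0) := by
  refine (integrableOn_one_add_mul_exp_rpow_sub hδ₀ hδ₁ hs hC).mono' (by fun_prop) ?_
  filter_upwards [ae_restrict_mem measurableSet_Ioi] with r hr
  rw [Real.norm_of_nonneg (exp_pos _).le]
  exact le_mul_of_one_le_left (exp_pos _).le (by linarith [mem_Ioi.1 hr])

end StretchedExponential

theorem one_div_Gamma_one_sub {x : ℝ} (hx : 0 < x) :
    1 / Gamma (1 - x) = Gamma x * sin (π * x) / π := by
  have hreflect := Real.Gamma_mul_Gamma_one_sub x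
  have hGamma := (Gamma_pos_of_pos hx).ne'
  by_cases hsin : sin (π * x) = 0
  · rw [hsin, div_zero] at hreflect
    simp [(mul_eq_zero.1 hreflect).resolve_left hGamma, hsin]
  · have hGamma' : Gamma (1 - x) ≠ 0 := by
      intro hzero
      rw [hzero, mul_zero] at hreflect
      exact div_ne_zero pi_ne_zero hsin hreflect.symm
    rw [eq_div_iff hsin] at hreflect
    rw [div_eq_div_iff hGamma' pi_ne_zero]
    linarith

/-- The density of the one-sided stable law of index `δ` at time `τ`, extended by `0` to
`v ≤ 0`; its Laplace transform is `exp (-τ p ^ δ)`. For `δ = 2β` this is the function `f₁` of the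
paper. -/
noncomputable def stableKernel (δ τ v : ℝ) : ℝ :=
  if 0 < v then δ * τ / v ^ (δ + 1) * Mwr (τ / v ^ δ) δ else 0

/-- The values of `exp (v p - τ p ^ δ)` at `p = -r` on the upper edge of the cut of `p ^ δ` along
the negative half-line. -/
noncomputable def cutIntegrand (δ τ v r : ℝ) : ℂ :=
  Complex.exp (-(v * r : ℝ) - (τ * r ^ δ : ℝ) * Complex.exp ((π * δ : ℝ) * Complex.I))

section StableKernel

variable {δ τ v : ℝ}

theorem hasSum_integral_cutIntegrand (hδ₀ : 0 < δ) (hδ₁ : δ < 1) (hτ : 0 < τ) (hv : 0 < v) :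
    HasSum (fun n : ℕ => ∫ r in Ioi (0 : ℝ), (-(τ * r ^ δ : ℝ) *
        Complex.exp ((π * δ : ℝ) * Complex.I)) ^ n / (n.factorial : ℂ) * (exp (-(v * r)) : ℝ))
      (∫ r in Ioi (0 : ℝ), cutIntegrand δ τ v r) := by
  have htsum : (fun r : ℝ => ∑' n : ℕ, (τ * r ^ δ) ^ n / n.factorial * exp (-(v * r)))
      = fun r => exp (τ * r ^ δ - v * r) := by
    funext r
    rw [tsum_mul_right, sub_eq_add_neg, exp_add, congrFun Real.exp_eq_exp_ℝ (τ * r ^ δ),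
      NormedSpace.exp_eq_tsum_div]
  refine hasSum_integral_of_dominated_convergence
    (fun n r => (τ * r ^ δ) ^ n / n.factorial * exp (-(v * r)))
    (fun n => (by fun_prop : Measurable _).aestronglyMeasurable) (fun n => ?_)
    (Eventually.of_forall fun r => (Real.summable_pow_div_factorial _).mul_right _) ?_
    (Eventually.of_forall fun r => ?_)
  · filter_upwards [ae_restrict_mem measurableSet_Ioi] with r hr
    have hr₀ : 0 < r := hr
    rw [norm_mul, norm_div, norm_pow, norm_mul, Complex.norm_exp_ofReal_mul_I, norm_neg,
      Complex.norm_real, Complex.norm_real, Complex.norm_natCast,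
      Real.norm_of_nonneg (exp_pos _).le, Real.norm_of_nonneg (by positivity), mul_one]
  · rw [htsum]
    exact integrableOn_exp_rpow_sub hδ₀ hδ₁ hv hτ.le
  · have hsplit : cutIntegrand δ τ v r = Complex.exp (-(τ * r ^ δ : ℝ) *
        Complex.exp ((π * δ : ℝ) * Complex.I)) * (exp (-(v * r)) : ℝ) := by
      rw [cutIntegrand, Complex.ofReal_exp, ← Complex.exp_add]
      push_cast
      ring_nf
    rw [hsplit]
    refine HasSum.mul_right _ ?_
    rw [Complex.exp_eq_exp_ℂ]
    exact NormedSpace.expSeries_div_hasSum_exp _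

theorem im_integral_cutIntegrand_term (hδ₀ : 0 < δ) (hv : 0 < v) (τ : ℝ) (n : ℕ) :
    (∫ r in Ioi (0 : ℝ), (-(τ * r ^ δ : ℝ) * Complex.exp ((π * δ : ℝ) * Complex.I)) ^ n
      / (n.factorial : ℂ) * (exp (-(v * r)) : ℝ)).im
      = (-τ) ^ n / n.factorial * sin (π * (δ * n)) *
        ((1 / v) ^ (δ * n + 1) * Gamma (δ * n + 1)) := by
  set c : ℂ := Complex.exp ((π * δ : ℝ) * Complex.I) with hc
  have hfactor : ∫ r in Ioi (0 : ℝ),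
      (-(τ * r ^ δ : ℝ) * c) ^ n / (n.factorial : ℂ) * (exp (-(v * r)) : ℝ)
      = ((-τ) ^ n / n.factorial : ℝ) * c ^ n *
        (∫ r in Ioi (0 : ℝ), r ^ (δ * n + 1 - 1) * exp (-(v * r)) : ℝ) := by
    rw [← integral_complex_ofReal, ← integral_const_mul]
    refine setIntegral_congr_fun measurableSet_Ioi fun r hr => ?_
    simp only [add_sub_cancel_right]
    rw [rpow_mul (mem_Ioi.1 hr).le, rpow_natCast]
    push_cast
    rw [mul_pow, neg_pow, neg_pow (τ : ℂ), mul_pow]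
    ring
  have hsin : (c ^ n).im = sin (π * (δ * n)) := by
    rw [hc, ← Complex.exp_nat_mul, show (n : ℂ) * ((π * δ : ℝ) * Complex.I)
      = (π * (δ * n) : ℝ) * Complex.I by push_cast; ring, Complex.exp_ofReal_mul_I_im]
  rw [hfactor, Real.integral_rpow_mul_exp_neg_mul_Ioi (by positivity) hv, Complex.im_mul_ofReal,
    Complex.im_ofReal_mul, hsin]

-- Euler's reflection formula turns the coefficients of `Mwr` into the Gamma integrals of the
-- exponential series of the integrand.
theorem stableKernel_eq_im_integral_cutIntegrand (hδ₀ : 0 < δ) (hδ₁ : δ < 1) (hτ : 0 < τ)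
    (hv : 0 < v) :
    stableKernel δ τ v = -(1 / π) * (∫ r in Ioi (0 : ℝ), cutIntegrand δ τ v r).im := by
  have hsum := Complex.hasSum_im (hasSum_integral_cutIntegrand hδ₀ hδ₁ hτ hv)
  simp only [im_integral_cutIntegrand_term hδ₀ hv] at hsum
  rw [← hasSum_nat_add_iff' 1] at hsum
  simp only [Finset.range_one, Finset.sum_singleton, Nat.cast_zero, mul_zero, sin_zero, zero_mul,
    sub_zero] at hsum
  rw [stableKernel, if_pos hv, Mwr, ← tsum_mul_left, ← (hsum.mul_left (-(1 / π))).tsum_eq]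
  refine tsum_congr fun n => ?_
  have hδn : 0 < δ * (n + 1 : ℕ) := by positivity
  have hpow : (1 / v) ^ (δ * (n + 1 : ℕ) + 1) = 1 / (v ^ (δ + 1) * (v ^ δ) ^ n) := by
    rw [one_div, inv_rpow hv.le, ← rpow_natCast, ← rpow_mul hv.le, ← rpow_add hv, one_div]
    congr 2
    push_cast
    ring
  rw [show -δ * (n : ℝ) + 1 - δ = 1 - δ * (n + 1 : ℕ) by push_cast; ring, ← div_div,
    div_eq_mul_one_div _ (Gamma _), one_div_Gamma_one_sub hδn, Gamma_add_one hδn.ne',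
    Nat.factorial_succ, hpow, neg_pow, neg_pow τ, div_pow, pow_succ, pow_succ]
  push_cast
  field_simp

theorem stableKernel_of_nonpos (δ τ : ℝ) (hv : v ≤ 0) : stableKernel δ τ v = 0 :=
  if_neg hv.not_gt

theorem stableKernel_scaling (hδ₀ : 0 < δ) (hτ : 0 < τ) (v : ℝ) :
    stableKernel δ τ v = τ ^ (-(1 / δ)) * stableKernel δ 1 (τ ^ (-(1 / δ)) * v) := by
  have hscale : 0 < τ ^ (-(1 / δ)) := by positivity
  simp only [stableKernel, mul_pos_iff_of_pos_left hscale]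
  split_ifs with hv
  · have hpow : (τ ^ (-(1 / δ))) ^ δ = τ⁻¹ := by
      rw [← rpow_mul hτ.le, show -(1 / δ) * δ = -1 by field_simp, rpow_neg_one]
    rw [rpow_add_one hv.ne', rpow_add_one (by positivity), mul_rpow hscale.le hv.le, hpow,
      show 1 / (τ⁻¹ * v ^ δ) = τ / v ^ δ by field_simp]
    field_simp
  · simp

theorem stableKernel_one_eq (δ : ℝ) (hv : 0 < v) :
    stableKernel δ 1 v = v⁻¹ * stableKernel δ (v ^ δ)⁻¹ 1 := by
  simp only [stableKernel, if_pos hv, if_pos one_pos, one_rpow, div_one]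
  rw [rpow_add_one hv.ne', one_div]
  field_simp

theorem norm_cutIntegrand_sub_exp_le (hδ₀ : 0 < δ) (hδ₁ : δ < 1) (hτ : 0 ≤ τ) (hτ₁ : τ ≤ 1)
    {r : ℝ} (hr : 0 < r) :
    ‖cutIntegrand δ τ 1 r - (exp (-r) : ℝ)‖ ≤ τ * ((1 + r) * exp (1 * r ^ δ - 1 * r)) := by
  set c : ℂ := Complex.exp ((π * δ : ℝ) * Complex.I) with hc
  have hfactor : cutIntegrand δ τ 1 r - (exp (-r) : ℝ)
      = (exp (-r) : ℝ) * (Complex.exp (-((τ * r ^ δ : ℝ) * c)) - 1) := by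
    rw [mul_sub, Complex.ofReal_exp, ← Complex.exp_add, mul_one, cutIntegrand, ← hc]
    push_cast
    ring_nf
  have hexp := Complex.norm_exp_sub_sum_le_norm_mul_exp (-((τ * r ^ δ : ℝ) * c)) 1
  simp only [Finset.range_one, Finset.sum_singleton, pow_zero, Nat.factorial_zero, Nat.cast_one,
    div_one, pow_one, norm_neg, norm_mul, hc, Complex.norm_exp_ofReal_mul_I, mul_one,
    Complex.norm_real, Real.norm_of_nonneg (by positivity : 0 ≤ r ^ δ),
    Real.norm_of_nonneg hτ] at hexp
  have hrpow : r ^ δ ≤ 1 + r := by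
    rcases le_total r 1 with h | h
    · linarith [rpow_le_one hr.le h hδ₀.le]
    · linarith [(rpow_le_rpow_of_exponent_le h hδ₁.le).trans_eq (rpow_one r)]
  have hmono : exp (τ * r ^ δ) ≤ exp (1 * r ^ δ) := by gcongr
  rw [hfactor, norm_mul, Complex.norm_real, Real.norm_of_nonneg (exp_pos _).le]
  calc exp (-r) * ‖Complex.exp (-((τ * r ^ δ : ℝ) * c)) - 1‖
      ≤ exp (-r) * (τ * r ^ δ * exp (τ * r ^ δ)) := by gcongr
    _ ≤ exp (-r) * (τ * (1 + r) * exp (1 * r ^ δ)) := by gcongr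
    _ = τ * ((1 + r) * exp (1 * r ^ δ - 1 * r)) := by
      rw [sub_eq_add_neg, exp_add, one_mul r]
      ring

-- Subtracting the real function `exp (-r)` from the integrand does not change the imaginary part
-- of the integral but makes it of order `τ`.
theorem exists_abs_stableKernel_apply_one_le (hδ₀ : 0 < δ) (hδ₁ : δ < 1) :
    ∃ C, ∀ τ, 0 < τ → τ ≤ 1 → |stableKernel δ τ 1| ≤ C * τ := by
  have hmajor := integrableOn_one_add_mul_exp_rpow_sub hδ₀ hδ₁ one_pos zero_le_one
  refine ⟨1 / π * ∫ r in Ioi (0 : ℝ), (1 + r) * exp (1 * r ^ δ - 1 * r), fun τ hτ hτ₁ => ?_⟩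
  have hbound : ∀ r ∈ Ioi (0 : ℝ), ‖cutIntegrand δ τ 1 r - (exp (-r) : ℝ)‖
      ≤ τ * ((1 + r) * exp (1 * r ^ δ - 1 * r)) :=
    fun r hr => norm_cutIntegrand_sub_exp_le hδ₀ hδ₁ hτ.le hτ₁ hr
  have hexp : IntegrableOn (fun r : ℝ => ((exp (-r) : ℝ) : ℂ)) (Ioi 0) :=
    (integrableOn_exp_neg_Ioi 0).ofReal
  have hdiff : IntegrableOn (fun r => cutIntegrand δ τ 1 r - (exp (-r) : ℝ)) (Ioi 0) := by
    refine (hmajor.const_mul τ).mono'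
      (by unfold cutIntegrand; exact (by fun_prop : Measurable _).aestronglyMeasurable) ?_
    filter_upwards [ae_restrict_mem measurableSet_Ioi] with r hr using hbound r hr
  have him : (∫ r in Ioi (0 : ℝ), cutIntegrand δ τ 1 r).im
      = (∫ r in Ioi (0 : ℝ), (cutIntegrand δ τ 1 r - (exp (-r) : ℝ))).im := by
    have hsplit := integral_add hdiff hexp
    simp only [sub_add_cancel] at hsplit
    rw [hsplit, integral_complex_ofReal, Complex.add_im, Complex.ofReal_im, add_zero]
  rw [stableKernel_eq_im_integral_cutIntegrand hδ₀ hδ₁ hτ one_pos, him, abs_mul, abs_neg,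
    abs_of_pos (by positivity : 0 < 1 / π), mul_assoc]
  gcongr
  refine (Complex.abs_im_le_norm _).trans ((norm_integral_le_integral_norm _).trans ?_)
  rw [mul_comm, ← integral_const_mul]
  exact setIntegral_mono_on hdiff.norm (hmajor.const_mul τ) measurableSet_Ioi hbound

end StableKernel

/-- The Bromwich integrand `exp (v p - τ p ^ δ) dp` in the coordinate `w = log p`, in which the
rays `arg p = θ` are horizontal lines and the integrand is entire. -/
noncomputable def logBromwich (δ τ v : ℝ) (w : ℂ) : ℂ :=
  Complex.exp (w + v * Complex.exp w - τ * Complex.exp (δ * w))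

section RayRotation

variable {δ τ v : ℝ}

theorem norm_logBromwich (δ τ v x θ : ℝ) :
    ‖logBromwich δ τ v (x + θ * Complex.I)‖
      = exp x * exp (v * exp x * cos θ - τ * exp x ^ δ * cos (δ * θ)) := by
  rw [logBromwich, Complex.norm_exp, Complex.sub_re, Complex.add_re, Complex.re_ofReal_mul,
    Complex.re_ofReal_mul, Complex.exp_re, Complex.exp_re, ← exp_mul, ← exp_add]
  simp
  ring_nf

theorem integral_logBromwich_line (δ τ v θ : ℝ) :
    ∫ x : ℝ, logBromwich δ τ v (x + θ * Complex.I)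
      = Complex.exp (θ * Complex.I) * ∫ r in Ioi (0 : ℝ), Complex.exp
        ((v * r : ℝ) * Complex.exp (θ * Complex.I)
          - (τ * r ^ δ : ℝ) * Complex.exp ((δ * θ : ℝ) * Complex.I)) := by
  rw [← integral_exp_smul_comp_exp, ← integral_const_mul]
  refine integral_congr_ae (Eventually.of_forall fun x => ?_)
  simp only [logBromwich]
  rw [Complex.real_smul, Complex.ofReal_exp, ← mul_assoc, mul_comm (Complex.exp (θ * Complex.I)),
    mul_assoc, ← Complex.exp_add, ← Complex.exp_add, ← exp_mul]
  push_cast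
  rw [mul_assoc (v : ℂ), mul_assoc (τ : ℂ), ← Complex.exp_add, ← Complex.exp_add]
  ring_nf

-- At the angle `θ₁ = π / (1 + δ)` both `cos (δ θ₁)` and `-cos θ₁` are positive: below it the term
-- `-τ p ^ δ` provides the decay, above it the term `v p`.
theorem norm_logBromwich_le (hδ₀ : 0 < δ) (hδ₁ : δ < 1) (hτ : 0 < τ) (hv : 0 < v) (x : ℝ) {θ : ℝ}
    (hθ : θ ∈ Icc (π / 2) π) :
    ‖logBromwich δ τ v (x + θ * Complex.I)‖ ≤
      exp x * (exp (-(τ * cos (δ * (π / (1 + δ)))) * exp x ^ δ)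
        + exp (τ * exp x ^ δ - v * cos (δ * (π / (1 + δ))) * exp x)) := by
  set θ₁ := π / (1 + δ) with hθ₁
  have hcos : cos θ₁ = -cos (δ * θ₁) := by
    rw [← cos_pi_sub, show δ * θ₁ = π - θ₁ by rw [hθ₁]; field_simp; ring, sub_sub_cancel]
  have hθ₁π : θ₁ ≤ π := div_le_self pi_pos.le (by linarith)
  have hθ₁0 : 0 ≤ θ₁ := by positivity
  have hπ := pi_pos
  have hr : 0 < exp x ^ δ := by positivity
  rw [norm_logBromwich]
  gcongr
  rcases le_total θ θ₁ with hle | hge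
  · have hcosθ : cos θ ≤ 0 := cos_nonpos_of_pi_div_two_le_of_le hθ.1 (by linarith [hθ.2])
    have hcosδθ : cos (δ * θ₁) ≤ cos (δ * θ) := cos_le_cos_of_nonneg_of_le_pi
      (by nlinarith [hθ.1]) (by nlinarith) (by gcongr)
    refine le_add_of_le_of_nonneg (exp_le_exp.2 ?_) (exp_pos _).le
    have := mul_nonpos_of_nonneg_of_nonpos (mul_pos hv (exp_pos x)).le hcosθ
    have := mul_le_mul_of_nonneg_left hcosδθ (mul_pos hτ hr).le
    linarith
  · have hcosθ : cos θ ≤ -cos (δ * θ₁) := hcos ▸ cos_le_cos_of_nonneg_of_le_pi hθ₁0 hθ.2 hge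
    refine le_add_of_nonneg_of_le (exp_pos _).le (exp_le_exp.2 ?_)
    have := mul_le_mul_of_nonneg_left hcosθ (mul_pos hv (exp_pos x)).le
    have := mul_le_mul_of_nonneg_left (neg_one_le_cos (δ * θ)) (mul_pos hτ hr).le
    linarith

theorem cos_mul_pi_div_one_add_pos (hδ₀ : 0 < δ) (hδ₁ : δ < 1) : 0 < cos (δ * (π / (1 + δ))) := by
  have hangle : 0 < δ * (π / (1 + δ)) := by positivity
  refine cos_pos_of_mem_Ioo ⟨by linarith [pi_pos], ?_⟩
  rw [mul_div_assoc', div_lt_div_iff₀ (by linarith) two_pos]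
  nlinarith [pi_pos]

theorem integral_logBromwich_pi_div_two (hδ₀ : 0 < δ) (hδ₁ : δ < 1) (hτ : 0 < τ) (hv : 0 < v) :
    ∫ x : ℝ, logBromwich δ τ v (x + (π / 2 : ℝ) * Complex.I)
      = ∫ x : ℝ, logBromwich δ τ v (x + π * Complex.I) := by
  have hκ := cos_mul_pi_div_one_add_pos hδ₀ hδ₁
  have hentire : Differentiable ℂ (logBromwich δ τ v) := by
    unfold logBromwich
    fun_prop
  have hmajor : IntegrableOn (fun r : ℝ => exp (-(τ * cos (δ * (π / (1 + δ)))) * r ^ δ)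
      + exp (τ * r ^ δ - v * cos (δ * (π / (1 + δ))) * r)) (Ioi 0) :=
    (integrableOn_exp_neg_mul_rpow hδ₀ (by positivity)).add
      (integrableOn_exp_rpow_sub hδ₀ hδ₁ (by positivity) hτ.le)
  exact integral_horizontal_line_eq (by linarith [pi_pos]) hentire.continuous.continuousOn
    hentire.differentiableOn ((integrable_exp_smul_comp_exp_iff _).2 hmajor)
    fun x θ hθ => norm_logBromwich_le hδ₀ hδ₁ hτ hv x hθ

theorem im_integral_cutIntegrand (hδ₀ : 0 < δ) (hδ₁ : δ < 1) (hτ : 0 < τ) (hv : 0 < v) :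
    (∫ r in Ioi (0 : ℝ), cutIntegrand δ τ v r).im
      = -(∫ r in Ioi (0 : ℝ), Complex.exp ((v * r : ℝ) * Complex.I
          - (τ * r ^ δ : ℝ) * Complex.exp ((δ * (π / 2) : ℝ) * Complex.I))).re := by
  have hrot := integral_logBromwich_pi_div_two hδ₀ hδ₁ hτ hv
  rw [integral_logBromwich_line, integral_logBromwich_line, Complex.exp_pi_mul_I] at hrot
  simp only [mul_neg_one, mul_comm δ π] at hrot
  have hI : Complex.exp ((π / 2 : ℝ) * Complex.I) = Complex.I := by
    push_cast
    exact Complex.exp_pi_div_two_mul_I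
  rw [hI, neg_one_mul] at hrot
  have him := congrArg Complex.im hrot
  rw [Complex.I_mul_im, Complex.neg_im] at him
  simp only [cutIntegrand]
  linarith

end RayRotation

/-- The parametrisation `ξ ↦ c + 2 π i ξ` of the Bromwich line `Re p = c`, normalised to match the
Fourier transform. -/
noncomputable def vline (c ξ : ℝ) : ℂ :=
  c + (2 * π * ξ : ℝ) * Complex.I

section BromwichLine

variable {δ τ c : ℝ}

theorem vline_re (c ξ : ℝ) : (vline c ξ).re = c := by
  simp [vline]

theorem vline_im (c ξ : ℝ) : (vline c ξ).im = 2 * π * ξ := by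
  simp [vline]

theorem continuous_vline (c : ℝ) : Continuous (vline c) := by
  unfold vline
  fun_prop

theorem norm_exp_vline_mul (c ξ v : ℝ) : ‖Complex.exp (vline c ξ * v)‖ = exp (c * v) := by
  rw [Complex.norm_exp, Complex.re_mul_ofReal, vline_re]

theorem cos_mul_pi_div_two_pos (hδ₀ : 0 < δ) (hδ₁ : δ < 1) : 0 < cos (δ * (π / 2)) :=
  cos_pos_of_mem_Ioo ⟨by nlinarith [pi_pos], by nlinarith [pi_pos]⟩

theorem norm_rpow_mul_cos_le_re_cpow (hδ₀ : 0 < δ) (hδ₁ : δ < 1) {p : ℂ} (hp : 0 ≤ p.re) :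
    cos (δ * (π / 2)) * ‖p‖ ^ δ ≤ (p ^ (δ : ℂ)).re := by
  rcases eq_or_ne p 0 with rfl | hp₀
  · simp [Complex.zero_cpow, hδ₀.ne', zero_rpow]
  have harg := Complex.abs_arg_le_pi_div_two_iff.2 hp
  have hnorm : 0 < ‖p‖ := norm_pos_iff.2 hp₀
  rw [Complex.cpow_def_of_ne_zero hp₀, Complex.exp_re, Complex.re_mul_ofReal,
    Complex.im_mul_ofReal, Complex.log_re, Complex.log_im, rpow_def_of_pos hnorm, mul_comm]
  gcongr
  rw [← cos_abs (p.arg * δ), abs_mul, abs_of_pos hδ₀, mul_comm]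
  exact cos_le_cos_of_nonneg_of_le_pi (by positivity) (by nlinarith [pi_pos]) (by gcongr)

theorem norm_exp_neg_mul_vline_cpow_le (hδ₀ : 0 < δ) (hδ₁ : δ < 1) (hτ : 0 ≤ τ) (hc : 0 ≤ c)
    (ξ : ℝ) :
    ‖Complex.exp (-τ * vline c ξ ^ (δ : ℂ))‖
      ≤ exp (-(τ * cos (δ * (π / 2))) * ‖vline c ξ‖ ^ δ) := by
  rw [Complex.norm_exp, ← Complex.ofReal_neg, Complex.re_ofReal_mul]
  have := mul_le_mul_of_nonneg_left
    (norm_rpow_mul_cos_le_re_cpow hδ₀ hδ₁ (p := vline c ξ) (by rwa [vline_re])) hτ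
  exact exp_le_exp.2 (by linarith)

theorem abs_le_norm_vline (c ξ : ℝ) : |ξ| ≤ ‖vline c ξ‖ := by
  refine le_trans ?_ (Complex.abs_im_le_norm _)
  rw [vline_im, abs_mul, abs_of_pos two_pi_pos]
  exact le_mul_of_one_le_left (abs_nonneg ξ) (by linarith [pi_gt_three])

theorem norm_exp_neg_mul_vline_cpow_le_abs (hδ₀ : 0 < δ) (hδ₁ : δ < 1) (hτ : 0 ≤ τ) (hc : 0 ≤ c)
    (ξ : ℝ) :
    ‖Complex.exp (-τ * vline c ξ ^ (δ : ℂ))‖ ≤ exp (-(τ * cos (δ * (π / 2))) * |ξ| ^ δ) := by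
  refine (norm_exp_neg_mul_vline_cpow_le hδ₀ hδ₁ hτ hc ξ).trans ?_
  have hcos := (cos_mul_pi_div_two_pos hδ₀ hδ₁).le
  rw [neg_mul, neg_mul]
  gcongr
  exact abs_le_norm_vline c ξ

theorem continuousOn_cpow_re_nonneg (hδ₀ : 0 < δ) :
    ContinuousOn (fun p : ℂ => p ^ (δ : ℂ)) {p | 0 ≤ p.re} := fun _ hp =>
  (Complex.continuousAt_cpow_const_of_re_pos (Or.inl hp) (by simpa using hδ₀)).continuousWithinAt

theorem continuous_vline_cpow (hδ₀ : 0 < δ) (hc : 0 ≤ c) :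
    Continuous fun ξ => vline c ξ ^ (δ : ℂ) :=
  (continuousOn_cpow_re_nonneg hδ₀).comp_continuous (continuous_vline c) fun ξ =>
    hc.trans_eq (vline_re c ξ).symm

theorem integrable_exp_neg_mul_vline_cpow (hδ₀ : 0 < δ) (hδ₁ : δ < 1) (hτ : 0 < τ) (hc : 0 ≤ c) :
    Integrable fun ξ => Complex.exp (-τ * vline c ξ ^ (δ : ℂ)) := by
  have hcos := cos_mul_pi_div_two_pos hδ₀ hδ₁
  have hcont := continuous_vline_cpow hδ₀ hc
  exact (integrable_exp_neg_mul_abs_rpow hδ₀ (by positivity : 0 < τ * cos (δ * (π / 2)))).mono'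
    (by fun_prop : Continuous _).aestronglyMeasurable
    (Eventually.of_forall (norm_exp_neg_mul_vline_cpow_le_abs hδ₀ hδ₁ hτ.le hc))

theorem integrable_exp_vline_mul_mul {F : ℝ → ℂ} (hF : Integrable F) (c v : ℝ) :
    Integrable fun ξ => Complex.exp (vline c ξ * v) * F ξ := by
  have hcont := continuous_vline c
  exact hF.bdd_mul (c := exp (c * v)) (by fun_prop : Continuous _).aestronglyMeasurable
    (Eventually.of_forall fun ξ => (norm_exp_vline_mul c ξ v).le)

theorem continuousOn_exp_mul_exp_cpow (hδ₀ : 0 < δ) (τ v : ℝ) :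
    ContinuousOn (fun p : ℂ => Complex.exp (p * v) * Complex.exp (-τ * p ^ (δ : ℂ)))
      {p | 0 ≤ p.re} := by
  have hpow := continuousOn_cpow_re_nonneg hδ₀
  fun_prop

theorem differentiableOn_exp_mul_exp_cpow (δ τ v : ℝ) :
    DifferentiableOn ℂ (fun p : ℂ => Complex.exp (p * v) * Complex.exp (-τ * p ^ (δ : ℂ)))
      {p | 0 < p.re} := by
  intro p hp
  have hpow : DifferentiableAt ℂ (fun p : ℂ => p ^ (δ : ℂ)) p :=
    differentiableAt_id.cpow_const (Or.inl hp)
  exact ((differentiableAt_id.mul_const _).cexp.mul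
    (hpow.const_mul _).cexp).differentiableWithinAt

theorem integral_vline_eq_integral_vline_zero (hδ₀ : 0 < δ) (hδ₁ : δ < 1) (hτ : 0 < τ)
    (hc : 0 ≤ c) (v : ℝ) :
    ∫ ξ, Complex.exp (vline c ξ * v) * Complex.exp (-τ * vline c ξ ^ (δ : ℂ))
      = ∫ ξ, Complex.exp (vline 0 ξ * v) * Complex.exp (-τ * vline 0 ξ ^ (δ : ℂ)) := by
  have hcos := cos_mul_pi_div_two_pos hδ₀ hδ₁
  set f : ℂ → ℂ := fun p => Complex.exp (p * v) * Complex.exp (-τ * p ^ (δ : ℂ)) with hf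
  have hvline : ∀ ξ y : ℝ, 2 * π * Complex.I * (ξ + y * Complex.I) = vline (-(2 * π * y)) ξ := by
    intro ξ y
    rw [vline]
    push_cast
    linear_combination 2 * π * y * Complex.I_mul_I
  have hre : ∀ w : ℂ, (2 * π * Complex.I * w).re = -(2 * π * w.im) := fun w => by simp
  have hcont : ContinuousOn (fun w => f (2 * π * Complex.I * w))
      (Complex.im ⁻¹' Icc (-(c / (2 * π))) 0) :=
    (continuousOn_exp_mul_exp_cpow hδ₀ τ v).comp (by fun_prop) fun w hw =>
      (by nlinarith [pi_pos, hw.2] : 0 ≤ -(2 * π * w.im)).trans_eq (hre w).symm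
  have hdiff : DifferentiableOn ℂ (fun w => f (2 * π * Complex.I * w))
      (Complex.im ⁻¹' Ioo (-(c / (2 * π))) 0) :=
    (differentiableOn_exp_mul_exp_cpow δ τ v).comp (by fun_prop) fun w hw =>
      (by nlinarith [pi_pos, hw.2] : 0 < -(2 * π * w.im)).trans_eq (hre w).symm
  have hbound : ∀ ξ : ℝ, ∀ y ∈ Icc (-(c / (2 * π))) 0,
      ‖f (2 * π * Complex.I * (ξ + y * Complex.I))‖
        ≤ exp (c * |v|) * exp (-(τ * cos (δ * (π / 2))) * |ξ| ^ δ) := by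
    intro ξ y hy
    have hy₀ : 0 ≤ -(2 * π * y) := by nlinarith [pi_pos, hy.2]
    have hyc : -(2 * π * y) ≤ c := by
      have := (neg_le.1 hy.1)
      rw [le_div_iff₀ two_pi_pos] at this
      linarith
    simp only [hf, hvline, norm_mul, norm_exp_vline_mul]
    gcongr ?_ * ?_
    · exact exp_le_exp.2 ((mul_le_mul_of_nonneg_left (le_abs_self v) hy₀).trans (by gcongr))
    · exact norm_exp_neg_mul_vline_cpow_le_abs hδ₀ hδ₁ hτ.le hy₀ ξ
  have hshift := integral_horizontal_line_eq (neg_nonpos.2 (by positivity)) hcont hdiff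
    ((integrable_exp_neg_mul_abs_rpow hδ₀ (by positivity)).const_mul _) hbound
  simp only [hvline] at hshift
  rwa [mul_neg, neg_neg, mul_div_cancel₀ c two_pi_pos.ne', mul_zero, neg_zero] at hshift

theorem integral_vline_eq_zero_of_nonpos (hδ₀ : 0 < δ) (hδ₁ : δ < 1) (hτ : 0 < τ) (hc : 0 ≤ c)
    {v : ℝ} (hv : v ≤ 0) :
    ∫ ξ, Complex.exp (vline c ξ * v) * Complex.exp (-τ * vline c ξ ^ (δ : ℂ)) = 0 := by
  have hcos := cos_mul_pi_div_two_pos hδ₀ hδ₁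
  rw [integral_vline_eq_integral_vline_zero hδ₀ hδ₁ hτ hc]
  have hle : ∀ b ξ : ℝ, 0 ≤ b → ‖Complex.exp (vline b ξ * v)
      * Complex.exp (-τ * vline b ξ ^ (δ : ℂ))‖ ≤ ‖Complex.exp (-τ * vline b ξ ^ (δ : ℂ))‖ := by
    intro b ξ hb
    rw [norm_mul, norm_exp_vline_mul]
    exact mul_le_of_le_one_left (norm_nonneg _)
      (exp_le_one_iff.2 (mul_nonpos_of_nonneg_of_nonpos hb hv))
  have hlim : Tendsto (fun b : ℝ => ∫ ξ, Complex.exp (vline b ξ * v)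
      * Complex.exp (-τ * vline b ξ ^ (δ : ℂ))) atTop (nhds (∫ _ : ℝ, 0)) := by
    refine tendsto_integral_filter_of_dominated_convergence
      (fun ξ => exp (-(τ * cos (δ * (π / 2))) * |ξ| ^ δ)) ?_ ?_
      (integrable_exp_neg_mul_abs_rpow hδ₀ (by positivity)) (Eventually.of_forall fun ξ => ?_)
    · filter_upwards [eventually_ge_atTop 0] with b hb
      exact (integrable_exp_vline_mul_mul (integrable_exp_neg_mul_vline_cpow hδ₀ hδ₁ hτ hb)
        b v).aestronglyMeasurable
    · filter_upwards [eventually_ge_atTop 0] with b hb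
      exact Eventually.of_forall fun ξ =>
        (hle b ξ hb).trans (norm_exp_neg_mul_vline_cpow_le_abs hδ₀ hδ₁ hτ.le hb ξ)
    · have hdecay : Tendsto (fun b : ℝ => exp (-(τ * cos (δ * (π / 2))) * b ^ δ)) atTop
          (nhds 0) := tendsto_exp_atBot.comp
        ((tendsto_rpow_atTop hδ₀).const_mul_atTop_of_neg (neg_lt_zero.2 (by positivity)))
      refine squeeze_zero_norm' ?_ hdecay
      filter_upwards [eventually_ge_atTop 0] with b hb
      refine (hle b ξ hb).trans ((norm_exp_neg_mul_vline_cpow_le hδ₀ hδ₁ hτ.le hb ξ).trans ?_)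
      rw [neg_mul, neg_mul]
      gcongr
      exact (Complex.re_le_norm _).trans_eq' (vline_re b ξ)
  rw [integral_zero] at hlim
  refine tendsto_nhds_unique (tendsto_const_nhds.congr' ?_) hlim
  filter_upwards [eventually_ge_atTop 0] with b hb
  exact (integral_vline_eq_integral_vline_zero hδ₀ hδ₁ hτ hb v).symm

end BromwichLine

section StableLaplace

variable {δ τ c : ℝ}

open ComplexConjugate in
theorem vline_neg (c ξ : ℝ) : vline c (-ξ) = conj (vline c ξ) :=
  Complex.ext (by simp [vline_re]) (by simp [vline_im])

open ComplexConjugate in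
theorem conj_vline_zero_cpow (δ ξ : ℝ) :
    conj (vline 0 ξ) ^ (δ : ℂ) = conj (vline 0 ξ ^ (δ : ℂ)) := by
  have harg : (vline 0 ξ).arg ≠ π := by
    have h := Complex.abs_arg_le_pi_div_two_iff.2 (vline_re 0 ξ).ge
    have := le_abs_self (vline 0 ξ).arg
    linarith [pi_pos]
  rw [Complex.conj_cpow _ _ harg, Complex.conj_ofReal]

theorem vline_zero_cpow (δ : ℝ) {ξ : ℝ} (hξ : 0 < ξ) :
    vline 0 ξ ^ (δ : ℂ)
      = ((2 * π * ξ) ^ δ : ℝ) * Complex.exp ((δ * (π / 2) : ℝ) * Complex.I) := by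
  have hpos : 0 < 2 * π * ξ := by positivity
  rw [vline, Complex.ofReal_zero, zero_add, Complex.cpow_def_of_ne_zero
    (mul_ne_zero (Complex.ofReal_ne_zero.2 hpos.ne') Complex.I_ne_zero),
    Complex.log_ofReal_mul hpos Complex.I_ne_zero, Complex.log_I, add_mul, Complex.exp_add,
    rpow_def_of_pos hpos]
  push_cast
  ring_nf

theorem stableKernel_eq_integral_vline_zero (hδ₀ : 0 < δ) (hδ₁ : δ < 1) (hτ : 0 < τ) {v : ℝ}
    (hv : 0 < v) :
    (stableKernel δ τ v : ℂ)
      = ∫ ξ, Complex.exp (vline 0 ξ * v) * Complex.exp (-τ * vline 0 ξ ^ (δ : ℂ)) := by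
  set G : ℝ → ℂ := fun r => Complex.exp ((v * r : ℝ) * Complex.I
    - (τ * r ^ δ : ℝ) * Complex.exp ((δ * (π / 2) : ℝ) * Complex.I)) with hG
  have hscale : ∫ ξ in Ioi (0 : ℝ), Complex.exp (vline 0 ξ * v)
      * Complex.exp (-τ * vline 0 ξ ^ (δ : ℂ)) = (1 / (2 * π) : ℝ) * ∫ r in Ioi (0 : ℝ), G r := by
    have hsub := integral_comp_mul_left_Ioi G 0 two_pi_pos
    rw [mul_zero, Complex.real_smul, ← one_div] at hsub
    rw [← hsub]
    refine setIntegral_congr_fun measurableSet_Ioi fun ξ hξ => ?_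
    simp only [hG]
    rw [vline_zero_cpow δ hξ, ← Complex.exp_add, vline]
    push_cast
    ring_nf
  rw [integral_eq_two_mul_re_of_neg_eq_conj
      (integrable_exp_vline_mul_mul (integrable_exp_neg_mul_vline_cpow hδ₀ hδ₁ hτ le_rfl) 0 v)
      (fun ξ => ?_),
    hscale, Complex.re_ofReal_mul, stableKernel_eq_im_integral_cutIntegrand hδ₀ hδ₁ hτ hv,
    im_integral_cutIntegrand hδ₀ hδ₁ hτ hv]
  · simp only [← hG]
    congr 1
    field_simp
  · simp only [vline_neg, conj_vline_zero_cpow, map_mul, ← Complex.exp_conj, map_neg,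
      Complex.conj_ofReal]

/-- The inverse Laplace transform at `v` along the line `re p = c`, of a function that is given as
a function of the parameter `ξ` of the line. -/
noncomputable def bromwich (c : ℝ) (F : ℝ → ℂ) (v : ℝ) : ℂ :=
  ∫ ξ, Complex.exp (vline c ξ * v) * F ξ

/-- The bilateral Laplace transform. -/
noncomputable def laplace (k : ℝ → ℝ) (p : ℂ) : ℂ :=
  ∫ v : ℝ, Complex.exp (-p * v) * k v

theorem stableKernel_eq_bromwich (hδ₀ : 0 < δ) (hδ₁ : δ < 1) (hτ : 0 < τ) (hc : 0 ≤ c) (v : ℝ) :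
    (stableKernel δ τ v : ℂ) = bromwich c (fun ξ => Complex.exp (-τ * vline c ξ ^ (δ : ℂ))) v := by
  rw [bromwich]
  rcases le_or_gt v 0 with hv | hv
  · rw [stableKernel_of_nonpos δ τ hv, integral_vline_eq_zero_of_nonpos hδ₀ hδ₁ hτ hc hv,
      Complex.ofReal_zero]
  · rw [stableKernel_eq_integral_vline_zero hδ₀ hδ₁ hτ hv,
      integral_vline_eq_integral_vline_zero hδ₀ hδ₁ hτ hc]

theorem continuous_bromwich {F : ℝ → ℂ} (hF : Integrable F) (c : ℝ) :
    Continuous (bromwich c F) := by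
  rw [continuous_iff_continuousAt]
  intro v₀
  refine continuousAt_of_dominated (bound := fun ξ => exp (|c| * (|v₀| + 1)) * ‖F ξ‖)
    (Eventually.of_forall fun v => (integrable_exp_vline_mul_mul hF c v).aestronglyMeasurable)
    ?_ (hF.norm.const_mul _) (Eventually.of_forall fun ξ => by fun_prop)
  filter_upwards [Metric.ball_mem_nhds v₀ one_pos] with v hv
  refine Eventually.of_forall fun ξ => ?_
  have hv' : |v| ≤ |v₀| + 1 := by
    have := abs_sub_abs_le_abs_sub v v₀
    have := (Real.dist_eq v v₀ ▸ Metric.mem_ball.1 hv).le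
    linarith
  rw [norm_mul, norm_exp_vline_mul]
  have : c * v ≤ |c| * (|v₀| + 1) := (le_abs_self _).trans (by rw [abs_mul]; gcongr)
  gcongr

theorem continuous_stableKernel (hδ₀ : 0 < δ) (hδ₁ : δ < 1) (hτ : 0 < τ) :
    Continuous (stableKernel δ τ) := by
  have hcont := continuous_bromwich (integrable_exp_neg_mul_vline_cpow hδ₀ hδ₁ hτ le_rfl) 0
  exact (Complex.continuous_re.comp hcont).congr fun v => by
    rw [Function.comp_apply, ← stableKernel_eq_bromwich hδ₀ hδ₁ hτ le_rfl, Complex.ofReal_re]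

theorem integrable_stableKernel_one (hδ₀ : 0 < δ) (hδ₁ : δ < 1) :
    Integrable (stableKernel δ 1) := by
  have hcont := continuous_stableKernel hδ₀ hδ₁ one_pos
  obtain ⟨C, hC⟩ := exists_abs_stableKernel_apply_one_le hδ₀ hδ₁
  have hneg : IntegrableOn (stableKernel δ 1) (Iic 0) :=
    (integrableOn_zero (s := Iic (0 : ℝ))).congr_fun
      (fun v hv => (stableKernel_of_nonpos δ 1 hv).symm) measurableSet_Iic
  have hmid : IntegrableOn (stableKernel δ 1) (Icc 0 1) := hcont.continuousOn.integrableOn_Icc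
  have htail : IntegrableOn (stableKernel δ 1) (Ioi 1) := by
    refine ((integrableOn_Ioi_rpow_of_lt (by linarith : -1 - δ < -1) one_pos).const_mul C).mono'
      hcont.aestronglyMeasurable ?_
    filter_upwards [ae_restrict_mem measurableSet_Ioi] with v hv
    have hv₁ : 1 < v := hv
    have hv₀ : 0 < v := by linarith
    have hbound := hC (v ^ δ)⁻¹ (by positivity) (inv_le_one_of_one_le₀ (one_le_rpow hv₁.le hδ₀.le))
    rw [stableKernel_one_eq δ hv₀, norm_mul, Real.norm_eq_abs, Real.norm_eq_abs,
      abs_of_pos (inv_pos.2 hv₀)]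
    calc v⁻¹ * |stableKernel δ (v ^ δ)⁻¹ 1| ≤ v⁻¹ * (C * (v ^ δ)⁻¹) := by gcongr
      _ = C * v ^ (-1 - δ) := by
        rw [sub_eq_add_neg, rpow_add hv₀, rpow_neg_one, rpow_neg hv₀.le]
        ring
  rw [← integrableOn_univ, ← Iic_union_Ioi (a := (1 : ℝ)), ← Iic_union_Icc_eq_Iic zero_le_one]
  exact (hneg.union hmid).union htail

theorem integrable_stableKernel (hδ₀ : 0 < δ) (hδ₁ : δ < 1) (hτ : 0 < τ) :
    Integrable (stableKernel δ τ) := by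
  rw [funext (stableKernel_scaling hδ₀ hτ)]
  exact ((integrable_stableKernel_one hδ₀ hδ₁).comp_mul_left' (by positivity)).const_mul _

theorem integral_abs_stableKernel (hδ₀ : 0 < δ) (hτ : 0 < τ) :
    ∫ v, |stableKernel δ τ v| = ∫ v, |stableKernel δ 1 v| := by
  have hscale : 0 < τ ^ (-(1 / δ)) := by positivity
  simp only [stableKernel_scaling hδ₀ hτ, abs_mul, abs_of_pos hscale]
  rw [integral_const_mul, Measure.integral_comp_mul_left (fun v => |stableKernel δ 1 v|),
    smul_eq_mul, abs_of_pos (by positivity), mul_inv_cancel_left₀ hscale.ne']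

-- At `τ = 0` the kernel degenerates to a Dirac mass, so the cut-off at `τ > 0` is part of the
-- statement.
theorem measurable_stableKernel (hδ₀ : 0 < δ) (hδ₁ : δ < 1) :
    Measurable fun p : ℝ × ℝ => if 0 < p.1 then stableKernel δ p.1 p.2 else 0 := by
  have hone : Measurable (stableKernel δ 1) := (continuous_stableKernel hδ₀ hδ₁ one_pos).measurable
  have hscale : Measurable fun p : ℝ × ℝ => p.1 ^ (-(1 / δ)) := by fun_prop
  have hrhs : Measurable fun p : ℝ × ℝ =>
      if 0 < p.1 then p.1 ^ (-(1 / δ)) * stableKernel δ 1 (p.1 ^ (-(1 / δ)) * p.2) else 0 :=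
    Measurable.ite (measurableSet_lt measurable_const measurable_fst)
      (hscale.mul (hone.comp (hscale.mul measurable_snd))) measurable_const
  convert hrhs using 2 with p
  exact if_ctx_congr Iff.rfl (fun hp => stableKernel_scaling hδ₀ hp p.2) fun _ => rfl

theorem norm_exp_neg_mul_ofReal_le {k : ℝ → ℝ} (hk₀ : ∀ v ≤ 0, k v = 0) {p : ℂ} (hp : 0 ≤ p.re)
    (v : ℝ) : ‖Complex.exp (-p * v) * k v‖ ≤ |k v| := by
  rcases le_or_gt v 0 with hv | hv
  · simp [hk₀ v hv]
  rw [norm_mul, Complex.norm_real, Real.norm_eq_abs, Complex.norm_exp, Complex.re_mul_ofReal,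
    Complex.neg_re]
  exact mul_le_of_le_one_left (abs_nonneg _) (exp_le_one_iff.2 (by nlinarith))

theorem integrable_exp_neg_mul_ofReal {k : ℝ → ℝ} (hk : Integrable k) (hk₀ : ∀ v ≤ 0, k v = 0)
    {p : ℂ} (hp : 0 ≤ p.re) : Integrable fun v : ℝ => Complex.exp (-p * v) * k v := by
  have hexp : Continuous fun v : ℝ => Complex.exp (-p * v) := by fun_prop
  exact hk.abs.mono' (hexp.aestronglyMeasurable.mul hk.ofReal.aestronglyMeasurable)
    (Eventually.of_forall (norm_exp_neg_mul_ofReal_le hk₀ hp))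

open FourierTransform in
theorem exp_neg_mul_stableKernel_eq_fourierInv (hδ₀ : 0 < δ) (hδ₁ : δ < 1) (hτ : 0 < τ)
    (hc : 0 ≤ c) :
    (fun v : ℝ => Complex.exp (-c * v) * stableKernel δ τ v)
      = 𝓕⁻ fun ξ => Complex.exp (-τ * vline c ξ ^ (δ : ℂ)) := by
  funext v
  rw [stableKernel_eq_bromwich hδ₀ hδ₁ hτ hc, bromwich, Real.fourierInv_eq', ← integral_const_mul]
  refine integral_congr_ae (Eventually.of_forall fun ξ => ?_)
  simp only [smul_eq_mul]
  rw [← mul_assoc, ← Complex.exp_add]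
  congr 2
  simp [vline]
  ring

open FourierTransform in
theorem laplace_stableKernel (hδ₀ : 0 < δ) (hδ₁ : δ < 1) (hτ : 0 < τ) {p : ℂ} (hp : 0 ≤ p.re) :
    laplace (stableKernel δ τ) p = Complex.exp (-τ * p ^ (δ : ℂ)) := by
  have hline : p = vline p.re (p.im / (2 * π)) := by
    apply Complex.ext
    · rw [vline_re]
    · rw [vline_im]
      field_simp
  have hcpow := continuous_vline_cpow hδ₀ hp
  have hint : Integrable fun v : ℝ => Complex.exp (-(p.re : ℂ) * v) * stableKernel δ τ v :=
    integrable_exp_neg_mul_ofReal (integrable_stableKernel hδ₀ hδ₁ hτ)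
      (fun _ => stableKernel_of_nonpos δ τ) (by simpa using hp)
  have hinv := exp_neg_mul_stableKernel_eq_fourierInv hδ₀ hδ₁ hτ hp
  have hfourier_int : Integrable (𝓕 fun ξ => Complex.exp (-τ * vline p.re ξ ^ (δ : ℂ))) := by
    rw [hinv] at hint
    exact hint.comp_neg.congr (Eventually.of_forall fun ξ => by
      simp only [Real.fourierInv_eq_fourier_neg, neg_neg])
  have hfourier := Continuous.fourier_fourierInv_eq (by fun_prop)
    (integrable_exp_neg_mul_vline_cpow hδ₀ hδ₁ hτ hp) hfourier_int
  rw [← hinv] at hfourier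
  have hξ := congrFun hfourier (p.im / (2 * π))
  rw [← hline] at hξ
  rw [← hξ, Real.fourier_eq', laplace]
  refine integral_congr_ae (Eventually.of_forall fun v => ?_)
  simp only [smul_eq_mul]
  rw [← mul_assoc, ← Complex.exp_add]
  congr 2
  nth_rewrite 1 [hline]
  simp [vline]
  field_simp

end StableLaplace

section PassageDensity

theorem Gamma_nat_add_half_mul_factorial (k : ℕ) :
    Gamma (k + 1 / 2) * k.factorial * 4 ^ k = (2 * k).factorial * √π := by
  have h := Real.Gamma_mul_Gamma_add_half (k + 1 / 2)
  rw [show (k + 1 / 2 + 1 / 2 : ℝ) = k + 1 by ring, Gamma_nat_eq_factorial,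
    show (2 * (k + 1 / 2) : ℝ) = (2 * k : ℕ) + 1 by push_cast; ring, Gamma_nat_eq_factorial,
    show (1 - ((2 * k : ℕ) + 1) : ℝ) = -(2 * k : ℕ) by ring, rpow_neg (by norm_num),
    rpow_natCast, pow_mul, show (2 : ℝ) ^ 2 = 4 by norm_num] at h
  rw [h]
  field_simp

theorem one_div_Gamma_half_sub (k : ℕ) :
    1 / Gamma (1 / 2 - k) = (2 * k).factorial * (-1) ^ k / (k.factorial * 4 ^ k * √π) := by
  have hsin : sin (π * (k + 1 / 2)) = (-1) ^ k := by
    rw [mul_add, mul_one_div, sin_add_pi_div_two, mul_comm, cos_nat_mul_pi]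
  have hΓ : Gamma (k + 1 / 2) = (2 * k).factorial * √π / (k.factorial * 4 ^ k) := by
    rw [← Gamma_nat_add_half_mul_factorial]
    field_simp
  rw [show (1 / 2 - k : ℝ) = 1 - (k + 1 / 2) by ring, one_div_Gamma_one_sub (by positivity), hsin,
    hΓ, div_mul_eq_mul_div, div_div, div_eq_div_iff (by positivity) (by positivity)]
  linear_combination ((2 * k).factorial * (-1) ^ k * k.factorial * 4 ^ k : ℝ)
    * sq_sqrt pi_pos.le

theorem Mwr_one_half (y : ℝ) : Mwr y (1 / 2) = exp (-y ^ 2 / 4) / √π := by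
  set f : ℕ → ℝ := fun n =>
    (-y) ^ n / ((n.factorial : ℝ) * Gamma (-(1 / 2) * (n : ℝ) + 1 - 1 / 2)) with hf
  have hodd : HasSum (fun k => f (2 * k + 1)) 0 := by
    convert hasSum_zero using 1
    funext k
    simp only [hf]
    rw [show -(1 / 2) * ((2 * k + 1 : ℕ) : ℝ) + 1 - 1 / 2 = -(k : ℝ) by push_cast; ring,
      Gamma_neg_nat_eq_zero, mul_zero, div_zero]
  have heven : HasSum (fun k => f (2 * k)) (exp (-y ^ 2 / 4) / √π) := by
    have hexp := (NormedSpace.expSeries_div_hasSum_exp (𝔸 := ℝ) (-y ^ 2 / 4)).div_const (√π)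
    rw [← Real.exp_eq_exp_ℝ] at hexp
    refine hexp.congr_fun fun k => ?_
    simp only [hf]
    rw [← div_div, div_eq_mul_one_div _ (Gamma _),
      show -(1 / 2) * ((2 * k : ℕ) : ℝ) + 1 - 1 / 2 = 1 / 2 - k by push_cast; ring,
      one_div_Gamma_half_sub, div_pow, pow_mul, neg_sq, neg_pow (y ^ 2)]
    field_simp
  have hsum := heven.even_add_odd hodd
  rw [add_zero] at hsum
  exact hsum.tsum_eq

theorem stableKernel_one_half (y : ℝ) {w : ℝ} (hw : 0 < w) :
    stableKernel (1 / 2) y w = y / (2 * √π) * w ^ (-(3 / 2 : ℝ)) * exp (-y ^ 2 / (4 * w)) := by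
  rw [stableKernel, if_pos hw, Mwr_one_half, div_pow, ← sqrt_eq_rpow, sq_sqrt hw.le,
    show (1 / 2 + 1 : ℝ) = 3 / 2 by norm_num, rpow_neg hw.le,
    show -(y ^ 2 / w) / 4 = -y ^ 2 / (4 * w) by field_simp]
  field_simp

/-- The density in `w` of the first time at which the Brownian motion `√2 B(w)` with drift `2 b`
hits the level `y > 0`; the formula is extended to every real `y`, and to `w ≤ 0` by zero. -/
noncomputable def passageDensity (b y w : ℝ) : ℝ :=
  exp (b * y - b ^ 2 * w) * stableKernel (1 / 2) y w

variable {b y w : ℝ}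

theorem passageDensity_of_nonpos (b y : ℝ) (hw : w ≤ 0) : passageDensity b y w = 0 := by
  rw [passageDensity, stableKernel_of_nonpos _ _ hw, mul_zero]

theorem passageDensity_of_pos (b y : ℝ) (hw : 0 < w) : passageDensity b y w =
    y / (2 * √π) * w ^ (-(3 / 2 : ℝ)) * exp (b * y - b ^ 2 * w - y ^ 2 / (4 * w)) := by
  rw [passageDensity, stableKernel_one_half y hw, sub_eq_add_neg _ (y ^ 2 / (4 * w)), exp_add,
    neg_div]
  ring

theorem passageDensity_nonneg (b : ℝ) (hy : 0 ≤ y) (w : ℝ) : 0 ≤ passageDensity b y w := by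
  rcases le_or_gt w 0 with hw | hw
  · rw [passageDensity_of_nonpos b y hw]
  · rw [passageDensity_of_pos b y hw]
    positivity

theorem passageDensity_zero (b w : ℝ) : passageDensity b 0 w = 0 := by
  rcases le_or_gt w 0 with hw | hw
  · rw [passageDensity_of_nonpos b 0 hw]
  · rw [passageDensity_of_pos b 0 hw, zero_div, zero_mul, zero_mul]

theorem passageDensity_neg (b y w : ℝ) :
    passageDensity b (-y) w = -(exp (-(2 * b * y)) * passageDensity b y w) := by
  rcases le_or_gt w 0 with hw | hw
  · simp only [passageDensity_of_nonpos b _ hw, mul_zero, neg_zero]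
  · rw [passageDensity_of_pos b _ hw, passageDensity_of_pos b _ hw, mul_left_comm, ← exp_add,
      neg_sq]
    ring_nf

theorem measurable_passageDensity (b : ℝ) :
    Measurable fun p : ℝ × ℝ => passageDensity b p.1 p.2 := by
  have hform : (fun p : ℝ × ℝ => passageDensity b p.1 p.2) = fun p => if 0 < p.2 then
      p.1 / (2 * √π) * p.2 ^ (-(3 / 2 : ℝ)) * exp (b * p.1 - b ^ 2 * p.2 - p.1 ^ 2 / (4 * p.2))
      else 0 := by
    funext p
    split_ifs with hw
    · exact passageDensity_of_pos b p.1 hw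
    · exact passageDensity_of_nonpos b p.1 (not_lt.1 hw)
  rw [hform]
  exact Measurable.ite (measurableSet_lt measurable_const measurable_snd) (by fun_prop)
    measurable_const

/-- The exponent of the Laplace transform of `passageDensity b y`: the transform at `q` is
`exp (-passageRate b q * y)`. -/
noncomputable def passageRate (b : ℝ) (q : ℂ) : ℂ :=
  Complex.sqrt (b ^ 2 + q) - b

theorem re_ofReal_sq_add (b : ℝ) (q : ℂ) : ((b : ℂ) ^ 2 + q).re = b ^ 2 + q.re := by
  rw [Complex.add_re, ← Complex.ofReal_pow, Complex.ofReal_re]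

theorem exp_neg_mul_passageDensity_eq (b y w : ℝ) (q : ℂ) :
    Complex.exp (-q * w) * passageDensity b y w =
      exp (b * y) * (Complex.exp (-(b ^ 2 + q) * w) * stableKernel (1 / 2) y w) := by
  rw [passageDensity, sub_eq_add_neg, exp_add]
  push_cast
  rw [show -((b : ℂ) ^ 2 + q) * w = -((b : ℂ) ^ 2 * w) + -q * w by ring, Complex.exp_add]
  ring

theorem integrable_passageDensity (b y : ℝ) : Integrable (passageDensity b y) := by
  have hpos {y : ℝ} (hy : 0 < y) : Integrable (passageDensity b y) := by
    have hint := integrable_stableKernel one_half_pos one_half_lt_one hy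
    refine (hint.const_mul (exp (b * y))).mono' ?_ (Eventually.of_forall fun w => ?_)
    · exact ((measurable_passageDensity b).comp measurable_prodMk_left).aestronglyMeasurable
    rcases le_or_gt w 0 with hw | hw
    · simp [passageDensity_of_nonpos b y hw, stableKernel_of_nonpos _ y hw]
    have hK : 0 ≤ stableKernel (1 / 2) y w := by
      rw [stableKernel_one_half y hw]
      positivity
    rw [Real.norm_of_nonneg (passageDensity_nonneg b hy.le w), passageDensity]
    gcongr
    nlinarith
  rcases lt_trichotomy y 0 with hy | rfl | hy
  · refine ((hpos (neg_pos.2 hy)).const_mul (-exp (2 * b * y))).congr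
      (Eventually.of_forall fun w => ?_)
    have hodd := passageDensity_neg b (-y) w
    rw [neg_neg, mul_neg, neg_neg] at hodd
    simp only [hodd, neg_mul]
  · simp [funext (passageDensity_zero b)]
  · exact hpos hy

theorem laplace_passageDensity (b : ℝ) (hy : 0 < y) {q : ℂ} (hq : 0 ≤ q.re) :
    laplace (passageDensity b y) q = Complex.exp (-passageRate b q * y) := by
  have hre : 0 ≤ ((b : ℂ) ^ 2 + q).re := by
    rw [re_ofReal_sq_add]
    positivity
  simp only [laplace, exp_neg_mul_passageDensity_eq]
  rw [integral_const_mul, ← laplace, laplace_stableKernel one_half_pos one_half_lt_one hy hre,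
    passageRate, Complex.sqrt, Complex.ofReal_exp, ← Complex.exp_add]
  push_cast
  rw [one_div]
  ring_nf

end PassageDensity

section PassageRate

theorem sq_complex_sqrt (ζ : ℂ) : Complex.sqrt ζ ^ 2 = ζ :=
  Complex.cpow_nat_inv_pow ζ two_ne_zero

theorem sqrt_re_le_re_complex_sqrt (ζ : ℂ) : √ζ.re ≤ (Complex.sqrt ζ).re := by
  rw [Complex.sqrt, Complex.cpow_inv_two_re]
  gcongr
  linarith [Complex.re_le_norm ζ]

theorem norm_complex_sqrt (ζ : ℂ) : ‖Complex.sqrt ζ‖ = √‖ζ‖ := by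
  rw [← sqrt_sq (norm_nonneg (Complex.sqrt ζ)), ← norm_pow, sq_complex_sqrt]

theorem passageRate_sq_add (b : ℝ) (q : ℂ) :
    passageRate b q ^ 2 + 2 * b * passageRate b q = q := by
  linear_combination (norm := (rw [passageRate]; ring)) sq_complex_sqrt (b ^ 2 + q)

theorem measurable_passageRate (b : ℝ) : Measurable (passageRate b) := by
  simp only [funext fun q => passageRate.eq_1 b q, Complex.sqrt]
  fun_prop

open scoped ComplexOrder in
theorem passageRate_ofReal (b : ℝ) {r : ℝ} (hr : 0 ≤ r) :
    passageRate b r = (√(b ^ 2 + r) - b : ℝ) := by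
  have hnonneg : (0 : ℂ) ≤ (b ^ 2 + r : ℝ) := Complex.zero_le_real.2 (by positivity)
  rw [passageRate, ← Complex.ofReal_pow, ← Complex.ofReal_add, Complex.sqrt_of_nonneg hnonneg,
    Complex.ofReal_re, Complex.ofReal_sub]

theorem sqrt_sub_le_re_passageRate (b : ℝ) (q : ℂ) :
    √(b ^ 2 + q.re) - b ≤ (passageRate b q).re := by
  rw [passageRate, Complex.sub_re, Complex.ofReal_re, ← re_ofReal_sq_add]
  linarith [sqrt_re_le_re_complex_sqrt (b ^ 2 + q)]

theorem re_passageRate_nonneg (b : ℝ) {q : ℂ} (hq : 0 ≤ q.re) : 0 ≤ (passageRate b q).re := by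
  have hle : b ≤ √(b ^ 2 + q.re) := le_sqrt_of_sq_le (by linarith)
  linarith [sqrt_sub_le_re_passageRate b q]

theorem sqrt_re_sub_abs_le_re_passageRate (b : ℝ) (q : ℂ) :
    √q.re - |b| ≤ (passageRate b q).re := by
  have hle : √q.re ≤ √(b ^ 2 + q.re) := sqrt_le_sqrt (by nlinarith)
  linarith [sqrt_sub_le_re_passageRate b q, le_abs_self b]

theorem norm_passageRate_le (b : ℝ) (q : ℂ) : ‖passageRate b q‖ ≤ ‖q‖ + (1 + |b|) ^ 2 := by
  have hb : ‖(b : ℂ)‖ = |b| := by rw [Complex.norm_real, Real.norm_eq_abs]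
  have hsqrt : ‖Complex.sqrt (b ^ 2 + q)‖ ≤ 1 + (|b| ^ 2 + ‖q‖) := by
    rw [norm_complex_sqrt]
    have hnorm := norm_add_le ((b : ℂ) ^ 2) q
    rw [norm_pow, hb] at hnorm
    exact (sqrt_le_sqrt hnorm).trans (sqrt_le_iff.2 ⟨by positivity, by nlinarith [norm_nonneg q]⟩)
  calc ‖passageRate b q‖ ≤ ‖Complex.sqrt (b ^ 2 + q)‖ + |b| := hb ▸ norm_sub_le _ _
    _ ≤ ‖q‖ + (1 + |b|) ^ 2 := by nlinarith [abs_nonneg b]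

end PassageRate

section LaplaceSwap

variable {k : ℝ → ℝ} {H q : ℝ → ℂ} {Φ : ℝ → ℝ}

theorem integrable_prod_mul_exp_neg_mul (hk : AEStronglyMeasurable k)
    (hH : AEStronglyMeasurable H) (hq : AEStronglyMeasurable q)
    (hint : ∀ ξ, Integrable fun w : ℝ => Complex.exp (-q ξ * w) * k w) (hΦ : Integrable Φ)
    (hle : ∀ ξ, ‖H ξ‖ * ∫ w : ℝ, ‖Complex.exp (-q ξ * w) * k w‖ ≤ Φ ξ) :
    Integrable fun P : ℝ × ℝ => H P.1 * (Complex.exp (-q P.1 * P.2) * k P.2) := by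
  have hmeas : AEStronglyMeasurable
      (fun P : ℝ × ℝ => H P.1 * (Complex.exp (-q P.1 * P.2) * k P.2)) := by
    have hexp : AEStronglyMeasurable (fun P : ℝ × ℝ => Complex.exp (-q P.1 * P.2)) :=
      Complex.continuous_exp.comp_aestronglyMeasurable (hq.comp_fst.neg.mul
        (Complex.continuous_ofReal.comp continuous_snd).aestronglyMeasurable)
    exact hH.comp_fst.mul (hexp.mul (Complex.continuous_ofReal.comp_aestronglyMeasurable
      hk.comp_snd))
  refine (integrable_prod_iff hmeas).2 ⟨Eventually.of_forall fun ξ => (hint ξ).const_mul (H ξ),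
    hΦ.mono' hmeas.norm.integral_prod_right' (Eventually.of_forall fun ξ => ?_)⟩
  simp only [norm_mul (H ξ)]
  rw [integral_const_mul, Real.norm_of_nonneg
    (mul_nonneg (norm_nonneg _) (integral_nonneg fun _ => norm_nonneg _))]
  exact hle ξ

theorem integral_mul_integral_exp_neg_mul (hprod : Integrable
      fun P : ℝ × ℝ => H P.1 * (Complex.exp (-q P.1 * P.2) * k P.2)) :
    ∫ w : ℝ, (k w : ℂ) * ∫ ξ, H ξ * Complex.exp (-q ξ * w) = ∫ ξ, H ξ * laplace k (q ξ) := by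
  calc ∫ w : ℝ, (k w : ℂ) * ∫ ξ, H ξ * Complex.exp (-q ξ * w)
      = ∫ w : ℝ, ∫ ξ, H ξ * (Complex.exp (-q ξ * w) * k w) := by
        simp only [mul_comm (k _ : ℂ), ← integral_mul_const, mul_assoc]
    _ = ∫ ξ, ∫ w : ℝ, H ξ * (Complex.exp (-q ξ * w) * k w) :=
        (integral_integral_swap hprod).symm
    _ = ∫ ξ, H ξ * laplace k (q ξ) := by simp only [laplace, integral_const_mul]

theorem integrable_mul_integral_exp_neg_mul (hprod : Integrable
      fun P : ℝ × ℝ => H P.1 * (Complex.exp (-q P.1 * P.2) * k P.2)) :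
    Integrable fun w : ℝ => (k w : ℂ) * ∫ ξ, H ξ * Complex.exp (-q ξ * w) := by
  refine hprod.integral_prod_right.congr (Eventually.of_forall fun w => ?_)
  simp only [mul_comm (k _ : ℂ), ← integral_mul_const, mul_assoc]

end LaplaceSwap

section Subordination

variable {δ τ w B : ℝ} {h : ℝ → ℝ}

theorem re_vline_nonneg {c : ℝ} (hc : 0 ≤ c) (ξ : ℝ) : 0 ≤ (vline c ξ).re := by
  rwa [vline_re]

theorem norm_laplace_le (hh : Integrable h) (hneg : ∀ r ≤ 0, h r = 0) {p : ℂ} (hp : 0 ≤ p.re) :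
    ‖laplace h p‖ ≤ ∫ r, |h r| :=
  norm_integral_le_of_norm_le hh.abs
    (Eventually.of_forall (norm_exp_neg_mul_ofReal_le hneg hp))

theorem continuous_laplace_vline (hh : Integrable h) (hneg : ∀ r ≤ 0, h r = 0) {c : ℝ}
    (hc : 0 ≤ c) : Continuous fun ξ => laplace h (vline c ξ) := by
  have hline := continuous_vline c
  exact continuous_of_dominated
    (fun ξ => (integrable_exp_neg_mul_ofReal hh hneg (re_vline_nonneg hc ξ)).aestronglyMeasurable)
    (fun ξ => Eventually.of_forall (norm_exp_neg_mul_ofReal_le hneg (re_vline_nonneg hc ξ)))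
    hh.abs
    (Eventually.of_forall fun r => by fun_prop)

/-- The data `h` averaged against the stable subordinator at operational time `τ`: the Laplace
convolution of `h` with `stableKernel δ τ`. -/
noncomputable def subordinate (δ : ℝ) (h : ℝ → ℝ) (τ t : ℝ) : ℝ :=
  ∫ r, h r * stableKernel δ τ (t - r)

theorem subordinate_of_nonpos (δ τ : ℝ) (hneg : ∀ r ≤ 0, h r = 0) {t : ℝ} (ht : t ≤ 0) :
    subordinate δ h τ t = 0 := by
  refine integral_eq_zero_of_ae (Eventually.of_forall fun r => ?_)
  rcases le_or_gt r 0 with hr | hr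
  · simp [hneg r hr]
  · simp [stableKernel_of_nonpos δ τ (by linarith : t - r ≤ 0)]

theorem abs_subordinate_le (hδ₀ : 0 < δ) (hδ₁ : δ < 1) (hτ : 0 < τ) (hB : ∀ r, |h r| ≤ B)
    (t : ℝ) : |subordinate δ h τ t| ≤ B * ∫ v, |stableKernel δ 1 v| := by
  have hK := ((integrable_stableKernel hδ₀ hδ₁ hτ).comp_sub_left t).abs
  rw [← integral_abs_stableKernel hδ₀ hτ,
    ← integral_sub_left_eq_self (fun v => |stableKernel δ τ v|) volume t, ← integral_const_mul,
    ← Real.norm_eq_abs, subordinate]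
  refine norm_integral_le_of_norm_le (hK.const_mul B) (Eventually.of_forall fun r => ?_)
  rw [norm_mul]
  exact mul_le_mul_of_nonneg_right (hB r) (abs_nonneg _)

theorem integrable_laplace_vline_mul (hh : Integrable h) (hneg : ∀ r ≤ 0, h r = 0) {c : ℝ}
    (hc : 0 ≤ c) {F : ℝ → ℂ} (hF : Integrable F) :
    Integrable fun ξ => laplace h (vline c ξ) * F ξ :=
  hF.bdd_mul (continuous_laplace_vline hh hneg hc).aestronglyMeasurable
    (Eventually.of_forall fun ξ => norm_laplace_le hh hneg (re_vline_nonneg hc ξ))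

theorem integrable_prod_mul_exp_neg_mul_of_integrable {k : ℝ → ℝ} {H q : ℝ → ℂ}
    (hk : Integrable k) (hk₀ : ∀ v ≤ 0, k v = 0) (hH : Integrable H)
    (hq : AEStronglyMeasurable q) (hre : ∀ ξ, 0 ≤ (q ξ).re) :
    Integrable fun P : ℝ × ℝ => H P.1 * (Complex.exp (-q P.1 * P.2) * k P.2) := by
  refine integrable_prod_mul_exp_neg_mul hk.aestronglyMeasurable hH.aestronglyMeasurable hq
    (fun ξ => integrable_exp_neg_mul_ofReal hk hk₀ (hre ξ)) (hH.norm.mul_const (∫ v, |k v|))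
    fun ξ => ?_
  gcongr
  · exact (integrable_exp_neg_mul_ofReal hk hk₀ (hre ξ)).norm
  · exact hk.abs
  · exact fun v => norm_exp_neg_mul_ofReal_le hk₀ (hre ξ) v

theorem subordinate_eq_bromwich (hδ₀ : 0 < δ) (hδ₁ : δ < 1) (hh : Integrable h)
    (hneg : ∀ r ≤ 0, h r = 0) (hτ : 0 < τ) (t : ℝ) :
    (subordinate δ h τ t : ℂ) = bromwich 1
      (fun ξ => laplace h (vline 1 ξ) * Complex.exp (-τ * vline 1 ξ ^ (δ : ℂ))) t := by
  have hH := integrable_exp_vline_mul_mul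
    (integrable_exp_neg_mul_vline_cpow hδ₀ hδ₁ hτ zero_le_one) 1 t
  have hswap := integral_mul_integral_exp_neg_mul (integrable_prod_mul_exp_neg_mul_of_integrable
    hh hneg hH (continuous_vline 1).aestronglyMeasurable
    (re_vline_nonneg zero_le_one))
  rw [subordinate, ← integral_complex_ofReal]
  calc ∫ r : ℝ, ((h r * stableKernel δ τ (t - r) : ℝ) : ℂ)
      = ∫ r : ℝ, (h r : ℂ) * ∫ ξ, Complex.exp (vline 1 ξ * t)
          * Complex.exp (-τ * vline 1 ξ ^ (δ : ℂ)) * Complex.exp (-vline 1 ξ * r) := by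
        refine integral_congr_ae (Eventually.of_forall fun r => ?_)
        simp only [Complex.ofReal_mul, stableKernel_eq_bromwich hδ₀ hδ₁ hτ zero_le_one, bromwich]
        congr 1
        refine integral_congr_ae (Eventually.of_forall fun ξ => ?_)
        simp only [← Complex.exp_add]
        push_cast
        ring_nf
    _ = _ := by
        rw [hswap, bromwich]
        simp only [mul_assoc, mul_comm (laplace h _)]

theorem integral_stableKernel_mul_subordinate (hδ₀ : 0 < δ) (hδ₁ : δ < 1) (hh : Integrable h)
    (hneg : ∀ r ≤ 0, h r = 0) (hτ : 0 < τ) (hw : 0 < w) (t : ℝ) :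
    ∫ s, stableKernel δ w s * subordinate δ h τ (t - s) = subordinate δ h (τ + w) t := by
  have hH := integrable_exp_vline_mul_mul (integrable_laplace_vline_mul hh hneg zero_le_one
    (integrable_exp_neg_mul_vline_cpow hδ₀ hδ₁ hτ zero_le_one)) 1 t
  have hswap := integral_mul_integral_exp_neg_mul (integrable_prod_mul_exp_neg_mul_of_integrable
    (integrable_stableKernel hδ₀ hδ₁ hw) (fun _ => stableKernel_of_nonpos δ w) hH
    (continuous_vline 1).aestronglyMeasurable
    (re_vline_nonneg zero_le_one))
  apply Complex.ofReal_injective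
  rw [← integral_complex_ofReal, subordinate_eq_bromwich hδ₀ hδ₁ hh hneg (add_pos hτ hw)]
  calc ∫ s : ℝ, ((stableKernel δ w s * subordinate δ h τ (t - s) : ℝ) : ℂ)
      = ∫ s : ℝ, (stableKernel δ w s : ℂ) * ∫ ξ, Complex.exp (vline 1 ξ * t) *
          (laplace h (vline 1 ξ) * Complex.exp (-τ * vline 1 ξ ^ (δ : ℂ))) *
          Complex.exp (-vline 1 ξ * s) := by
        refine integral_congr_ae (Eventually.of_forall fun s => ?_)
        simp only [Complex.ofReal_mul, subordinate_eq_bromwich hδ₀ hδ₁ hh hneg hτ, bromwich]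
        congr 1
        refine integral_congr_ae (Eventually.of_forall fun ξ => ?_)
        simp only
        push_cast
        rw [mul_sub, sub_eq_add_neg, Complex.exp_add, neg_mul]
        ring_nf
    _ = _ := by
        rw [hswap, bromwich]
        refine integral_congr_ae (Eventually.of_forall fun ξ => ?_)
        simp only
        rw [laplace_stableKernel hδ₀ hδ₁ hw (re_vline_nonneg zero_le_one ξ)]
        push_cast
        rw [neg_add, add_mul, Complex.exp_add]
        ring

end Subordination

section HalfLineAverage

variable {b y : ℝ}

theorem integral_norm_exp_neg_mul_passageDensity (b : ℝ) (hy : 0 < y) {q : ℂ} (hq : 0 ≤ q.re) :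
    ∫ w : ℝ, ‖Complex.exp (-q * w) * passageDensity b y w‖ =
      exp (-(√(b ^ 2 + q.re) - b) * y) := by
  have hlaplace := laplace_passageDensity b hy (q := (q.re : ℂ)) hq
  rw [passageRate_ofReal b hq, laplace] at hlaplace
  have hnorm (w : ℝ) : ‖Complex.exp (-q * w) * passageDensity b y w‖ =
      exp (-q.re * w) * passageDensity b y w := by
    rw [norm_mul, Complex.norm_exp, Complex.re_mul_ofReal, Complex.neg_re, Complex.norm_real,
      Real.norm_of_nonneg (passageDensity_nonneg b hy.le w)]
  simp only [hnorm]
  rw [← Complex.ofReal_inj, ← integral_complex_ofReal]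
  push_cast at hlaplace ⊢
  exact hlaplace

theorem integral_passageDensity (b : ℝ) (hy : 0 < y) :
    ∫ w, passageDensity b y w = exp (-(|b| - b) * y) := by
  have hnorm := integral_norm_exp_neg_mul_passageDensity b hy (q := 0) le_rfl
  rw [Complex.zero_re, add_zero, sqrt_sq_eq_abs] at hnorm
  rw [← hnorm]
  refine integral_congr_ae (Eventually.of_forall fun w => ?_)
  simp [abs_of_nonneg (passageDensity_nonneg b hy.le w)]

theorem integral_abs_passageDensity_neg (b y : ℝ) :
    ∫ w, |passageDensity b (-y) w| = exp (-(2 * b * y)) * ∫ w, |passageDensity b y w| := by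
  simp only [passageDensity_neg, abs_neg, abs_mul, abs_exp, integral_const_mul]

theorem integral_abs_passageDensity_le_one (b : ℝ) (hy : 0 ≤ y) :
    ∫ w, |passageDensity b y w| ≤ 1 := by
  rcases hy.eq_or_lt with rfl | hy
  · simp [passageDensity_zero]
  simp only [abs_of_nonneg (passageDensity_nonneg b hy.le _)]
  rw [integral_passageDensity b hy, exp_le_one_iff]
  nlinarith [le_abs_self b]

theorem integral_abs_passageDensity_le (b y : ℝ) :
    ∫ w, |passageDensity b y w| ≤ exp (2 * |b| * |y|) := by
  rcases le_or_gt 0 y with hy | hy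
  · exact (integral_abs_passageDensity_le_one b hy).trans (one_le_exp (by positivity))
  have hodd := integral_abs_passageDensity_neg b (-y)
  rw [neg_neg] at hodd
  rw [hodd]
  refine (mul_le_of_le_one_right (exp_pos _).le
    (integral_abs_passageDensity_le_one b (neg_nonneg.2 hy.le))).trans (exp_le_exp.2 ?_)
  rw [abs_of_neg hy]
  nlinarith [neg_abs_le b, le_abs_self b]

variable {a lam δ τ B : ℝ} {h : ℝ → ℝ}

/-- The decay rate in `z` of the bounded solution `exp (-rateZ a lam q * z)` of
`a ^ 2 * v'' - lam * v' = q * v`. -/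
noncomputable def rateZ (a lam : ℝ) (q : ℂ) : ℂ :=
  passageRate (lam / (2 * a)) q / a

theorem rateZ_sq_add (ha : a ≠ 0) (lam : ℝ) (q : ℂ) :
    a ^ 2 * rateZ a lam q ^ 2 + lam * rateZ a lam q = q := by
  have ha' : (a : ℂ) ≠ 0 := Complex.ofReal_ne_zero.2 ha
  have heq := passageRate_sq_add (lam / (2 * a)) q
  rw [rateZ]
  push_cast at heq ⊢
  field_simp at heq ⊢
  linear_combination heq

theorem re_rateZ (a lam : ℝ) (q : ℂ) :
    (rateZ a lam q).re = (passageRate (lam / (2 * a)) q).re / a := by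
  rw [rateZ, Complex.div_ofReal_re]

theorem re_rateZ_nonneg (ha : 0 < a) (lam : ℝ) {q : ℂ} (hq : 0 ≤ q.re) :
    0 ≤ (rateZ a lam q).re := by
  rw [re_rateZ]
  exact div_nonneg (re_passageRate_nonneg _ hq) ha.le

/-- The data at boundary time `τ` averaged over the further time spent in the half-line `z > 0`
before the level `y` is passed. -/
noncomputable def halfLineAverage (a lam δ : ℝ) (h : ℝ → ℝ) (τ y t : ℝ) : ℝ :=
  ∫ w, passageDensity (lam / (2 * a)) (y / a) w * subordinate δ h (τ + w) t

theorem halfLineAverage_of_nonpos (a lam δ τ y : ℝ) (hneg : ∀ r ≤ 0, h r = 0) {t : ℝ}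
    (ht : t ≤ 0) : halfLineAverage a lam δ h τ y t = 0 := by
  simp [halfLineAverage, subordinate_of_nonpos δ _ hneg ht]

theorem abs_halfLineAverage_le (hδ₀ : 0 < δ) (hδ₁ : δ < 1) (hτ : 0 < τ) (hB : ∀ r, |h r| ≤ B)
    (a lam y t : ℝ) :
    |halfLineAverage a lam δ h τ y t| ≤
      (B * ∫ v, |stableKernel δ 1 v|) * ∫ w, |passageDensity (lam / (2 * a)) (y / a) w| := by
  rw [← integral_const_mul, ← Real.norm_eq_abs, halfLineAverage]
  refine norm_integral_le_of_norm_le ((integrable_passageDensity _ _).abs.const_mul _)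
    (Eventually.of_forall fun w => ?_)
  rcases le_or_gt w 0 with hw | hw
  · simp [passageDensity_of_nonpos _ _ hw]
  rw [norm_mul, mul_comm]
  exact mul_le_mul_of_nonneg_right (abs_subordinate_le hδ₀ hδ₁ (add_pos hτ hw) hB t)
    (abs_nonneg _)

theorem re_vline_cpow_pos (hδ₀ : 0 < δ) (hδ₁ : δ < 1) (ξ : ℝ) :
    0 < (vline 1 ξ ^ (δ : ℂ)).re := by
  have hcos := cos_mul_pi_div_two_pos hδ₀ hδ₁
  have hne : vline 1 ξ ≠ 0 := fun hzero => by simpa [vline_re] using congrArg Complex.re hzero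
  refine lt_of_lt_of_le ?_
    (norm_rpow_mul_cos_le_re_cpow hδ₀ hδ₁ (re_vline_nonneg zero_le_one ξ))
  positivity

theorem re_vline_cpow_nonneg (hδ₀ : 0 < δ) (hδ₁ : δ < 1) (ξ : ℝ) :
    0 ≤ (vline 1 ξ ^ (δ : ℂ)).re :=
  (re_vline_cpow_pos hδ₀ hδ₁ ξ).le

/-- The Bromwich integral of `G` against the transform of the response of the half-line, at
boundary time `τ` and level `y`; it is `halfLineAverage` when `G` is the transform of the data. -/
noncomputable def halfLineBromwich (a lam δ : ℝ) (G : ℝ → ℂ) (τ y t : ℝ) : ℂ :=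
  bromwich 1 (fun ξ => G ξ * (Complex.exp (-rateZ a lam (vline 1 ξ ^ (δ : ℂ)) * y) *
    Complex.exp (-τ * vline 1 ξ ^ (δ : ℂ)))) t

theorem halfLineAverage_eq_halfLineBromwich (hδ₀ : 0 < δ) (hδ₁ : δ < 1) (hh : Integrable h)
    (hneg : ∀ r ≤ 0, h r = 0) (ha : 0 < a) (lam : ℝ) (hτ : 0 < τ) (hy : 0 < y) (t : ℝ) :
    (halfLineAverage a lam δ h τ y t : ℂ) =
      halfLineBromwich a lam δ (fun ξ => laplace h (vline 1 ξ)) τ y t := by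
  have hH := integrable_exp_vline_mul_mul (integrable_laplace_vline_mul hh hneg zero_le_one
    (integrable_exp_neg_mul_vline_cpow hδ₀ hδ₁ hτ zero_le_one)) 1 t
  have hswap := integral_mul_integral_exp_neg_mul (integrable_prod_mul_exp_neg_mul_of_integrable
    (integrable_passageDensity (lam / (2 * a)) (y / a))
    (fun _ => passageDensity_of_nonpos _ _) hH
    (continuous_vline_cpow hδ₀ zero_le_one).aestronglyMeasurable
    (re_vline_cpow_nonneg hδ₀ hδ₁))
  rw [halfLineAverage, ← integral_complex_ofReal]
  calc ∫ w : ℝ, ((passageDensity (lam / (2 * a)) (y / a) w * subordinate δ h (τ + w) t : ℝ) : ℂ)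
      = ∫ w : ℝ, (passageDensity (lam / (2 * a)) (y / a) w : ℂ) *
          ∫ ξ, Complex.exp (vline 1 ξ * t) * (laplace h (vline 1 ξ) *
            Complex.exp (-τ * vline 1 ξ ^ (δ : ℂ))) *
            Complex.exp (-vline 1 ξ ^ (δ : ℂ) * w) := by
        refine integral_congr_ae (Eventually.of_forall fun w => ?_)
        rcases le_or_gt w 0 with hw | hw
        · simp [passageDensity_of_nonpos _ _ hw]
        simp only [Complex.ofReal_mul, bromwich,
          subordinate_eq_bromwich hδ₀ hδ₁ hh hneg (add_pos hτ hw)]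
        congr 1
        refine integral_congr_ae (Eventually.of_forall fun ξ => ?_)
        simp only
        push_cast
        rw [neg_add, add_mul, Complex.exp_add, neg_mul_comm (w : ℂ), mul_comm (w : ℂ)]
        ring
    _ = _ := by
        rw [hswap, halfLineBromwich, bromwich]
        refine integral_congr_ae (Eventually.of_forall fun ξ => ?_)
        simp only
        rw [laplace_passageDensity _ (div_pos hy ha) (re_vline_cpow_nonneg hδ₀ hδ₁ ξ), rateZ]
        push_cast
        ring_nf

end HalfLineAverage

section Convolution

variable {a lam α γ δ β τ t : ℝ} {h : ℝ → ℝ}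

theorem continuous_subordinate (hδ₀ : 0 < δ) (hδ₁ : δ < 1) (hh : Integrable h)
    (hneg : ∀ r ≤ 0, h r = 0) (hτ : 0 < τ) : Continuous (subordinate δ h τ) := by
  have hre (t : ℝ) : subordinate δ h τ t = (bromwich 1
      (fun ξ => laplace h (vline 1 ξ) * Complex.exp (-τ * vline 1 ξ ^ (δ : ℂ))) t).re := by
    rw [← subordinate_eq_bromwich hδ₀ hδ₁ hh hneg hτ, Complex.ofReal_re]
  rw [funext hre]
  exact Complex.continuous_re.comp (continuous_bromwich (integrable_laplace_vline_mul hh hneg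
    zero_le_one (integrable_exp_neg_mul_vline_cpow hδ₀ hδ₁ hτ zero_le_one)) 1)

theorem integrable_passageDensity_mul_stableKernel (hδ₀ : 0 < δ) (hδ₁ : δ < 1) (b y : ℝ) :
    Integrable fun P : ℝ × ℝ => passageDensity b y P.1 * stableKernel δ P.1 P.2 := by
  have hcut : (fun P : ℝ × ℝ => passageDensity b y P.1 * stableKernel δ P.1 P.2) = fun P =>
      passageDensity b y P.1 * if 0 < P.1 then stableKernel δ P.1 P.2 else 0 := by
    funext P
    split_ifs with hw
    · rfl
    · simp [passageDensity_of_nonpos b y (not_lt.1 hw)]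
  have hdensity : Measurable (passageDensity b y) :=
    (measurable_passageDensity b).comp measurable_prodMk_left
  have hmeas : AEStronglyMeasurable (fun P : ℝ × ℝ =>
      passageDensity b y P.1 * stableKernel δ P.1 P.2) (volume.prod volume) := by
    rw [hcut]
    exact ((hdensity.comp measurable_fst).mul
      (measurable_stableKernel hδ₀ hδ₁)).aestronglyMeasurable
  refine (integrable_prod_iff hmeas).2 ⟨Eventually.of_forall fun w => ?_, ?_⟩
  · rcases le_or_gt w 0 with hw | hw
    · simp [passageDensity_of_nonpos b y hw]
    · exact (integrable_stableKernel hδ₀ hδ₁ hw).const_mul (passageDensity b y w)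
  · refine ((integrable_passageDensity b y).norm.mul_const
      (∫ v, |stableKernel δ 1 v|)).congr (Eventually.of_forall fun w => ?_)
    rcases le_or_gt w 0 with hw | hw
    · simp [passageDensity_of_nonpos b y hw]
    · simp only [norm_mul, integral_const_mul, Real.norm_eq_abs,
        integral_abs_stableKernel hδ₀ hw]

theorem integral_subordinate_mul_integral_stableKernel (hδ₀ : 0 < δ) (hδ₁ : δ < 1)
    (hh : Integrable h) {B : ℝ} (hB : ∀ r, |h r| ≤ B) (hneg : ∀ r ≤ 0, h r = 0) (hτ : 0 < τ)
    (a lam y t : ℝ) :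
    ∫ s, subordinate δ h τ (t - s) *
        ∫ w, passageDensity (lam / (2 * a)) (y / a) w * stableKernel δ w s =
      halfLineAverage a lam δ h τ y t := by
  have hsub : Continuous fun s => subordinate δ h τ (t - s) :=
    (continuous_subordinate hδ₀ hδ₁ hh hneg hτ).comp (by fun_prop)
  simp only [← integral_const_mul]
  rw [integral_integral_swap, halfLineAverage]
  · refine integral_congr_ae (Eventually.of_forall fun w => ?_)
    rcases le_or_gt w 0 with hw | hw
    · simp [passageDensity_of_nonpos _ _ hw]
    · simp only [← integral_stableKernel_mul_subordinate hδ₀ hδ₁ hh hneg hτ hw,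
        ← integral_const_mul]
      exact integral_congr_ae (Eventually.of_forall fun s => by ring)
  · exact (integrable_passageDensity_mul_stableKernel hδ₀ hδ₁ _ _).swap.bdd_mul
      (hsub.comp continuous_fst).aestronglyMeasurable
      (Eventually.of_forall fun P => abs_subordinate_le hδ₀ hδ₁ hτ hB _)

theorem lconv_eq_integral {f g F G : ℝ → ℝ} (ht : 0 ≤ t) (hF : ∀ s ∈ Ioo 0 t, f s = F s)
    (hG : ∀ s ∈ Ioo 0 t, g s = G s) (hF₀ : ∀ s ≤ 0, F s = 0) (hG₀ : ∀ s ≤ 0, G s = 0) :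
    lconv f g t = ∫ s, F (t - s) * G s := by
  rw [lconv, intervalIntegral.integral_of_le ht, integral_Ioc_eq_integral_Ioo,
    ← setIntegral_eq_integral_of_forall_compl_eq_zero (s := Ioo 0 t)
      (f := fun s => F (t - s) * G s)]
  · refine setIntegral_congr_fun measurableSet_Ioo fun s hs => ?_
    simp only [hF (t - s) ⟨sub_pos.2 hs.2, by linarith [hs.1]⟩, hG s hs]
  · intro s hs
    rcases le_or_gt s 0 with hs₀ | hs₀
    · rw [hG₀ s hs₀, mul_zero]
    · rw [hF₀ _ (sub_nonpos.2 (not_lt.1 fun hst => hs ⟨hs₀, hst⟩)), zero_mul]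

theorem passageDensity_mul_stableKernel_eq (ha : 0 < a) (lam y β : ℝ) {w s : ℝ} (hw : 0 < w)
    (hs : 0 < s) :
    passageDensity (lam / (2 * a)) (y / a) w * stableKernel (2 * β) w s =
      exp (lam * y / (2 * a ^ 2)) *
        (β * y / (a * √π * s ^ (2 * β + 1)) * (w ^ (-(1 / 2 : ℝ)) *
          exp (-y ^ 2 / (4 * a ^ 2 * w) - lam ^ 2 * w / (4 * a ^ 2)) *
            Mwr (w / s ^ (2 * β)) (2 * β))) := by
  have hpow : w ^ (-(1 / 2 : ℝ)) = w ^ (-(3 / 2 : ℝ)) * w := by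
    rw [← rpow_add_one hw.ne']; norm_num
  have hexp : exp (lam / (2 * a) * (y / a) - (lam / (2 * a)) ^ 2 * w - (y / a) ^ 2 / (4 * w)) =
      exp (lam * y / (2 * a ^ 2)) *
        exp (-y ^ 2 / (4 * a ^ 2 * w) - lam ^ 2 * w / (4 * a ^ 2)) := by
    rw [← exp_add]
    congr 1
    field_simp
    ring
  have : 0 < s ^ (2 * β + 1) := rpow_pos_of_pos hs _
  rw [passageDensity_of_pos _ _ hw, stableKernel, if_pos hs, hexp, hpow]
  field_simp

theorem exp_mul_lconv_lconv_eq_halfLineAverage (ha : 0 < a) (hβ₁ : 0 < β) (hβ₂ : β < 1 / 2)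
    {k : ℝ → ℝ} (hh : Integrable h) {B : ℝ} (hB : ∀ r, |h r| ≤ B) (hneg : ∀ r ≤ 0, h r = 0)
    (hk : ∀ r ∈ Ioo 0 t, k r = h r) (ht : 0 ≤ t) (hτ : 0 < τ) {f₁ : ℝ → ℝ}
    (hf₁ : ∀ s, f₁ s = 2 * β * τ / s ^ (2 * β + 1) * Mwr (τ / s ^ (2 * β)) (2 * β))
    {f₂ : ℝ → ℝ} {y : ℝ}
    (hf₂ : ∀ s, f₂ s = β * y / (a * √π * s ^ (2 * β + 1)) *
      ∫ w in Ioi (0 : ℝ), w ^ (-(1 / 2 : ℝ)) *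
        exp (-y ^ 2 / (4 * a ^ 2 * w) - lam ^ 2 * w / (4 * a ^ 2)) *
        Mwr (w / s ^ (2 * β)) (2 * β)) :
    exp (lam * y / (2 * a ^ 2)) * lconv (lconv f₁ k) f₂ t =
      halfLineAverage a lam (2 * β) h τ y t := by
  have hinner (r : ℝ) (hr : r ∈ Ioo 0 t) : lconv f₁ k r = subordinate (2 * β) h τ r := by
    rw [lconv_eq_integral hr.1.le (fun s hs => ?_) (fun s hs => hk s ⟨hs.1, hs.2.trans hr.2⟩)
      (fun s => stableKernel_of_nonpos (2 * β) τ) hneg, subordinate]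
    · simp only [mul_comm]
    · rw [hf₁, stableKernel, if_pos hs.1]
  have houter (s : ℝ) (hs : s ∈ Ioo 0 t) : f₂ s = (exp (lam * y / (2 * a ^ 2)))⁻¹ *
      ∫ w, passageDensity (lam / (2 * a)) (y / a) w * stableKernel (2 * β) w s := by
    rw [← setIntegral_eq_integral_of_forall_compl_eq_zero (s := Ioi 0) fun w hw => by
        rw [passageDensity_of_nonpos _ _ (not_lt.1 hw), zero_mul],
      setIntegral_congr_fun measurableSet_Ioi
        fun w hw => passageDensity_mul_stableKernel_eq ha lam y β hw hs.1,
      integral_const_mul, integral_const_mul, hf₂, inv_mul_cancel_left₀ (exp_pos _).ne']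
  rw [lconv_eq_integral ht hinner houter (fun s => subordinate_of_nonpos _ _ hneg)
    (fun s hs => by simp [stableKernel_of_nonpos _ _ hs]),
    ← integral_subordinate_mul_integral_stableKernel (by linarith) (by linarith) hh hB hneg hτ,
    ← integral_const_mul]
  exact integral_congr_ae (Eventually.of_forall fun s => by
    simp only
    rw [mul_left_comm (subordinate _ _ _ _), mul_inv_cancel_left₀ (exp_pos _).ne'])

/-- The solution with the amplitude `A` removed: `h` averaged over the boundary time spent before
the level `x` is passed and over the further time spent in the half-line. -/
noncomputable def lumped (a lam α γ δ : ℝ) (h : ℝ → ℝ) (x z t : ℝ) : ℝ :=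
  ∫ τ, passageDensity γ x τ * halfLineAverage a lam δ h τ (z + α * τ) t

theorem lumped_of_nonpos (a lam α γ δ x z : ℝ) (hneg : ∀ r ≤ 0, h r = 0) (ht : t ≤ 0) :
    lumped a lam α γ δ h x z t = 0 := by
  simp [lumped, halfLineAverage_of_nonpos _ _ _ _ _ hneg ht]

theorem mul_integral_eq_mul_lumped (A x z : ℝ) {g : ℝ → ℝ}
    (hg : ∀ τ > 0, exp (lam * (z + α * τ) / (2 * a ^ 2)) * g τ =
      halfLineAverage a lam δ h τ (z + α * τ) t) :
    A * exp (γ * x) / (2 * √π) * ∫ τ in Ioi (0 : ℝ), x * τ ^ (-(3 / 2 : ℝ)) *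
        exp (-x ^ 2 / (4 * τ) - γ ^ 2 * τ) * exp (lam * (z + α * τ) / (2 * a ^ 2)) * g τ =
      A * lumped a lam α γ δ h x z t := by
  have hsupport : ∫ τ in Ioi (0 : ℝ), passageDensity γ x τ *
      halfLineAverage a lam δ h τ (z + α * τ) t = lumped a lam α γ δ h x z t :=
    setIntegral_eq_integral_of_forall_compl_eq_zero fun τ hτ => by
      rw [passageDensity_of_nonpos _ _ (not_lt.1 hτ), zero_mul]
  rw [← hsupport, ← integral_const_mul, ← integral_const_mul]
  refine setIntegral_congr_fun measurableSet_Ioi fun τ hτ => ?_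
  have hexp : exp (γ * x - γ ^ 2 * τ - x ^ 2 / (4 * τ)) =
      exp (γ * x) * exp (-x ^ 2 / (4 * τ) - γ ^ 2 * τ) := by
    rw [← exp_add]
    ring_nf
  simp only [mul_assoc _ (exp (lam * (z + α * τ) / (2 * a ^ 2))), hg τ hτ,
    passageDensity_of_pos γ x hτ, hexp]
  ring

end Convolution

/-- Polynomial growth along the Bromwich line `Re p = 1`, bundled with measurability: the class of
factors that `exp (-c * ‖p‖ ^ s)` makes integrable. -/
def HasPolynomialGrowth (G : ℝ → ℂ) : Prop :=
  Measurable G ∧ ∃ (C : ℝ) (n : ℕ), ∀ ξ, ‖G ξ‖ ≤ C * ‖vline 1 ξ‖ ^ n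

theorem one_le_norm_vline_one (ξ : ℝ) : 1 ≤ ‖vline 1 ξ‖ := by
  have hre := Complex.abs_re_le_norm (vline 1 ξ)
  rwa [vline_re, abs_one] at hre

namespace HasPolynomialGrowth

variable {F G : ℝ → ℂ}

theorem of_norm_le (hG : Measurable G) {C : ℝ} (hC : ∀ ξ, ‖G ξ‖ ≤ C) :
    HasPolynomialGrowth G :=
  ⟨hG, C, 0, by simpa using hC⟩

theorem mul (hF : HasPolynomialGrowth F) (hG : HasPolynomialGrowth G) :
    HasPolynomialGrowth fun ξ => F ξ * G ξ := by
  obtain ⟨hFm, C, n, hC⟩ := hF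
  obtain ⟨hGm, D, m, hD⟩ := hG
  refine ⟨hFm.mul hGm, C * D, n + m, fun ξ => ?_⟩
  calc ‖F ξ * G ξ‖ = ‖F ξ‖ * ‖G ξ‖ := norm_mul _ _
    _ ≤ (C * ‖vline 1 ξ‖ ^ n) * (D * ‖vline 1 ξ‖ ^ m) :=
        mul_le_mul (hC ξ) (hD ξ) (norm_nonneg _) ((norm_nonneg _).trans (hC ξ))
    _ = C * D * ‖vline 1 ξ‖ ^ (n + m) := by ring

theorem of_norm_le_add (hF : Measurable F) (hG : HasPolynomialGrowth G) {A K : ℝ} (hA : 0 ≤ A)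
    (hK : 0 ≤ K) (hle : ∀ ξ, ‖F ξ‖ ≤ A * ‖G ξ‖ + K) : HasPolynomialGrowth F := by
  obtain ⟨-, C, n, hC⟩ := hG
  refine ⟨hF, A * C + K, n, fun ξ => (hle ξ).trans ?_⟩
  have hone := one_le_pow₀ (n := n) (one_le_norm_vline_one ξ)
  nlinarith [mul_le_mul_of_nonneg_left (hC ξ) hA, mul_le_mul_of_nonneg_left hone hK]

theorem add (hF : HasPolynomialGrowth F) (hG : HasPolynomialGrowth G) :
    HasPolynomialGrowth fun ξ => F ξ + G ξ := by
  obtain ⟨hFm, C, n, hC⟩ := hF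
  obtain ⟨hGm, D, m, hD⟩ := hG
  refine ⟨hFm.add hGm, |C| + |D|, n + m, fun ξ => (norm_add_le _ _).trans ?_⟩
  have hone := one_le_norm_vline_one ξ
  have hn : ‖vline 1 ξ‖ ^ n ≤ ‖vline 1 ξ‖ ^ (n + m) := pow_le_pow_right₀ hone (by omega)
  have hm : ‖vline 1 ξ‖ ^ m ≤ ‖vline 1 ξ‖ ^ (n + m) := pow_le_pow_right₀ hone (by omega)
  rw [add_mul]
  exact add_le_add ((hC ξ).trans (mul_le_mul (le_abs_self C) hn (by positivity) (abs_nonneg C)))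
    ((hD ξ).trans (mul_le_mul (le_abs_self D) hm (by positivity) (abs_nonneg D)))

theorem vline_one : HasPolynomialGrowth (vline 1) :=
  ⟨(continuous_vline 1).measurable, 1, 1, by simp⟩

theorem const (c : ℂ) : HasPolynomialGrowth fun _ => c :=
  of_norm_le measurable_const fun _ => le_rfl

theorem const_mul (hG : HasPolynomialGrowth G) (c : ℂ) : HasPolynomialGrowth fun ξ => c * G ξ :=
  (const c).mul hG

theorem vline_one_cpow {δ : ℝ} (hδ₀ : 0 < δ) (hδ₁ : δ < 1) :
    HasPolynomialGrowth fun ξ => vline 1 ξ ^ (δ : ℂ) := by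
  refine ⟨(continuous_vline_cpow hδ₀ zero_le_one).measurable, 1, 1, fun ξ => ?_⟩
  have hone := one_le_norm_vline_one ξ
  rw [Complex.norm_cpow_real, one_mul, pow_one]
  exact rpow_le_self_of_one_le hone hδ₁.le

theorem passageRate_comp (hG : HasPolynomialGrowth G) (b : ℝ) :
    HasPolynomialGrowth fun ξ => passageRate b (G ξ) :=
  of_norm_le_add ((measurable_passageRate b).comp hG.1) hG (A := 1) zero_le_one (sq_nonneg _)
    fun ξ => by rw [one_mul]; exact norm_passageRate_le b (G ξ)

theorem laplace_vline {h : ℝ → ℝ} (hh : Integrable h) (hneg : ∀ r ≤ 0, h r = 0) :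
    HasPolynomialGrowth fun ξ => laplace h (vline 1 ξ) :=
  of_norm_le (continuous_laplace_vline hh hneg zero_le_one).measurable
    fun ξ => norm_laplace_le hh hneg (re_vline_nonneg zero_le_one ξ)

theorem exp_vline_mul (t : ℝ) : HasPolynomialGrowth fun ξ => Complex.exp (vline 1 ξ * t) :=
  of_norm_le (Complex.measurable_exp.comp ((continuous_vline 1).measurable.mul_const _))
    fun ξ => (norm_exp_vline_mul 1 ξ t).le

end HasPolynomialGrowth

theorem exists_pow_le_mul_exp_rpow {c s : ℝ} (hc : 0 < c) (hs : 0 < s) (n : ℕ) :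
    ∃ K, ∀ y, 1 ≤ y → y ^ n ≤ K * exp (c * y ^ s) := by
  obtain ⟨N, hN⟩ := exists_nat_ge (n / s)
  refine ⟨N.factorial / c ^ N, fun y hy => ?_⟩
  have hpow : y ^ n ≤ (y ^ s) ^ N := by
    rw [← rpow_natCast y n, ← rpow_mul_natCast (by linarith)]
    exact rpow_le_rpow_of_exponent_le hy (by rwa [div_le_iff₀' hs] at hN)
  have hexp := pow_div_factorial_le_exp (c * y ^ s) (by positivity) N
  rw [div_le_iff₀ (by positivity), mul_pow] at hexp
  rw [div_mul_eq_mul_div, le_div_iff₀ (by positivity)]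
  nlinarith [mul_le_mul_of_nonneg_left hpow (pow_pos hc N).le]

theorem integrable_norm_vline_pow_mul_exp {κ s : ℝ} (hκ : 0 < κ) (hs : 0 < s) (n : ℕ) :
    Integrable fun ξ => ‖vline 1 ξ‖ ^ n * exp (-κ * ‖vline 1 ξ‖ ^ s) := by
  obtain ⟨K, hK⟩ := exists_pow_le_mul_exp_rpow (half_pos hκ) hs n
  have hnorm : Continuous fun ξ => ‖vline 1 ξ‖ := (continuous_vline 1).norm
  have hpow : Continuous fun ξ => ‖vline 1 ξ‖ ^ s := hnorm.rpow_const fun _ => Or.inr hs.le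
  refine ((integrable_exp_neg_mul_abs_rpow hs (half_pos hκ)).const_mul K).mono'
    (Continuous.aestronglyMeasurable (by fun_prop)) (Eventually.of_forall fun ξ => ?_)
  have hpoly := hK _ (one_le_norm_vline_one ξ)
  have hK₀ : 0 ≤ K := by
    by_contra! hK₀
    have hle := hK 1 le_rfl
    rw [one_pow] at hle
    nlinarith [exp_pos (κ / 2 * 1 ^ s)]
  rw [Real.norm_of_nonneg (by positivity)]
  calc ‖vline 1 ξ‖ ^ n * exp (-κ * ‖vline 1 ξ‖ ^ s)
      ≤ K * exp (κ / 2 * ‖vline 1 ξ‖ ^ s) * exp (-κ * ‖vline 1 ξ‖ ^ s) := by gcongr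
    _ = K * exp (-(κ / 2) * ‖vline 1 ξ‖ ^ s) := by rw [mul_assoc, ← exp_add]; ring_nf
    _ ≤ K * exp (-(κ / 2) * |ξ| ^ s) := by
        rw [neg_mul, neg_mul]
        gcongr
        exact abs_le_norm_vline 1 ξ

theorem HasPolynomialGrowth.integrable_mul_exp_neg {G r : ℝ → ℂ} (hG : HasPolynomialGrowth G)
    (hr : Measurable r) {κ s C : ℝ} (hκ : 0 < κ) (hs : 0 < s)
    (hle : ∀ ξ, κ * ‖vline 1 ξ‖ ^ s - C ≤ (r ξ).re) :
    Integrable fun ξ => G ξ * Complex.exp (-r ξ) := by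
  obtain ⟨hmeas, D, n, hD⟩ := hG
  refine ((integrable_norm_vline_pow_mul_exp hκ hs n).const_mul (D * exp C)).mono'
    (hmeas.mul (Complex.measurable_exp.comp hr.neg)).aestronglyMeasurable
    (Eventually.of_forall fun ξ => ?_)
  rw [norm_mul, Complex.norm_exp, Complex.neg_re]
  calc ‖G ξ‖ * exp (-(r ξ).re)
      ≤ (D * ‖vline 1 ξ‖ ^ n) * exp (C + -κ * ‖vline 1 ξ‖ ^ s) := by
        refine mul_le_mul (hD ξ) (exp_le_exp.2 ?_) (exp_pos _).le ((norm_nonneg _).trans (hD ξ))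
        linarith [hle ξ]
    _ = _ := by rw [exp_add]; ring

/-- The decay rate in `x` that turns `exp (-rateX * x) * exp (-rateZ * z)` into a solution of the
boundary condition `v_xx - 2 * γ * v_x + α * v_z = q * v` at `z = 0`. -/
noncomputable def rateX (a lam α γ : ℝ) (q : ℂ) : ℂ :=
  passageRate γ (q + α * rateZ a lam q)

/-- The transform in time, at frequency `q = p ^ δ`, of the response of the boundary value problem
to an impulse at the corner. -/
noncomputable def lumpedSymbol (a lam α γ x z : ℝ) (q : ℂ) : ℂ :=
  Complex.exp (-rateX a lam α γ q * x) * Complex.exp (-rateZ a lam q * z)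

/-- The Bromwich integral of `G` against `lumpedSymbol`; it is `lumped` when `G` is the transform of
the data, and differentiation in `x`, `z` and `t` multiplies `G` by `-rateX`, `-rateZ` and `p`. -/
noncomputable def lumpedBromwich (a lam α γ δ : ℝ) (G : ℝ → ℂ) (x z t : ℝ) : ℂ :=
  bromwich 1 (fun ξ => G ξ * lumpedSymbol a lam α γ x z (vline 1 ξ ^ (δ : ℂ))) t

section Symbol

variable {a α δ : ℝ} {G : ℝ → ℂ}

theorem rateX_sq_add (a lam α γ : ℝ) (q : ℂ) :
    rateX a lam α γ q ^ 2 + 2 * γ * rateX a lam α γ q = q + α * rateZ a lam q :=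
  passageRate_sq_add γ _

theorem re_le_re_add_mul_rateZ (ha : 0 < a) (lam : ℝ) (hα : 0 ≤ α) {q : ℂ} (hq : 0 ≤ q.re) :
    q.re ≤ (q + α * rateZ a lam q).re := by
  rw [Complex.add_re, Complex.re_ofReal_mul]
  exact le_add_of_nonneg_right (mul_nonneg hα (re_rateZ_nonneg ha lam hq))

theorem hasPolynomialGrowth_rateZ (hδ₀ : 0 < δ) (hδ₁ : δ < 1) (a lam : ℝ) :
    HasPolynomialGrowth fun ξ => rateZ a lam (vline 1 ξ ^ (δ : ℂ)) := by
  simpa only [rateZ, div_eq_inv_mul] using ((HasPolynomialGrowth.vline_one_cpow hδ₀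
    hδ₁).passageRate_comp (lam / (2 * a))).const_mul (a : ℂ)⁻¹

theorem hasPolynomialGrowth_exp_neg_rateZ_mul (ha : 0 < a) (hδ₀ : 0 < δ) (hδ₁ : δ < 1)
    (lam : ℝ) {z : ℝ} (hz : 0 ≤ z) :
    HasPolynomialGrowth fun ξ => Complex.exp (-rateZ a lam (vline 1 ξ ^ (δ : ℂ)) * z) := by
  refine .of_norm_le (C := 1) (Complex.measurable_exp.comp
    ((hasPolynomialGrowth_rateZ hδ₀ hδ₁ a lam).1.neg.mul_const _)) fun ξ => ?_
  rw [Complex.norm_exp, Complex.re_mul_ofReal, Complex.neg_re, exp_le_one_iff]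
  nlinarith [re_rateZ_nonneg ha lam (re_vline_cpow_nonneg hδ₀ hδ₁ ξ)]

theorem hasPolynomialGrowth_rateX (hδ₀ : 0 < δ) (hδ₁ : δ < 1) (a lam α γ : ℝ) :
    HasPolynomialGrowth fun ξ => rateX a lam α γ (vline 1 ξ ^ (δ : ℂ)) :=
  ((HasPolynomialGrowth.vline_one_cpow hδ₀ hδ₁).add
    ((hasPolynomialGrowth_rateZ hδ₀ hδ₁ a lam).const_mul α)).passageRate_comp γ

theorem sqrt_cos_mul_norm_rpow_le_sqrt_re_cpow (hδ₀ : 0 < δ) (hδ₁ : δ < 1) {p : ℂ}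
    (hp : 0 ≤ p.re) :
    √(cos (δ * (π / 2))) * ‖p‖ ^ (δ / 2) ≤ √(p ^ (δ : ℂ)).re := by
  have hsqrt : ‖p‖ ^ (δ / 2) = √(‖p‖ ^ δ) := by
    rw [sqrt_eq_rpow, ← rpow_mul (norm_nonneg p), div_eq_mul_one_div]
  rw [hsqrt, ← sqrt_mul (cos_mul_pi_div_two_pos hδ₀ hδ₁).le]
  exact sqrt_le_sqrt (norm_rpow_mul_cos_le_re_cpow hδ₀ hδ₁ hp)

theorem exists_norm_rpow_sub_le_rates (ha : 0 < a) (hα : 0 ≤ α) (hδ₀ : 0 < δ) (hδ₁ : δ < 1)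
    (lam γ : ℝ) : ∃ κ > 0, ∃ C, ∀ ξ,
      κ * ‖vline 1 ξ‖ ^ (δ / 2) - C ≤ √(γ ^ 2 + (vline 1 ξ ^ (δ : ℂ) +
        α * rateZ a lam (vline 1 ξ ^ (δ : ℂ))).re) - γ ∧
      κ * ‖vline 1 ξ‖ ^ (δ / 2) - C ≤ (rateZ a lam (vline 1 ξ ^ (δ : ℂ))).re := by
  set c := √(cos (δ * (π / 2)))
  have hc : 0 < c := sqrt_pos.2 (cos_mul_pi_div_two_pos hδ₀ hδ₁)
  refine ⟨min c (c / a), lt_min hc (div_pos hc ha), max |γ| (|lam / (2 * a)| / a), fun ξ => ?_⟩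
  set q := vline 1 ξ ^ (δ : ℂ)
  have hq : 0 ≤ q.re := re_vline_cpow_nonneg hδ₀ hδ₁ ξ
  have hsqrt : c * ‖vline 1 ξ‖ ^ (δ / 2) ≤ √q.re :=
    sqrt_cos_mul_norm_rpow_le_sqrt_re_cpow hδ₀ hδ₁ (re_vline_nonneg zero_le_one ξ)
  have hnorm : 0 ≤ ‖vline 1 ξ‖ ^ (δ / 2) := by positivity
  constructor
  · have hle : √q.re ≤ √(γ ^ 2 + (q + α * rateZ a lam q).re) :=
      sqrt_le_sqrt (by nlinarith [re_le_re_add_mul_rateZ ha lam hα hq])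
    nlinarith [mul_le_mul_of_nonneg_right (min_le_left c (c / a)) hnorm, le_abs_self γ,
      le_max_left |γ| (|lam / (2 * a)| / a)]
  · have hrate := div_le_div_of_nonneg_right
      (sqrt_re_sub_abs_le_re_passageRate (lam / (2 * a)) q) ha.le
    have hdiv := div_le_div_of_nonneg_right hsqrt ha.le
    rw [sub_div] at hrate
    rw [mul_div_right_comm] at hdiv
    rw [re_rateZ]
    linarith [mul_le_mul_of_nonneg_right (min_le_right c (c / a)) hnorm,
      le_max_right |γ| (|lam / (2 * a)| / a)]

theorem lumpedSymbol_eq_exp_neg (a lam α γ x z : ℝ) (q : ℂ) :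
    lumpedSymbol a lam α γ x z q =
      Complex.exp (-(rateX a lam α γ q * x + rateZ a lam q * z)) := by
  rw [lumpedSymbol, ← Complex.exp_add]
  ring_nf

theorem exists_norm_rpow_sub_le_re_symbol_exponent (ha : 0 < a) (hα : 0 ≤ α) (hδ₀ : 0 < δ)
    (hδ₁ : δ < 1) (lam γ : ℝ) : ∃ κ > 0, ∃ C, ∀ x z : ℝ, 0 ≤ x → 0 ≤ z → ∀ ξ,
      (κ * ‖vline 1 ξ‖ ^ (δ / 2) - C) * (x + z) ≤
        (rateX a lam α γ (vline 1 ξ ^ (δ : ℂ)) * x + rateZ a lam (vline 1 ξ ^ (δ : ℂ)) * z).re := by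
  obtain ⟨κ, hκ, C, hC⟩ := exists_norm_rpow_sub_le_rates ha hα hδ₀ hδ₁ lam γ
  refine ⟨κ, hκ, C, fun x z hx hz ξ => ?_⟩
  obtain ⟨hX, hZ⟩ := hC ξ
  rw [Complex.add_re, Complex.re_mul_ofReal, Complex.re_mul_ofReal, mul_add]
  exact add_le_add
    (mul_le_mul_of_nonneg_right (hX.trans (sqrt_sub_le_re_passageRate γ _)) hx)
    (mul_le_mul_of_nonneg_right hZ hz)

theorem HasPolynomialGrowth.integrable_mul_lumpedSymbol (hG : HasPolynomialGrowth G)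
    (ha : 0 < a) (hα : 0 ≤ α) (hδ₀ : 0 < δ) (hδ₁ : δ < 1) (lam γ : ℝ) {x z : ℝ} (hx : 0 ≤ x)
    (hz : 0 ≤ z) (hxz : 0 < x + z) :
    Integrable fun ξ => G ξ * lumpedSymbol a lam α γ x z (vline 1 ξ ^ (δ : ℂ)) := by
  obtain ⟨κ, hκ, C, hC⟩ := exists_norm_rpow_sub_le_re_symbol_exponent ha hα hδ₀ hδ₁ lam γ
  simp only [lumpedSymbol_eq_exp_neg]
  refine hG.integrable_mul_exp_neg (κ := κ * (x + z)) (s := δ / 2) (C := C * (x + z))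
    (((hasPolynomialGrowth_rateX hδ₀ hδ₁ a lam α γ).1.mul_const _).add
      ((hasPolynomialGrowth_rateZ hδ₀ hδ₁ a lam).1.mul_const _)) (by positivity) (by positivity)
    fun ξ => ?_
  linarith [hC x z hx hz ξ]

variable {h : ℝ → ℝ}

theorem integrable_prod_lumped (ha : 0 < a) (hα : 0 ≤ α) (hδ₀ : 0 < δ) (hδ₁ : δ < 1)
    (lam γ : ℝ) (hG : HasPolynomialGrowth G) {x : ℝ} (hx : 0 < x) :
    Integrable fun P : ℝ × ℝ => G P.1 * (Complex.exp (-(vline 1 P.1 ^ (δ : ℂ) +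
      α * rateZ a lam (vline 1 P.1 ^ (δ : ℂ))) * P.2) * passageDensity γ x P.2) := by
  obtain ⟨κ, hκ, C, hC⟩ := exists_norm_rpow_sub_le_rates ha hα hδ₀ hδ₁ lam γ
  obtain ⟨hGm, D, n, hD⟩ := hG
  have hq (ξ : ℝ) : 0 ≤ (vline 1 ξ ^ (δ : ℂ) + α * rateZ a lam (vline 1 ξ ^ (δ : ℂ))).re :=
    (re_vline_cpow_nonneg hδ₀ hδ₁ ξ).trans
      (re_le_re_add_mul_rateZ ha lam hα (re_vline_cpow_nonneg hδ₀ hδ₁ ξ))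
  refine integrable_prod_mul_exp_neg_mul (integrable_passageDensity γ x).aestronglyMeasurable
    hGm.aestronglyMeasurable
    (q := fun ξ => vline 1 ξ ^ (δ : ℂ) + α * rateZ a lam (vline 1 ξ ^ (δ : ℂ)))
    ((HasPolynomialGrowth.vline_one_cpow hδ₀ hδ₁).add
      ((hasPolynomialGrowth_rateZ hδ₀ hδ₁ a lam).const_mul α)).1.aestronglyMeasurable
    (fun ξ => integrable_exp_neg_mul_ofReal (integrable_passageDensity γ x)
      (fun _ => passageDensity_of_nonpos γ x) (hq ξ))
    ((integrable_norm_vline_pow_mul_exp (mul_pos hκ hx) (half_pos hδ₀) n).const_mul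
      (D * exp (C * x))) fun ξ => ?_
  rw [integral_norm_exp_neg_mul_passageDensity γ hx (hq ξ)]
  calc ‖G ξ‖ * exp (-(√(γ ^ 2 + (vline 1 ξ ^ (δ : ℂ) +
        α * rateZ a lam (vline 1 ξ ^ (δ : ℂ))).re) - γ) * x)
      ≤ (D * ‖vline 1 ξ‖ ^ n) * exp (C * x + -(κ * x) * ‖vline 1 ξ‖ ^ (δ / 2)) := by
        refine mul_le_mul (hD ξ) (exp_le_exp.2 ?_) (exp_pos _).le ((norm_nonneg _).trans (hD ξ))
        nlinarith [(hC ξ).1]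
    _ = _ := by rw [exp_add]; ring

theorem passageDensity_mul_halfLineBromwich_eq (a lam α γ δ : ℝ) (G : ℝ → ℂ) (x z t τ : ℝ) :
    passageDensity γ x τ * halfLineBromwich a lam δ G τ (z + α * τ) t =
      passageDensity γ x τ * ∫ ξ, Complex.exp (vline 1 ξ * t) *
        (G ξ * Complex.exp (-rateZ a lam (vline 1 ξ ^ (δ : ℂ)) * z)) *
          Complex.exp (-(vline 1 ξ ^ (δ : ℂ) + α * rateZ a lam (vline 1 ξ ^ (δ : ℂ))) * τ) := by
  rw [halfLineBromwich, bromwich]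
  congr 1
  refine integral_congr_ae (Eventually.of_forall fun ξ => ?_)
  simp only [mul_assoc, ← Complex.exp_add]
  push_cast
  ring_nf

theorem HasPolynomialGrowth.exp_mul_mul_exp_rateZ (hG : HasPolynomialGrowth G) (ha : 0 < a)
    (hδ₀ : 0 < δ) (hδ₁ : δ < 1) (lam t : ℝ) {z : ℝ} (hz : 0 ≤ z) :
    HasPolynomialGrowth fun ξ => Complex.exp (vline 1 ξ * t) *
      (G ξ * Complex.exp (-rateZ a lam (vline 1 ξ ^ (δ : ℂ)) * z)) :=
  (HasPolynomialGrowth.exp_vline_mul t).mul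
    (hG.mul (hasPolynomialGrowth_exp_neg_rateZ_mul ha hδ₀ hδ₁ lam hz))

theorem integrable_passageDensity_mul_halfLineBromwich (ha : 0 < a) (hα : 0 ≤ α) (hδ₀ : 0 < δ)
    (hδ₁ : δ < 1) (lam γ : ℝ) (hG : HasPolynomialGrowth G) {x z : ℝ} (hx : 0 < x) (hz : 0 ≤ z)
    (t : ℝ) :
    Integrable fun τ => passageDensity γ x τ * halfLineBromwich a lam δ G τ (z + α * τ) t := by
  simp only [passageDensity_mul_halfLineBromwich_eq]
  exact integrable_mul_integral_exp_neg_mul (integrable_prod_lumped ha hα hδ₀ hδ₁ lam γ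
    (hG.exp_mul_mul_exp_rateZ ha hδ₀ hδ₁ lam t hz) hx)

theorem integral_passageDensity_mul_halfLineBromwich (ha : 0 < a) (hα : 0 ≤ α) (hδ₀ : 0 < δ)
    (hδ₁ : δ < 1) (lam γ : ℝ) (hG : HasPolynomialGrowth G) {x z : ℝ} (hx : 0 < x) (hz : 0 ≤ z)
    (t : ℝ) :
    ∫ τ, passageDensity γ x τ * halfLineBromwich a lam δ G τ (z + α * τ) t =
      lumpedBromwich a lam α γ δ G x z t := by
  simp only [passageDensity_mul_halfLineBromwich_eq]
  rw [integral_mul_integral_exp_neg_mul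
    (q := fun ξ => vline 1 ξ ^ (δ : ℂ) + α * rateZ a lam (vline 1 ξ ^ (δ : ℂ)))
    (integrable_prod_lumped ha hα hδ₀ hδ₁ lam γ
      (hG.exp_mul_mul_exp_rateZ ha hδ₀ hδ₁ lam t hz) hx), lumpedBromwich, bromwich]
  refine integral_congr_ae (Eventually.of_forall fun ξ => ?_)
  have hq := re_vline_cpow_nonneg hδ₀ hδ₁ ξ
  simp only [lumpedSymbol, rateX]
  rw [laplace_passageDensity γ hx (hq.trans (re_le_re_add_mul_rateZ ha lam hα hq))]
  ring

theorem lumped_eq_lumpedBromwich (ha : 0 < a) (hα : 0 < α) (hδ₀ : 0 < δ) (hδ₁ : δ < 1)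
    (lam γ : ℝ) (hh : Integrable h) (hneg : ∀ r ≤ 0, h r = 0) {x z : ℝ} (hx : 0 < x) (hz : 0 ≤ z)
    (t : ℝ) : (lumped a lam α γ δ h x z t : ℂ) =
      lumpedBromwich a lam α γ δ (fun ξ => laplace h (vline 1 ξ)) x z t := by
  rw [lumped, ← integral_complex_ofReal, ← integral_passageDensity_mul_halfLineBromwich ha hα.le
    hδ₀ hδ₁ lam γ (HasPolynomialGrowth.laplace_vline hh hneg) hx hz t]
  refine integral_congr_ae (Eventually.of_forall fun τ => ?_)
  rcases le_or_gt τ 0 with hτ | hτ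
  · simp [passageDensity_of_nonpos γ x hτ]
  simp only [Complex.ofReal_mul, halfLineAverage_eq_halfLineBromwich hδ₀ hδ₁ hh hneg ha lam hτ
    (by positivity : 0 < z + α * τ)]

end Symbol

theorem norm_cexp_mul_le_add_of_mem_Icc (b : ℂ) {s l r : ℝ} (hs : s ∈ Icc l r) :
    ‖Complex.exp (b * s)‖ ≤ ‖Complex.exp (b * l)‖ + ‖Complex.exp (b * r)‖ := by
  simp only [Complex.norm_exp, Complex.re_mul_ofReal]
  rcases le_total 0 b.re with hb | hb
  · exact le_add_of_nonneg_of_le (exp_pos _).le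
      (exp_le_exp.2 (mul_le_mul_of_nonneg_left hs.2 hb))
  · exact le_add_of_le_of_nonneg (exp_le_exp.2 (mul_le_mul_of_nonpos_left hs.1 hb))
      (exp_pos _).le

theorem cexp_mul_ofReal_eq_mul_cexp_sub (b : ℂ) (s s₀ : ℝ) :
    Complex.exp (b * s) = Complex.exp (b * s₀) * Complex.exp (b * (s - s₀ : ℝ)) := by
  rw [← Complex.exp_add, ← mul_add, ← Complex.ofReal_add, add_sub_cancel]

theorem hasDerivAt_integral_of_eq_mul_cexp {Ω : Type*} [MeasurableSpace Ω] {μ : Measure Ω}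
    {Φ : ℝ → Ω → ℂ} {b : Ω → ℂ} {s₀ : ℝ}
    (hΦ : ∀ s ω, Φ s ω = Φ s₀ ω * Complex.exp (b ω * (s - s₀ : ℝ)))
    (hb : AEStronglyMeasurable b μ) (hint : Integrable (Φ s₀) μ)
    (hint' : ∀ᶠ s in nhds s₀, Integrable (fun ω => b ω * Φ s ω) μ) :
    HasDerivAt (fun s => ∫ ω, Φ s ω ∂μ) (∫ ω, b ω * Φ s₀ ω ∂μ) s₀ := by
  obtain ⟨ε, hε, hball⟩ := Metric.eventually_nhds_iff_ball.1 hint'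
  have hend (σ : ℝ) (hσ : |σ| < ε) : Integrable (fun ω => b ω * Φ (s₀ + σ) ω) μ :=
    hball _ (by simpa [Real.dist_eq] using hσ)
  have hl := hend (-(ε / 2)) (by rw [abs_neg, abs_of_pos (half_pos hε)]; linarith)
  have hr := hend (ε / 2) (by rw [abs_of_pos (half_pos hε)]; linarith)
  refine (hasDerivAt_integral_of_dominated_loc_of_deriv_le
    (bound := fun ω => ‖b ω * Φ (s₀ + -(ε / 2)) ω‖ + ‖b ω * Φ (s₀ + ε / 2) ω‖)
    (F' := fun s ω => b ω * Φ s ω)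
    (Icc_mem_nhds (by linarith : s₀ + -(ε / 2) < s₀) (by linarith : s₀ < s₀ + ε / 2))
    (Eventually.of_forall fun s => ?_) hint hint'.self_of_nhds.aestronglyMeasurable
    (Eventually.of_forall fun ω s hs => ?_) (hl.norm.add hr.norm)
    (Eventually.of_forall fun ω s _ => ?_)).2
  · rw [funext (hΦ s)]
    exact hint.1.mul (Complex.continuous_exp.comp_aestronglyMeasurable (hb.mul_const _))
  · have hs' : s - s₀ ∈ Icc (-(ε / 2)) (ε / 2) := ⟨by linarith [hs.1], by linarith [hs.2]⟩
    rw [hΦ s, hΦ (s₀ + _), hΦ (s₀ + _), add_sub_cancel_left, add_sub_cancel_left]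
    simp only [norm_mul, ← mul_add]
    gcongr
    exact norm_cexp_mul_le_add_of_mem_Icc (b ω) hs'
  · have hlin : HasDerivAt (fun s : ℝ => b ω * (s - s₀ : ℝ)) (b ω) s := by
      simpa using (((hasDerivAt_id s).sub_const s₀).ofReal_comp).const_mul (b ω)
    rw [funext fun s => hΦ s ω, hΦ s]
    exact (hlin.cexp.const_mul (Φ s₀ ω)).congr_deriv (by ring)

theorem hasDerivAt_of_eventuallyEq_ofReal {f : ℝ → ℝ} {F : ℝ → ℂ} {F' : ℂ} {s : ℝ}
    (hF : HasDerivAt F F' s) (hf : (fun s => (f s : ℂ)) =ᶠ[nhds s] F) :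
    HasDerivAt f F'.re s ∧ (F'.re : ℂ) = F' := by
  have hre : HasDerivAt f F'.re s :=
    (Complex.reCLM.hasFDerivAt.comp_hasDerivAt s hF).congr_of_eventuallyEq
      (hf.mono fun s hs => by simp [← hs])
  exact ⟨hre, hre.ofReal_comp.unique (hF.congr_of_eventuallyEq hf)⟩

theorem ofReal_deriv_eq {f : ℝ → ℝ} {F : ℝ → ℂ} {F' : ℂ} {s : ℝ} (hF : HasDerivAt F F' s)
    (hf : (fun s => (f s : ℂ)) =ᶠ[nhds s] F) : ((deriv f s : ℝ) : ℂ) = F' := by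
  obtain ⟨hderiv, hreal⟩ := hasDerivAt_of_eventuallyEq_ofReal hF hf
  rw [hderiv.deriv, hreal]

section LumpedBromwich

variable {a α δ x z : ℝ} {F G : ℝ → ℂ}

theorem HasPolynomialGrowth.integrable_lumpedBromwich (hG : HasPolynomialGrowth G) (ha : 0 < a)
    (hα : 0 ≤ α) (hδ₀ : 0 < δ) (hδ₁ : δ < 1) (lam γ : ℝ) (hx : 0 < x) (hz : 0 ≤ z) (t : ℝ) :
    Integrable fun ξ => Complex.exp (vline 1 ξ * t) *
      (G ξ * lumpedSymbol a lam α γ x z (vline 1 ξ ^ (δ : ℂ))) :=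
  integrable_exp_vline_mul_mul
    (hG.integrable_mul_lumpedSymbol ha hα hδ₀ hδ₁ lam γ hx.le hz (by linarith)) 1 t

theorem lumpedBromwich_const_mul (a lam α γ δ : ℝ) (c : ℂ) (G : ℝ → ℂ) (x z t : ℝ) :
    lumpedBromwich a lam α γ δ (fun ξ => c * G ξ) x z t =
      c * lumpedBromwich a lam α γ δ G x z t := by
  simp only [lumpedBromwich, bromwich, ← integral_const_mul]
  exact integral_congr_ae (Eventually.of_forall fun ξ => by ring)

theorem lumpedBromwich_add (ha : 0 < a) (hα : 0 ≤ α) (hδ₀ : 0 < δ) (hδ₁ : δ < 1) (lam γ : ℝ)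
    (hF : HasPolynomialGrowth F) (hG : HasPolynomialGrowth G) (hx : 0 < x) (hz : 0 ≤ z) (t : ℝ) :
    lumpedBromwich a lam α γ δ (fun ξ => F ξ + G ξ) x z t =
      lumpedBromwich a lam α γ δ F x z t + lumpedBromwich a lam α γ δ G x z t := by
  simp only [lumpedBromwich, bromwich]
  rw [← integral_add (hF.integrable_lumpedBromwich ha hα hδ₀ hδ₁ lam γ hx hz t)
    (hG.integrable_lumpedBromwich ha hα hδ₀ hδ₁ lam γ hx hz t)]
  exact integral_congr_ae (Eventually.of_forall fun ξ => by ring)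

theorem hasDerivAt_lumpedBromwich_x (ha : 0 < a) (hα : 0 ≤ α) (hδ₀ : 0 < δ) (hδ₁ : δ < 1)
    (lam γ : ℝ) (hG : HasPolynomialGrowth G) (hx : 0 < x) (hz : 0 ≤ z) (t : ℝ) :
    HasDerivAt (fun x => lumpedBromwich a lam α γ δ G x z t)
      (lumpedBromwich a lam α γ δ
        (fun ξ => -rateX a lam α γ (vline 1 ξ ^ (δ : ℂ)) * G ξ) x z t) x := by
  have hX := (hasPolynomialGrowth_rateX hδ₀ hδ₁ a lam α γ).const_mul (-1)
  simp only [neg_one_mul] at hX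
  simp only [lumpedBromwich, bromwich, mul_assoc (-rateX a lam α γ _),
    mul_left_comm _ (-rateX a lam α γ _)]
  refine hasDerivAt_integral_of_eq_mul_cexp (fun s ξ => ?_) hX.1.aestronglyMeasurable
    (hG.integrable_lumpedBromwich ha hα hδ₀ hδ₁ lam γ hx hz t)
    ((eventually_gt_nhds hx).mono fun s hs => ?_)
  · rw [lumpedSymbol, cexp_mul_ofReal_eq_mul_cexp_sub (-rateX _ _ _ _ _) s x, lumpedSymbol]
    ring
  · exact ((hX.mul hG).integrable_lumpedBromwich ha hα hδ₀ hδ₁ lam γ hs hz t).congr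
      (Eventually.of_forall fun ξ => by ring)

theorem hasDerivAt_lumpedBromwich_z (ha : 0 < a) (hα : 0 ≤ α) (hδ₀ : 0 < δ) (hδ₁ : δ < 1)
    (lam γ : ℝ) (hG : HasPolynomialGrowth G) (hx : 0 < x) (hz : 0 < z) (t : ℝ) :
    HasDerivAt (fun z => lumpedBromwich a lam α γ δ G x z t)
      (lumpedBromwich a lam α γ δ
        (fun ξ => -rateZ a lam (vline 1 ξ ^ (δ : ℂ)) * G ξ) x z t) z := by
  have hZ := (hasPolynomialGrowth_rateZ hδ₀ hδ₁ a lam).const_mul (-1)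
  simp only [neg_one_mul] at hZ
  simp only [lumpedBromwich, bromwich, mul_assoc (-rateZ a lam _),
    mul_left_comm _ (-rateZ a lam _)]
  refine hasDerivAt_integral_of_eq_mul_cexp (fun s ξ => ?_) hZ.1.aestronglyMeasurable
    (hG.integrable_lumpedBromwich ha hα hδ₀ hδ₁ lam γ hx hz.le t)
    ((eventually_gt_nhds hz).mono fun s hs => ?_)
  · rw [lumpedSymbol, cexp_mul_ofReal_eq_mul_cexp_sub (-rateZ _ _ _) s z, lumpedSymbol]
    ring
  · exact ((hZ.mul hG).integrable_lumpedBromwich ha hα hδ₀ hδ₁ lam γ hx hs.le t).congr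
      (Eventually.of_forall fun ξ => by ring)

end LumpedBromwich

section HalfLineBromwich

variable {a δ τ y : ℝ} {G : ℝ → ℂ}

theorem HasPolynomialGrowth.integrable_mul_exp_neg_mul_cpow (hG : HasPolynomialGrowth G)
    (hδ₀ : 0 < δ) (hδ₁ : δ < 1) (hτ : 0 < τ) :
    Integrable fun ξ => G ξ * Complex.exp (-τ * vline 1 ξ ^ (δ : ℂ)) := by
  simp only [neg_mul]
  refine hG.integrable_mul_exp_neg (κ := τ * cos (δ * (π / 2))) (s := δ) (C := 0)
    ((HasPolynomialGrowth.vline_one_cpow hδ₀ hδ₁).1.const_mul _)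
    (mul_pos hτ (cos_mul_pi_div_two_pos hδ₀ hδ₁)) hδ₀ fun ξ => ?_
  rw [sub_zero, Complex.re_ofReal_mul, mul_assoc]
  exact mul_le_mul_of_nonneg_left
    (norm_rpow_mul_cos_le_re_cpow hδ₀ hδ₁ (re_vline_nonneg zero_le_one ξ)) hτ.le

theorem HasPolynomialGrowth.integrable_halfLineBromwich (hG : HasPolynomialGrowth G) (ha : 0 < a)
    (hδ₀ : 0 < δ) (hδ₁ : δ < 1) (lam : ℝ) (hτ : 0 < τ) (hy : 0 ≤ y) (t : ℝ) :
    Integrable fun ξ => Complex.exp (vline 1 ξ * t) *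
      (G ξ * (Complex.exp (-rateZ a lam (vline 1 ξ ^ (δ : ℂ)) * y) *
        Complex.exp (-τ * vline 1 ξ ^ (δ : ℂ)))) := by
  simp only [← mul_assoc (G _)]
  exact integrable_exp_vline_mul_mul
    ((hG.mul (hasPolynomialGrowth_exp_neg_rateZ_mul ha hδ₀ hδ₁ lam
      hy)).integrable_mul_exp_neg_mul_cpow hδ₀ hδ₁ hτ) 1 t

theorem hasDerivAt_halfLineBromwich (ha : 0 < a) (hδ₀ : 0 < δ) (hδ₁ : δ < 1) (lam : ℝ)
    (hG : HasPolynomialGrowth G) (hτ : 0 < τ) (hy : 0 < y) (t : ℝ) :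
    HasDerivAt (fun y => halfLineBromwich a lam δ G τ y t)
      (halfLineBromwich a lam δ (fun ξ => -rateZ a lam (vline 1 ξ ^ (δ : ℂ)) * G ξ) τ y t) y := by
  have hZ := (hasPolynomialGrowth_rateZ hδ₀ hδ₁ a lam).const_mul (-1)
  simp only [neg_one_mul] at hZ
  simp only [halfLineBromwich, bromwich, mul_assoc (-rateZ a lam _),
    mul_left_comm _ (-rateZ a lam _)]
  refine hasDerivAt_integral_of_eq_mul_cexp (fun s ξ => ?_) hZ.1.aestronglyMeasurable
    (hG.integrable_halfLineBromwich ha hδ₀ hδ₁ lam hτ hy.le t)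
    ((eventually_gt_nhds hy).mono fun s hs => ?_)
  · rw [cexp_mul_ofReal_eq_mul_cexp_sub (-rateZ _ _ _) s y]
    ring
  · exact ((hZ.mul hG).integrable_halfLineBromwich ha hδ₀ hδ₁ lam hτ hs.le t).congr
      (Eventually.of_forall fun ξ => by ring)

theorem norm_halfLineBromwich_le (ha : 0 < a) (hδ₀ : 0 < δ) (hδ₁ : δ < 1) (lam : ℝ)
    (hG : HasPolynomialGrowth G) (hτ : 0 < τ) (hy : 0 ≤ y) (t : ℝ) :
    ‖halfLineBromwich a lam δ G τ y t‖ ≤ ∫ ξ, ‖Complex.exp (vline 1 ξ * t) * G ξ *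
      Complex.exp (-τ * vline 1 ξ ^ (δ : ℂ))‖ := by
  have hexpG := (HasPolynomialGrowth.exp_vline_mul t).mul hG
  refine norm_integral_le_of_norm_le
    (hexpG.integrable_mul_exp_neg_mul_cpow hδ₀ hδ₁ hτ).norm (Eventually.of_forall fun ξ => ?_)
  have hle : ‖Complex.exp (-rateZ a lam (vline 1 ξ ^ (δ : ℂ)) * y)‖ ≤ 1 := by
    rw [Complex.norm_exp, exp_le_one_iff, Complex.re_mul_ofReal, Complex.neg_re]
    have hre := re_rateZ_nonneg ha lam (re_vline_cpow_nonneg hδ₀ hδ₁ ξ)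
    exact mul_nonpos_of_nonpos_of_nonneg (neg_nonpos.2 hre) hy
  simp only [norm_mul, mul_assoc]
  gcongr
  exact mul_le_of_le_one_left (norm_nonneg _) hle

theorem norm_halfLineBromwich_sub_le (ha : 0 < a) (hδ₀ : 0 < δ) (hδ₁ : δ < 1) (lam : ℝ)
    (hG : HasPolynomialGrowth G) (hτ : 0 < τ) {y₁ y₂ : ℝ} (hy₁ : 0 < y₁) (hy₂ : 0 < y₂) (t : ℝ) :
    ‖halfLineBromwich a lam δ G τ y₂ t - halfLineBromwich a lam δ G τ y₁ t‖ ≤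
      (∫ ξ, ‖Complex.exp (vline 1 ξ * t) * (-rateZ a lam (vline 1 ξ ^ (δ : ℂ)) * G ξ) *
        Complex.exp (-τ * vline 1 ξ ^ (δ : ℂ))‖) * |y₂ - y₁| := by
  have hZ := (hasPolynomialGrowth_rateZ hδ₀ hδ₁ a lam).const_mul (-1)
  simp only [neg_one_mul] at hZ
  exact (convex_Ioi (0 : ℝ)).norm_image_sub_le_of_norm_hasDerivWithin_le
    (f := fun y => halfLineBromwich a lam δ G τ y t)
    (fun y hy => (hasDerivAt_halfLineBromwich ha hδ₀ hδ₁ lam hG hτ hy t).hasDerivWithinAt)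
    (fun y hy => norm_halfLineBromwich_le ha hδ₀ hδ₁ lam (hZ.mul hG) hτ (le_of_lt hy) t) hy₁ hy₂

theorem HasPolynomialGrowth.integrable_passageDensity_mul_integral_norm
    (hG : HasPolynomialGrowth G) (hδ₀ : 0 < δ) (hδ₁ : δ < 1) (γ : ℝ) {x : ℝ} (hx : 0 < x) :
    Integrable fun τ : ℝ => passageDensity γ x τ *
      ∫ ξ, ‖G ξ * Complex.exp (-τ * vline 1 ξ ^ (δ : ℂ))‖ := by
  refine (integrable_prod_lumped one_pos le_rfl hδ₀ hδ₁ 0 γ hG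
    hx).norm.integral_prod_right.congr (Eventually.of_forall fun τ => ?_)
  simp only [← integral_const_mul]
  refine integral_congr_ae (Eventually.of_forall fun ξ => ?_)
  simp only [Complex.ofReal_zero, zero_mul, add_zero, norm_mul, Complex.norm_real,
    Real.norm_of_nonneg (passageDensity_nonneg γ hx.le τ), neg_mul, mul_comm (τ : ℂ)]
  ring

end HalfLineBromwich

section PassageDensityDiv

variable {b y w : ℝ}

theorem exp_neg_div_le {c : ℝ} (hc : 0 < c) (hw : 0 < w) : exp (-(c / w)) / w ≤ 1 / c := by
  rw [exp_neg, ← one_div, div_div, one_div_le_one_div (by positivity) hc]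
  calc c = c / w * w := by field_simp
    _ ≤ exp (c / w) * w := by
      gcongr
      linarith [add_one_le_exp (c / w)]

theorem passageDensity_div_self_le (b : ℝ) (hy : 0 < y) (w : ℝ) : passageDensity b y w / w ≤
    exp (b * y) * (8 * √2 / y ^ 2) * passageDensity 0 (y / √2) w := by
  rcases le_or_gt w 0 with hw | hw
  · simp [passageDensity_of_nonpos _ _ hw]
  set g := exp (-(y ^ 2 / 8 / w)) with hg
  have hexp : exp (b * y - b ^ 2 * w - y ^ 2 / (4 * w)) ≤ exp (b * y) * g * g := by
    rw [hg, ← exp_add, ← exp_add, exp_le_exp]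
    have hhalves : y ^ 2 / (4 * w) = y ^ 2 / 8 / w + y ^ 2 / 8 / w := by field_simp; norm_num
    nlinarith [mul_nonneg (sq_nonneg b) hw.le]
  have hdriftless : passageDensity 0 (y / √2) w =
      y / (2 * √π) * w ^ (-(3 / 2 : ℝ)) * g / √2 := by
    rw [passageDensity_of_pos _ _ hw, div_pow, sq_sqrt zero_le_two, hg,
      show (0 : ℝ) * (y / √2) - 0 ^ 2 * w - y ^ 2 / 2 / (4 * w) = -(y ^ 2 / 8 / w) by
        ring]
    ring
  calc passageDensity b y w / w
      ≤ y / (2 * √π) * w ^ (-(3 / 2 : ℝ)) * (exp (b * y) * g * g) / w := by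
        rw [passageDensity_of_pos _ _ hw]
        gcongr
    _ = y / (2 * √π) * w ^ (-(3 / 2 : ℝ)) * (exp (b * y) * g) * (g / w) := by ring
    _ ≤ y / (2 * √π) * w ^ (-(3 / 2 : ℝ)) * (exp (b * y) * g) * (1 / (y ^ 2 / 8)) := by
        exact mul_le_mul_of_nonneg_left (exp_neg_div_le (by positivity) hw) (by positivity)
    _ = _ := by
        rw [hdriftless]
        field_simp

theorem integrable_passageDensity_div_self (b : ℝ) (hy : 0 < y) :
    Integrable fun w => passageDensity b y w / w := by
  refine ((integrable_passageDensity 0 (y / √2)).const_mul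
    (exp (b * y) * (8 * √2 / y ^ 2))).mono'
    ((integrable_passageDensity b y).1.mul measurable_inv.aestronglyMeasurable)
    (Eventually.of_forall fun w => ?_)
  rcases le_or_gt w 0 with hw | hw
  · simp [passageDensity_of_nonpos _ _ hw]
  rw [Real.norm_of_nonneg (div_nonneg (passageDensity_nonneg b hy.le w) hw.le)]
  exact passageDensity_div_self_le b hy w

end PassageDensityDiv

section BoundaryDerivative

theorem hasDerivAt_integral_of_dominated_of_lip_at {Ω : Type*} [MeasurableSpace Ω]
    {μ : Measure Ω} {F : ℝ → Ω → ℂ} {F' : Ω → ℂ} {bound : Ω → ℝ} {s : Set ℝ} {x₀ : ℝ}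
    (hs : s ∈ nhds x₀) (hF : ∀ x ∈ s, AEStronglyMeasurable (F x) μ) (hint : Integrable (F x₀) μ)
    (hF' : AEStronglyMeasurable F' μ)
    (hlip : ∀ᵐ ω ∂μ, ∀ x ∈ s, ‖F x ω - F x₀ ω‖ ≤ bound ω * ‖x - x₀‖) (hbound : Integrable bound μ)
    (hderiv : ∀ᵐ ω ∂μ, HasDerivAt (F · ω) (F' ω) x₀) :
    HasDerivAt (fun x => ∫ ω, F x ω ∂μ) (∫ ω, F' ω ∂μ) x₀ := by
  let L : ℂ →L[ℝ] ℝ →L[ℝ] ℂ := ContinuousLinearMap.smulRightL ℝ ℝ ℂ 1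
  obtain ⟨hL, hfderiv⟩ := hasFDerivAt_integral_of_dominated_loc_of_lip' (F' := fun ω => L (F' ω))
    hs hF hint (L.continuous.comp_aestronglyMeasurable hF') hlip hbound
    (hderiv.mono fun _ hω => hω.hasFDerivAt)
  have happly := hfderiv.hasDerivAt
  rw [ContinuousLinearMap.integral_apply hL] at happly
  simpa [L] using happly

/- Below the level `y = 0` the function `φ` may change its analytic form; there `1 ≤ |z| / y₀`. -/
theorem norm_sub_le_mul_abs_of_lipschitz {φ : ℝ → ℂ} {y₀ z K M : ℝ} (hy₀ : 0 < y₀)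
    (hM : ∀ y > -1, ‖φ y‖ ≤ M) (hlip : ∀ y₁ > 0, ∀ y₂ > 0, ‖φ y₂ - φ y₁‖ ≤ K * |y₂ - y₁|)
    (hz : z ∈ Ioi (-1 : ℝ)) : ‖φ (z + y₀) - φ (0 + y₀)‖ ≤ (K + 2 * M / y₀) * |z| := by
  have hM₀ : 0 ≤ M := (norm_nonneg _).trans (hM 0 (by norm_num))
  have hK : 0 ≤ K := by
    have hle := (norm_nonneg _).trans (hlip 1 one_pos 2 two_pos)
    norm_num at hle
    exact hle
  rcases lt_or_ge 0 (z + y₀) with hy | hy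
  · refine (hlip _ (by linarith) _ hy).trans ?_
    rw [add_sub_add_right_eq_sub, sub_zero]
    gcongr
    exact le_add_of_nonneg_right (by positivity)
  · have hfar : 1 ≤ |z| / y₀ := (one_le_div hy₀).2 (by linarith [neg_abs_le z])
    calc ‖φ (z + y₀) - φ (0 + y₀)‖ ≤ M + M :=
          norm_sub_le_of_le (hM _ (by linarith [mem_Ioi.1 hz])) (hM _ (by linarith))
      _ ≤ 2 * M * (|z| / y₀) := by nlinarith
      _ ≤ (K + 2 * M / y₀) * |z| := by
          rw [add_mul, div_mul_eq_mul_div, mul_div_assoc]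
          exact le_add_of_nonneg_left (by positivity)

theorem hasDerivAt_integral_passageDensity_mul_zero {α x M : ℝ} (hα : 0 < α) (γ : ℝ) (hx : 0 < x)
    {Φ : ℝ → ℝ → ℂ} {Φ' : ℝ → ℂ} {Ψ : ℝ → ℝ}
    (hmeas : ∀ z, AEStronglyMeasurable fun τ => passageDensity γ x τ * Φ τ (z + α * τ))
    (hmeas' : AEStronglyMeasurable fun τ => passageDensity γ x τ * Φ' τ)
    (hM : ∀ τ > 0, ∀ y > -1, ‖Φ τ y‖ ≤ M)
    (hlip : ∀ τ > 0, ∀ y₁ > 0, ∀ y₂ > 0, ‖Φ τ y₂ - Φ τ y₁‖ ≤ Ψ τ * |y₂ - y₁|)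
    (hΨ : Integrable fun τ => passageDensity γ x τ * Ψ τ)
    (hderiv : ∀ τ > 0, HasDerivAt (Φ τ) (Φ' τ) (α * τ)) :
    HasDerivAt (fun z => ∫ τ, passageDensity γ x τ * Φ τ (z + α * τ))
      (∫ τ, passageDensity γ x τ * Φ' τ) 0 := by
  have hpd := passageDensity_nonneg γ hx.le
  refine hasDerivAt_integral_of_dominated_of_lip_at
    (bound := fun τ => passageDensity γ x τ * Ψ τ + passageDensity γ x τ / τ * (2 * M / α))
    (Ioi_mem_nhds (by norm_num : (-1 : ℝ) < 0)) (fun z _ => hmeas z)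
    (((integrable_passageDensity γ x).mul_const M).mono' (hmeas 0)
      (Eventually.of_forall fun τ => ?_)) hmeas'
    (Eventually.of_forall fun τ z hz => ?_)
    (hΨ.add ((integrable_passageDensity_div_self γ hx).mul_const _))
    (Eventually.of_forall fun τ => ?_)
  all_goals
    rcases le_or_gt τ 0 with hτ | hτ
    · simp [passageDensity_of_nonpos γ x hτ, hasDerivAt_const]
  · rw [norm_mul, Complex.norm_real, Real.norm_of_nonneg (hpd τ)]
    gcongr
    · exact hpd τ
    · exact hM τ hτ _ (by nlinarith)
  · rw [← mul_sub, norm_mul, Complex.norm_real, Real.norm_of_nonneg (hpd τ), sub_zero]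
    have hbound := norm_sub_le_mul_abs_of_lipschitz (mul_pos hα hτ) (hM τ hτ) (hlip τ hτ) hz
    refine (mul_le_mul_of_nonneg_left hbound (hpd τ)).trans_eq ?_
    rw [Real.norm_eq_abs]
    field_simp
  · refine HasDerivAt.const_mul _ ?_
    simpa using HasDerivAt.comp_add_const (0 : ℝ) (α * τ) (by simpa using hderiv τ hτ)

variable {a α δ x B : ℝ} {h : ℝ → ℝ}

theorem measurable_subordinate (hδ₀ : 0 < δ) (hδ₁ : δ < 1) (hh : AEStronglyMeasurable h) (t : ℝ) :
    Measurable fun σ => if 0 < σ then subordinate δ h σ t else 0 := by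
  have hkernel : Measurable fun p : ℝ × ℝ =>
      hh.mk h p.2 * if 0 < p.1 then stableKernel δ p.1 (t - p.2) else 0 :=
    (hh.stronglyMeasurable_mk.measurable.comp measurable_snd).mul
      ((measurable_stableKernel hδ₀ hδ₁).comp
        (by fun_prop : Measurable fun p : ℝ × ℝ => (p.1, t - p.2)))
  convert (hkernel.stronglyMeasurable.integral_prod_right' (ν := volume)).measurable using 2 with σ
  split_ifs with hσ
  · simp only
    exact integral_congr_ae (hh.ae_eq_mk.mul EventuallyEq.rfl)
  · simp

theorem aestronglyMeasurable_passageDensity_mul_halfLineAverage (hδ₀ : 0 < δ) (hδ₁ : δ < 1)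
    (hh : AEStronglyMeasurable h) (a lam α γ x z t : ℝ) : AEStronglyMeasurable fun τ =>
      passageDensity γ x τ * halfLineAverage a lam δ h τ (z + α * τ) t := by
  have hweight : Measurable fun p : ℝ × ℝ =>
      passageDensity (lam / (2 * a)) ((z + α * p.1) / a) p.2 :=
    (measurable_passageDensity _).comp
      (by fun_prop : Measurable fun p : ℝ × ℝ => ((z + α * p.1) / a, p.2))
  have hsub : Measurable fun p : ℝ × ℝ =>
      if 0 < p.1 + p.2 then subordinate δ h (p.1 + p.2) t else 0 :=
    (measurable_subordinate hδ₀ hδ₁ hh t).comp (measurable_fst.add measurable_snd)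
  have havg := ((hweight.mul hsub).stronglyMeasurable.integral_prod_right' (ν := volume)).measurable
  refine (((measurable_passageDensity γ).comp
    (measurable_prodMk_left (x := x))).mul havg).aestronglyMeasurable.congr
    (Eventually.of_forall fun τ => ?_)
  rcases le_or_gt τ 0 with hτ | hτ
  · simp [passageDensity_of_nonpos γ x hτ]
  simp only [Pi.mul_apply, Function.comp_apply, halfLineAverage]
  congr 1
  refine integral_congr_ae (Eventually.of_forall fun w => ?_)
  rcases le_or_gt w 0 with hw | hw
  · simp [passageDensity_of_nonpos _ _ hw]
  · simp [add_pos hτ hw]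

theorem abs_halfLineAverage_le_of_neg_one_lt (ha : 0 < a) (hδ₀ : 0 < δ) (hδ₁ : δ < 1)
    (hB : ∀ r, |h r| ≤ B) (lam : ℝ) {τ y : ℝ} (hτ : 0 < τ) (hy : -1 < y) (t : ℝ) :
    |halfLineAverage a lam δ h τ y t| ≤
      (B * ∫ v, |stableKernel δ 1 v|) * exp (2 * |lam / (2 * a)| * (1 / a)) := by
  have hB₀ : 0 ≤ B := (abs_nonneg _).trans (hB 0)
  refine (abs_halfLineAverage_le hδ₀ hδ₁ hτ hB a lam y t).trans
    (mul_le_mul_of_nonneg_left ?_ (by positivity))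
  rcases le_or_gt 0 y with hy₀ | hy₀
  · exact (integral_abs_passageDensity_le_one _ (by positivity)).trans
      (one_le_exp (by positivity))
  · refine (integral_abs_passageDensity_le _ _).trans (exp_le_exp.2 ?_)
    rw [abs_div y a, abs_of_pos ha, abs_of_neg hy₀]
    gcongr
    linarith

theorem hasDerivAt_lumped_z_zero (ha : 0 < a) (hα : 0 < α) (hδ₀ : 0 < δ) (hδ₁ : δ < 1)
    (lam γ : ℝ) (hh : Integrable h) (hneg : ∀ r ≤ 0, h r = 0) (hB : ∀ r, |h r| ≤ B) (hx : 0 < x)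
    (t : ℝ) : HasDerivAt (fun z => (lumped a lam α γ δ h x z t : ℂ))
      (lumpedBromwich a lam α γ δ
        (fun ξ => -rateZ a lam (vline 1 ξ ^ (δ : ℂ)) * laplace h (vline 1 ξ)) x 0 t) 0 := by
  have hG := HasPolynomialGrowth.laplace_vline hh hneg
  have hZG := ((hasPolynomialGrowth_rateZ hδ₀ hδ₁ a lam).const_mul (-1)).mul hG
  simp only [neg_one_mul] at hZG
  have hpos (τ : ℝ) (hτ : 0 < τ) (y : ℝ) (hy : 0 < y) :=
    halfLineAverage_eq_halfLineBromwich hδ₀ hδ₁ hh hneg ha lam hτ hy t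
  simp only [lumped, ← integral_complex_ofReal, Complex.ofReal_mul]
  rw [← integral_passageDensity_mul_halfLineBromwich ha hα.le hδ₀ hδ₁ lam γ hZG hx le_rfl t]
  refine hasDerivAt_integral_passageDensity_mul_zero
    (Φ := fun τ y => (halfLineAverage a lam δ h τ y t : ℂ))
    (M := (B * ∫ v, |stableKernel δ 1 v|) * exp (2 * |lam / (2 * a)| * (1 / a)))
    hα γ hx (fun z => ?_)
    (integrable_passageDensity_mul_halfLineBromwich ha hα.le hδ₀ hδ₁ lam γ hZG hx le_rfl t).1
    (fun τ hτ y hy => ?_) (fun τ hτ y₁ hy₁ y₂ hy₂ => ?_)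
    (((HasPolynomialGrowth.exp_vline_mul t).mul
      hZG).integrable_passageDensity_mul_integral_norm hδ₀ hδ₁ γ hx) (fun τ hτ => ?_)
  · simpa using Complex.continuous_ofReal.comp_aestronglyMeasurable
      (aestronglyMeasurable_passageDensity_mul_halfLineAverage hδ₀ hδ₁ hh.1 a lam α γ x z t)
  · rw [Complex.norm_real]
    exact abs_halfLineAverage_le_of_neg_one_lt ha hδ₀ hδ₁ hB lam hτ hy t
  · simp only [hpos τ hτ _ hy₁, hpos τ hτ _ hy₂]
    exact norm_halfLineBromwich_sub_le ha hδ₀ hδ₁ lam hG hτ hy₁ hy₂ t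
  · rw [zero_add]
    have hατ := mul_pos hα hτ
    exact (hasDerivAt_halfLineBromwich ha hδ₀ hδ₁ lam hG hτ hατ t).congr_of_eventuallyEq
      ((eventually_gt_nhds hατ).mono (hpos τ hτ))

end BoundaryDerivative

section RiemannLiouville

variable {δ : ℝ}

theorem frequently_nhdsNE_ofReal {P : ℂ → Prop} {r : ℝ} (h : ∀ᶠ x : ℝ in nhds r, P x) :
    ∃ᶠ z in nhdsWithin (r : ℂ) {(r : ℂ)}ᶜ, P z := by
  have hto : Tendsto (fun x : ℝ => (x : ℂ)) (nhdsWithin r {r}ᶜ)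
      (nhdsWithin (r : ℂ) {(r : ℂ)}ᶜ) :=
    Complex.continuous_ofReal.continuousWithinAt.tendsto_nhdsWithin fun x hx => by
      simpa using hx
  exact hto.frequently (eventually_nhdsWithin_of_eventually_nhds h).frequently

/-- The Riemann–Liouville kernel `σ^(-δ) / Γ(1 - δ)` on `σ > 0`, extended by zero. Convolution with
it is fractional integration of order `1 - δ`. -/
noncomputable def riemannLiouvilleKernel (δ σ : ℝ) : ℝ :=
  (Ioi 0).indicator (fun σ => σ ^ (-δ) / Real.Gamma (1 - δ)) σ

theorem measurable_riemannLiouvilleKernel (δ : ℝ) : Measurable (riemannLiouvilleKernel δ) :=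
  (by fun_prop : Measurable fun σ : ℝ => σ ^ (-δ) / Real.Gamma (1 - δ)).indicator measurableSet_Ioi

theorem exp_neg_mul_riemannLiouvilleKernel (δ r σ : ℝ) :
    exp (-r * σ) * riemannLiouvilleKernel δ σ = (Ioi 0).indicator
      (fun σ => (Real.Gamma (1 - δ))⁻¹ * (σ ^ (1 - δ - 1) * exp (-(r * σ)))) σ := by
  rw [sub_sub_cancel_left, neg_mul]
  by_cases hσ : σ ∈ Ioi 0
  · simp only [riemannLiouvilleKernel, indicator_of_mem hσ]
    ring
  · simp [riemannLiouvilleKernel, indicator_of_notMem hσ]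

theorem integrable_exp_neg_mul_riemannLiouvilleKernel (hδ : δ < 1) {r : ℝ} (hr : 0 < r) :
    Integrable fun σ => exp (-r * σ) * riemannLiouvilleKernel δ σ := by
  simp only [exp_neg_mul_riemannLiouvilleKernel]
  rw [integrable_indicator_iff measurableSet_Ioi]
  have hint := integrableOn_rpow_mul_exp_neg_mul_rpow (s := 1 - δ - 1) (by linarith) one_pos hr
  simp only [rpow_one, neg_mul] at hint
  exact hint.const_mul _

theorem laplace_riemannLiouvilleKernel_ofReal (hδ : δ < 1) {r : ℝ} (hr : 0 < r) :
    laplace (riemannLiouvilleKernel δ) r = (r : ℂ) ^ ((δ : ℂ) - 1) := by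
  have hδ' : 0 < 1 - δ := sub_pos.2 hδ
  have hreal : ∫ σ, exp (-r * σ) * riemannLiouvilleKernel δ σ = r ^ (δ - 1) := by
    simp only [exp_neg_mul_riemannLiouvilleKernel]
    rw [integral_indicator measurableSet_Ioi, integral_const_mul,
      Real.integral_rpow_mul_exp_neg_mul_Ioi hδ' hr, one_div, inv_rpow hr.le, ← rpow_neg hr.le,
      neg_sub, mul_left_comm, inv_mul_cancel₀ (Gamma_pos_of_pos hδ').ne', mul_one]
  rw [← Complex.ofReal_one, ← Complex.ofReal_sub, ← Complex.ofReal_cpow hr.le, ← hreal,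
    ← integral_complex_ofReal]
  simp [laplace]

open ProbabilityTheory in
theorem laplace_riemannLiouvilleKernel (hδ : δ < 1) {p : ℂ} (hp : 0 < p.re) :
    laplace (riemannLiouvilleKernel δ) p = p ^ ((δ : ℂ) - 1) := by
  set μ : Measure ℝ := volume.withDensity fun σ => ENNReal.ofReal (riemannLiouvilleKernel δ σ)
  have hΓ := Gamma_pos_of_pos (sub_pos.2 hδ)
  have hk (σ : ℝ) : 0 ≤ riemannLiouvilleKernel δ σ :=
    indicator_nonneg (fun σ hσ => div_nonneg (rpow_nonneg (le_of_lt hσ) _) hΓ.le) σ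
  have hmgf : laplace (riemannLiouvilleKernel δ) = fun p => complexMGF id μ (-p) := by
    funext p
    rw [complexMGF, integral_withDensity_eq_integral_toReal_smul
      (measurable_riemannLiouvilleKernel δ).ennreal_ofReal (by simp)]
    simp [laplace, ENNReal.toReal_ofReal (hk _), mul_comm]
  have hset : Iio 0 ⊆ interior (integrableExpSet id μ) := by
    refine interior_maximal (fun r hr => ?_) isOpen_Iio
    refine (integrable_withDensity_iff (measurable_riemannLiouvilleKernel δ).ennreal_ofReal
      (by simp)).2 ?_
    simpa [ENNReal.toReal_ofReal (hk _)] using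
      integrable_exp_neg_mul_riemannLiouvilleKernel hδ (neg_pos.2 hr)
  have hU : IsOpen {p : ℂ | 0 < p.re} := isOpen_lt continuous_const Complex.continuous_re
  have hleft : DifferentiableOn ℂ (laplace (riemannLiouvilleKernel δ)) {p | 0 < p.re} := by
    rw [hmgf]
    exact differentiableOn_complexMGF.comp differentiableOn_id.neg fun p hp =>
      hset (by simpa using hp)
  have hright : DifferentiableOn ℂ (fun p : ℂ => p ^ ((δ : ℂ) - 1)) {p | 0 < p.re} :=
    fun p hp => (differentiableAt_id.cpow_const (Or.inl hp)).differentiableWithinAt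
  refine (hleft.analyticOnNhd hU).eqOn_of_preconnected_of_frequently_eq (hright.analyticOnNhd hU)
    (convex_halfSpace_re_gt 0).isPreconnected (z₀ := ((1 : ℝ) : ℂ)) (by simp)
    (frequently_nhdsNE_ofReal ((eventually_gt_nhds one_pos).mono fun r hr =>
      laplace_riemannLiouvilleKernel_ofReal hδ hr)) hp

theorem hasDerivAt_bromwich {c : ℝ} {F : ℝ → ℂ} (hF : Integrable F)
    (hpF : Integrable fun ξ => vline c ξ * F ξ) (t : ℝ) :
    HasDerivAt (bromwich c F) (bromwich c (fun ξ => vline c ξ * F ξ) t) t := by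
  simp only [bromwich, mul_left_comm _ (vline c _)]
  refine hasDerivAt_integral_of_eq_mul_cexp (Φ := fun t ξ => Complex.exp (vline c ξ * t) * F ξ)
    (fun s ξ => ?_) (continuous_vline c).aestronglyMeasurable (integrable_exp_vline_mul_mul hF c t)
    (Eventually.of_forall fun s => ?_)
  · rw [cexp_mul_ofReal_eq_mul_cexp_sub _ s t]
    ring
  · exact (integrable_exp_vline_mul_mul hpF c s).congr (Eventually.of_forall fun ξ => by ring)

theorem caputo_eq_integral_riemannLiouvilleKernel {v : ℝ → ℝ} (δ : ℝ) (hv : ∀ s < 0, v s = 0)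
    {t : ℝ} (ht : 0 ≤ t) :
    caputo δ v t = ∫ σ, riemannLiouvilleKernel δ σ * deriv v (t - σ) := by
  have hderiv (s : ℝ) (hs : s < 0) : deriv v s = 0 := by
    have hzero : v =ᶠ[nhds s] fun _ => 0 := (eventually_lt_nhds hs).mono hv
    rw [hzero.deriv_eq, deriv_const]
  have hflip := intervalIntegral.integral_comp_sub_left (a := 0) (b := t)
    (fun σ => deriv v (t - σ) * σ ^ (-δ)) t
  simp only [sub_sub_cancel, sub_self, sub_zero] at hflip
  rw [caputo, hflip, intervalIntegral.integral_of_le ht, ← integral_const_mul,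
    ← integral_indicator measurableSet_Ioc]
  refine integral_congr_ae (Eventually.of_forall fun σ => ?_)
  by_cases hσ : 0 < σ
  · rcases le_or_gt σ t with hσt | hσt
    · simp only [riemannLiouvilleKernel, mem_Ioc, mem_Ioi, hσ, hσt, and_self, indicator_of_mem]
      ring
    · simp [hσt, hderiv]
  · simp [riemannLiouvilleKernel, hσ]

theorem caputo_eq_bromwich (hδ : δ < 1) {v : ℝ → ℝ} {F : ℝ → ℂ} (hF : Integrable F)
    (hpF : Integrable fun ξ => vline 1 ξ * F ξ) (hvF : ∀ s, (v s : ℂ) = bromwich 1 F s)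
    (hv : ∀ s < 0, v s = 0) {t : ℝ} (ht : 0 ≤ t) :
    (caputo δ v t : ℂ) = bromwich 1 (fun ξ => vline 1 ξ ^ (δ : ℂ) * F ξ) t := by
  have hderiv (σ : ℝ) : ((deriv v (t - σ) : ℝ) : ℂ) =
      ∫ ξ, (Complex.exp (vline 1 ξ * t) * (vline 1 ξ * F ξ)) * Complex.exp (-vline 1 ξ * σ) := by
    rw [ofReal_deriv_eq (hasDerivAt_bromwich hF hpF _) (Eventually.of_forall hvF), bromwich]
    refine integral_congr_ae (Eventually.of_forall fun ξ => ?_)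
    have hsplit : Complex.exp (vline 1 ξ * (t - σ : ℝ)) =
        Complex.exp (vline 1 ξ * t) * Complex.exp (-vline 1 ξ * σ) := by
      rw [← Complex.exp_add, Complex.ofReal_sub, mul_sub, neg_mul, sub_eq_add_neg]
    simp only [hsplit]
    ring
  have hnorm (ξ σ : ℝ) : ‖Complex.exp (-vline 1 ξ * σ) * riemannLiouvilleKernel δ σ‖ =
      |exp (-1 * σ) * riemannLiouvilleKernel δ σ| := by
    simp [Complex.norm_exp, vline_re, abs_mul]
  have hk := integrable_exp_neg_mul_riemannLiouvilleKernel hδ one_pos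
  have hkξ (ξ : ℝ) :
      Integrable fun σ : ℝ => Complex.exp (-vline 1 ξ * σ) * riemannLiouvilleKernel δ σ := by
    refine hk.mono ?_ (Eventually.of_forall fun σ => (hnorm ξ σ).le)
    exact (by fun_prop : Measurable fun σ : ℝ => Complex.exp (-vline 1 ξ * σ)).mul
      (measurable_riemannLiouvilleKernel δ).complex_ofReal |>.aestronglyMeasurable
  have hH := integrable_exp_vline_mul_mul hpF 1 t
  have hprod := integrable_prod_mul_exp_neg_mul
    (measurable_riemannLiouvilleKernel δ).aestronglyMeasurable hH.1
    (continuous_vline 1).aestronglyMeasurable hkξ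
    (hH.norm.mul_const (∫ σ, |exp (-1 * σ) * riemannLiouvilleKernel δ σ|))
    (fun ξ => by simp only [hnorm, le_refl])
  rw [caputo_eq_integral_riemannLiouvilleKernel δ hv ht, ← integral_complex_ofReal]
  simp only [Complex.ofReal_mul, hderiv]
  rw [integral_mul_integral_exp_neg_mul hprod, bromwich]
  refine integral_congr_ae (Eventually.of_forall fun ξ => ?_)
  have hξ : vline 1 ξ ≠ 0 := fun h => by simpa [vline_re] using congrArg Complex.re h
  simp only
  rw [laplace_riemannLiouvilleKernel hδ (by simp [vline_re]), Complex.cpow_sub _ _ hξ,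
    Complex.cpow_one]
  field_simp

end RiemannLiouville

section BoundaryValueProblem

variable {a α δ x z t : ℝ} {h : ℝ → ℝ}

theorem ofReal_caputo_lumped (ha : 0 < a) (hα : 0 < α) (hδ₀ : 0 < δ) (hδ₁ : δ < 1) (lam γ : ℝ)
    (hh : Integrable h) (hneg : ∀ r ≤ 0, h r = 0) (hx : 0 < x) (hz : 0 ≤ z) (ht : 0 ≤ t) :
    (caputo δ (lumped a lam α γ δ h x z) t : ℂ) = lumpedBromwich a lam α γ δ
      (fun ξ => vline 1 ξ ^ (δ : ℂ) * laplace h (vline 1 ξ)) x z t := by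
  have hG := HasPolynomialGrowth.laplace_vline hh hneg
  have hp := HasPolynomialGrowth.vline_one.mul hG
  simp only [lumpedBromwich, mul_assoc]
  refine caputo_eq_bromwich hδ₁ (hG.integrable_mul_lumpedSymbol ha hα.le hδ₀ hδ₁ lam γ hx.le hz
    (by linarith)) ?_ (lumped_eq_lumpedBromwich ha hα hδ₀ hδ₁ lam γ hh hneg hx hz)
    (fun s hs => lumped_of_nonpos a lam α γ δ x z hneg hs.le) ht
  simpa only [mul_assoc] using
    hp.integrable_mul_lumpedSymbol ha hα.le hδ₀ hδ₁ lam γ hx.le hz (by linarith)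

theorem ofReal_deriv_lumped_z (ha : 0 < a) (hα : 0 < α) (hδ₀ : 0 < δ) (hδ₁ : δ < 1) (lam γ : ℝ)
    (hh : Integrable h) (hneg : ∀ r ≤ 0, h r = 0) (hx : 0 < x) (hz : 0 < z) (t : ℝ) :
    ((deriv (fun z => lumped a lam α γ δ h x z t) z : ℝ) : ℂ) = lumpedBromwich a lam α γ δ
      (fun ξ => -rateZ a lam (vline 1 ξ ^ (δ : ℂ)) * laplace h (vline 1 ξ)) x z t :=
  ofReal_deriv_eq (hasDerivAt_lumpedBromwich_z ha hα.le hδ₀ hδ₁ lam γ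
      (HasPolynomialGrowth.laplace_vline hh hneg) hx hz t)
    ((eventually_gt_nhds hz).mono fun _ hs =>
      lumped_eq_lumpedBromwich ha hα hδ₀ hδ₁ lam γ hh hneg hx (le_of_lt hs) t)

theorem ofReal_deriv_deriv_lumped_z (ha : 0 < a) (hα : 0 < α) (hδ₀ : 0 < δ) (hδ₁ : δ < 1)
    (lam γ : ℝ) (hh : Integrable h) (hneg : ∀ r ≤ 0, h r = 0) (hx : 0 < x) (hz : 0 < z) (t : ℝ) :
    ((deriv (deriv fun z => lumped a lam α γ δ h x z t) z : ℝ) : ℂ) = lumpedBromwich a lam α γ δ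
      (fun ξ => -rateZ a lam (vline 1 ξ ^ (δ : ℂ)) *
        (-rateZ a lam (vline 1 ξ ^ (δ : ℂ)) * laplace h (vline 1 ξ))) x z t := by
  have hZ := (hasPolynomialGrowth_rateZ hδ₀ hδ₁ a lam).const_mul (-1)
  simp only [neg_one_mul] at hZ
  exact ofReal_deriv_eq (hasDerivAt_lumpedBromwich_z ha hα.le hδ₀ hδ₁ lam γ
      (hZ.mul (HasPolynomialGrowth.laplace_vline hh hneg)) hx hz t)
    ((eventually_gt_nhds hz).mono fun _ hs =>
      ofReal_deriv_lumped_z ha hα hδ₀ hδ₁ lam γ hh hneg hx hs t)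

theorem ofReal_deriv_lumped_x (ha : 0 < a) (hα : 0 < α) (hδ₀ : 0 < δ) (hδ₁ : δ < 1) (lam γ : ℝ)
    (hh : Integrable h) (hneg : ∀ r ≤ 0, h r = 0) (hx : 0 < x) (hz : 0 ≤ z) (t : ℝ) :
    ((deriv (fun x => lumped a lam α γ δ h x z t) x : ℝ) : ℂ) = lumpedBromwich a lam α γ δ
      (fun ξ => -rateX a lam α γ (vline 1 ξ ^ (δ : ℂ)) * laplace h (vline 1 ξ)) x z t :=
  ofReal_deriv_eq (hasDerivAt_lumpedBromwich_x ha hα.le hδ₀ hδ₁ lam γ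
      (HasPolynomialGrowth.laplace_vline hh hneg) hx hz t)
    ((eventually_gt_nhds hx).mono fun _ hs =>
      lumped_eq_lumpedBromwich ha hα hδ₀ hδ₁ lam γ hh hneg hs hz t)

theorem ofReal_deriv_deriv_lumped_x (ha : 0 < a) (hα : 0 < α) (hδ₀ : 0 < δ) (hδ₁ : δ < 1)
    (lam γ : ℝ) (hh : Integrable h) (hneg : ∀ r ≤ 0, h r = 0) (hx : 0 < x) (hz : 0 ≤ z) (t : ℝ) :
    ((deriv (deriv fun x => lumped a lam α γ δ h x z t) x : ℝ) : ℂ) = lumpedBromwich a lam α γ δ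
      (fun ξ => -rateX a lam α γ (vline 1 ξ ^ (δ : ℂ)) *
        (-rateX a lam α γ (vline 1 ξ ^ (δ : ℂ)) * laplace h (vline 1 ξ))) x z t := by
  have hX := (hasPolynomialGrowth_rateX hδ₀ hδ₁ a lam α γ).const_mul (-1)
  simp only [neg_one_mul] at hX
  exact ofReal_deriv_eq (hasDerivAt_lumpedBromwich_x ha hα.le hδ₀ hδ₁ lam γ
      (hX.mul (HasPolynomialGrowth.laplace_vline hh hneg)) hx hz t)
    ((eventually_gt_nhds hx).mono fun _ hs =>
      ofReal_deriv_lumped_x ha hα hδ₀ hδ₁ lam γ hh hneg hs hz t)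

theorem caputo_lumped_eq (ha : 0 < a) (hα : 0 < α) (hδ₀ : 0 < δ) (hδ₁ : δ < 1) (lam γ : ℝ)
    (hh : Integrable h) (hneg : ∀ r ≤ 0, h r = 0) (hx : 0 < x) (hz : 0 < z) (ht : 0 ≤ t) :
    caputo δ (lumped a lam α γ δ h x z) t =
      a ^ 2 * deriv (deriv fun z => lumped a lam α γ δ h x z t) z -
        lam * deriv (fun z => lumped a lam α γ δ h x z t) z := by
  have hG := HasPolynomialGrowth.laplace_vline hh hneg
  have hZ := (hasPolynomialGrowth_rateZ hδ₀ hδ₁ a lam).const_mul (-1)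
  simp only [neg_one_mul] at hZ
  apply Complex.ofReal_injective
  push_cast
  rw [ofReal_caputo_lumped ha hα hδ₀ hδ₁ lam γ hh hneg hx hz.le ht,
    ofReal_deriv_deriv_lumped_z ha hα hδ₀ hδ₁ lam γ hh hneg hx hz t,
    ofReal_deriv_lumped_z ha hα hδ₀ hδ₁ lam γ hh hneg hx hz t, sub_eq_add_neg, ← neg_mul,
    ← lumpedBromwich_const_mul, ← lumpedBromwich_const_mul,
    ← lumpedBromwich_add ha hα.le hδ₀ hδ₁ lam γ ((hZ.mul (hZ.mul hG)).const_mul _)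
      ((hZ.mul hG).const_mul _) hx hz.le]
  congr 1
  funext ξ
  linear_combination (-laplace h (vline 1 ξ)) * rateZ_sq_add ha.ne' lam (vline 1 ξ ^ (δ : ℂ))

theorem caputo_lumped_zero_eq (ha : 0 < a) (hα : 0 < α) (hδ₀ : 0 < δ) (hδ₁ : δ < 1) (lam γ : ℝ)
    (hh : Integrable h) (hneg : ∀ r ≤ 0, h r = 0) {B : ℝ} (hB : ∀ r, |h r| ≤ B) (hx : 0 < x)
    (ht : 0 ≤ t) :
    caputo δ (lumped a lam α γ δ h x 0) t =
      deriv (deriv fun x => lumped a lam α γ δ h x 0 t) x -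
        2 * γ * deriv (fun x => lumped a lam α γ δ h x 0 t) x +
        α * deriv (fun z => lumped a lam α γ δ h x z t) 0 := by
  have hG := HasPolynomialGrowth.laplace_vline hh hneg
  have hX := (hasPolynomialGrowth_rateX hδ₀ hδ₁ a lam α γ).const_mul (-1)
  have hZ := (hasPolynomialGrowth_rateZ hδ₀ hδ₁ a lam).const_mul (-1)
  simp only [neg_one_mul] at hX hZ
  have hXX := hX.mul (hX.mul hG)
  have hγX := (hX.mul hG).const_mul (-(2 * γ))
  apply Complex.ofReal_injective
  push_cast
  rw [ofReal_caputo_lumped ha hα hδ₀ hδ₁ lam γ hh hneg hx le_rfl ht,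
    ofReal_deriv_deriv_lumped_x ha hα hδ₀ hδ₁ lam γ hh hneg hx le_rfl t,
    ofReal_deriv_lumped_x ha hα hδ₀ hδ₁ lam γ hh hneg hx le_rfl t,
    ofReal_deriv_eq (hasDerivAt_lumped_z_zero ha hα hδ₀ hδ₁ lam γ hh hneg hB hx t)
      EventuallyEq.rfl, sub_eq_add_neg, ← neg_mul,
    ← lumpedBromwich_const_mul, ← lumpedBromwich_const_mul,
    ← lumpedBromwich_add ha hα.le hδ₀ hδ₁ lam γ hXX hγX hx le_rfl,
    ← lumpedBromwich_add ha hα.le hδ₀ hδ₁ lam γ (hXX.add hγX) ((hZ.mul hG).const_mul _) hx le_rfl]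
  congr 1
  funext ξ
  linear_combination (-laplace h (vline 1 ξ)) * rateX_sq_add a lam α γ (vline 1 ξ ^ (δ : ℂ))

theorem continuous_lumped (ha : 0 < a) (hα : 0 < α) (hδ₀ : 0 < δ) (hδ₁ : δ < 1) (lam γ : ℝ)
    (hh : Integrable h) (hneg : ∀ r ≤ 0, h r = 0) (hx : 0 < x) (hz : 0 ≤ z) :
    Continuous (lumped a lam α γ δ h x z) := by
  have hcont : Continuous fun t => (lumped a lam α γ δ h x z t : ℂ) := by
    simp only [lumped_eq_lumpedBromwich ha hα hδ₀ hδ₁ lam γ hh hneg hx hz, lumpedBromwich]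
    exact continuous_bromwich ((HasPolynomialGrowth.laplace_vline hh
      hneg).integrable_mul_lumpedSymbol ha hα.le hδ₀ hδ₁ lam γ hx.le hz (by linarith)) 1
  exact Complex.continuous_re.comp hcont

end BoundaryValueProblem

section Corner

variable {b y r δ t : ℝ} {h : ℝ → ℝ}

theorem ofReal_re_passageRate_ofReal (b : ℝ) (hr : 0 ≤ r) :
    ((passageRate b r).re : ℂ) = passageRate b r := by
  rw [passageRate_ofReal b hr, Complex.ofReal_re]

theorem integrable_exp_neg_mul_mul_passageDensity (b y : ℝ) (hr : 0 ≤ r) :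
    Integrable fun w => exp (-r * w) * passageDensity b y w := by
  have hcomplex := integrable_exp_neg_mul_ofReal (integrable_passageDensity b y)
    (fun _ => passageDensity_of_nonpos b y) (p := (r : ℂ)) hr
  exact hcomplex.re.congr (Eventually.of_forall fun w => by
    simp [← Complex.ofReal_exp, ← Complex.ofReal_neg, ← Complex.ofReal_mul])

theorem integral_exp_neg_mul_mul_passageDensity (b : ℝ) (hy : 0 < y) (hr : 0 ≤ r) :
    ∫ w, exp (-r * w) * passageDensity b y w = exp (-(passageRate b r).re * y) := by
  have hlaplace := laplace_passageDensity b hy (q := (r : ℂ)) hr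
  rw [← ofReal_re_passageRate_ofReal b hr, laplace] at hlaplace
  rw [← Complex.ofReal_inj, ← integral_complex_ofReal]
  push_cast
  exact hlaplace

theorem integral_stableKernel (hδ₀ : 0 < δ) (hδ₁ : δ < 1) {τ : ℝ} (hτ : 0 < τ) :
    ∫ v, stableKernel δ τ v = 1 := by
  have hlaplace := laplace_stableKernel hδ₀ hδ₁ hτ (p := 0) le_rfl
  rw [laplace, Complex.zero_cpow (Complex.ofReal_ne_zero.2 hδ₀.ne')] at hlaplace
  simp only [neg_zero, zero_mul, Complex.exp_zero, one_mul, mul_zero,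
    integral_complex_ofReal] at hlaplace
  exact_mod_cast hlaplace

theorem subordinate_eq_integral_scaling (hδ₀ : 0 < δ) {τ : ℝ} (hτ : 0 < τ) (h : ℝ → ℝ) (t : ℝ) :
    subordinate δ h τ t = ∫ v, h (t - τ ^ (1 / δ) * v) * stableKernel δ 1 v := by
  have hc : 0 < τ ^ (-(1 / δ)) := by positivity
  have hcancel (v : ℝ) : τ ^ (1 / δ) * (τ ^ (-(1 / δ)) * v) = v := by
    rw [← mul_assoc, ← rpow_add hτ, add_neg_cancel, rpow_zero, one_mul]
  have hchange := Measure.integral_comp_mul_left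
    (fun v => h (t - τ ^ (1 / δ) * v) * stableKernel δ 1 v) (τ ^ (-(1 / δ)))
  simp only [hcancel, abs_of_pos (inv_pos.2 hc), smul_eq_mul] at hchange
  rw [subordinate, ← integral_sub_left_eq_self _ _ t]
  simp only [sub_sub_cancel, stableKernel_scaling hδ₀ hτ, mul_left_comm (h _)]
  rw [integral_const_mul, hchange, mul_inv_cancel_left₀ hc.ne']

variable {B : ℝ}

theorem tendsto_subordinate_nhdsGT_zero (hδ₀ : 0 < δ) (hδ₁ : δ < 1) (hh : Integrable h)
    (hB : ∀ r, |h r| ≤ B) (hcont : ContinuousAt h t) :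
    Tendsto (fun τ => subordinate δ h τ t) (nhdsWithin 0 (Ioi 0)) (nhds (h t)) := by
  have hK := integrable_stableKernel hδ₀ hδ₁ one_pos
  have hlim : Tendsto (fun τ : ℝ => ∫ v, h (t - τ ^ (1 / δ) * v) * stableKernel δ 1 v)
      (nhdsWithin 0 (Ioi 0)) (nhds (∫ v, h t * stableKernel δ 1 v)) := by
    refine tendsto_integral_filter_of_dominated_convergence (fun v => B * |stableKernel δ 1 v|)
      (eventually_mem_nhdsWithin.mono fun τ hτ => ?_) (Eventually.of_forall fun τ => ?_)
      (hK.abs.const_mul B) (Eventually.of_forall fun v => ?_)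
    · exact ((hh.comp_sub_left t).comp_mul_left' (rpow_pos_of_pos hτ _).ne').1.mul hK.1
    · refine Eventually.of_forall fun v => ?_
      rw [norm_mul]
      exact mul_le_mul_of_nonneg_right (hB _) (norm_nonneg _)
    · have hinner : Tendsto (fun τ : ℝ => t - τ ^ (1 / δ) * v) (nhds 0) (nhds t) := by
        have hc : Continuous fun τ : ℝ => t - τ ^ (1 / δ) * v :=
          continuous_const.sub ((continuous_rpow_const (by positivity)).mul continuous_const)
        simpa [zero_rpow (inv_ne_zero hδ₀.ne')] using hc.tendsto 0
      exact ((hcont.tendsto.comp hinner).mul_const _).mono_left nhdsWithin_le_nhds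
  rw [integral_const_mul, integral_stableKernel hδ₀ hδ₁ one_pos, mul_one] at hlim
  exact hlim.congr' (eventually_mem_nhdsWithin.mono fun τ hτ =>
    (subordinate_eq_integral_scaling hδ₀ hτ h t).symm)

theorem exists_le_add_mul_one_sub_exp_neg {g : ℝ → ℝ} {M : ℝ} (hM : ∀ s > 0, g s ≤ M)
    (hg : Tendsto g (nhdsWithin 0 (Ioi 0)) (nhds 0)) {ε : ℝ} (hε : 0 < ε) :
    ∃ C, ∀ s > 0, g s ≤ ε + C * (1 - exp (-s)) := by
  obtain ⟨η, hη, hsmall⟩ := mem_nhdsGT_iff_exists_Ioo_subset.1 (hg.eventually_le_const hε)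
  have hη' : 0 < 1 - exp (-η) := sub_pos.2 (exp_lt_one_iff.2 (neg_lt_zero.2 hη))
  refine ⟨|M| / (1 - exp (-η)), fun s hs => ?_⟩
  rcases lt_or_ge s η with hlt | hge
  · have hterm : 0 ≤ |M| / (1 - exp (-η)) * (1 - exp (-s)) :=
      mul_nonneg (by positivity) (sub_nonneg.2 (exp_le_one_iff.2 (by linarith)))
    linarith [show g s ≤ ε from hsmall ⟨hs, hlt⟩]
  · have hterm : |M| ≤ |M| / (1 - exp (-η)) * (1 - exp (-s)) := by
      rw [div_mul_eq_mul_div, le_div_iff₀ hη']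
      gcongr
    linarith [hM s hs, le_abs_self M]

theorem exists_abs_subordinate_sub_le (hδ₀ : 0 < δ) (hδ₁ : δ < 1) (hh : Integrable h)
    (hB : ∀ r, |h r| ≤ B) (hcont : ContinuousAt h t) {ε : ℝ} (hε : 0 < ε) :
    ∃ C, ∀ τ > 0, |subordinate δ h τ t - h t| ≤ ε + C * (1 - exp (-τ)) := by
  have hlim := ((tendsto_subordinate_nhdsGT_zero hδ₀ hδ₁ hh hB hcont).sub_const (h t)).abs
  rw [sub_self, abs_zero] at hlim
  exact exists_le_add_mul_one_sub_exp_neg (fun τ hτ => (abs_sub _ _).trans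
    (add_le_add (abs_subordinate_le hδ₀ hδ₁ hτ hB t) (hB t))) hlim hε

theorem abs_integral_sub_const_mul_le {X : Type*} [MeasurableSpace X] {μ : Measure X}
    {f g k : X → ℝ} {c p q : ℝ} (hf : AEStronglyMeasurable f μ) (hg : Integrable g μ)
    (hk : Integrable k μ) (hle : ∀ s, |f s - c * g s| ≤ p * g s - q * k s) :
    |∫ s, f s ∂μ - c * ∫ s, g s ∂μ| ≤ p * ∫ s, g s ∂μ - q * ∫ s, k s ∂μ := by
  have hbound := (hg.const_mul p).sub (hk.const_mul q)
  have hdiff : Integrable (fun s => f s - c * g s) μ :=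
    hbound.mono' (hf.sub (hg.const_mul c).1) (Eventually.of_forall hle)
  have hf' : Integrable f μ := (hdiff.add (hg.const_mul c)).congr
    (Eventually.of_forall fun s => sub_add_cancel (f s) (c * g s))
  rw [← integral_const_mul, ← integral_const_mul, ← integral_const_mul,
    ← integral_sub hf' (hg.const_mul c), ← integral_sub (hg.const_mul p) (hk.const_mul q)]
  exact norm_integral_le_of_norm_le (f := fun s => f s - c * g s) hbound
    (Eventually.of_forall hle)

theorem abs_halfLineAverage_sub_le {a τ c p q : ℝ} (ha : 0 < a) (hδ₀ : 0 < δ) (hδ₁ : δ < 1)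
    (lam : ℝ) (hh : AEStronglyMeasurable h) (hy : 0 < y) (hτ : 0 < τ)
    (hle : ∀ τ > 0, |subordinate δ h τ t - c| ≤ p - q * exp (-τ)) :
    |halfLineAverage a lam δ h τ y t - c * exp (-(rateZ a lam (0 : ℝ)).re * y)| ≤
      p * exp (-(rateZ a lam (0 : ℝ)).re * y) -
        q * (exp (-τ) * exp (-(rateZ a lam (1 : ℝ)).re * y)) := by
  have hmass (r : ℝ) (hr : 0 ≤ r) : exp (-(rateZ a lam r).re * y) =
      ∫ w, exp (-r * w) * passageDensity (lam / (2 * a)) (y / a) w := by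
    rw [integral_exp_neg_mul_mul_passageDensity _ (by positivity) hr, re_rateZ]
    ring_nf
  have hint (r : ℝ) (hr : 0 ≤ r) :=
    integrable_exp_neg_mul_mul_passageDensity (lam / (2 * a)) (y / a) hr
  have hmeas : AEStronglyMeasurable fun w =>
      passageDensity (lam / (2 * a)) (y / a) w * subordinate δ h (τ + w) t := by
    refine ((integrable_passageDensity (lam / (2 * a)) (y / a)).1.mul
      ((measurable_subordinate hδ₀ hδ₁ hh t).comp
        (measurable_const_add τ)).aestronglyMeasurable).congr (Eventually.of_forall fun w => ?_)
    rcases le_or_gt w 0 with hw | hw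
    · simp [passageDensity_of_nonpos _ _ hw]
    · simp [add_pos hτ hw]
  rw [hmass 0 le_rfl, hmass 1 zero_le_one, halfLineAverage, ← mul_assoc]
  refine abs_integral_sub_const_mul_le hmeas (hint 0 le_rfl) (hint 1 zero_le_one) fun w => ?_
  rcases le_or_gt w 0 with hw | hw
  · simp [passageDensity_of_nonpos _ _ hw]
  have hnonneg := passageDensity_nonneg (lam / (2 * a)) (div_pos hy ha).le w
  calc |_ - c * (exp (-0 * w) * passageDensity (lam / (2 * a)) (y / a) w)|
      = passageDensity (lam / (2 * a)) (y / a) w * |subordinate δ h (τ + w) t - c| := by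
        rw [← abs_of_nonneg hnonneg, ← abs_mul, abs_of_nonneg hnonneg]
        simp [mul_sub, mul_comm c]
    _ ≤ passageDensity (lam / (2 * a)) (y / a) w * (p - q * exp (-(τ + w))) :=
        mul_le_mul_of_nonneg_left (hle _ (add_pos hτ hw)) hnonneg
    _ = _ := by rw [neg_add, exp_add, neg_zero, zero_mul, exp_zero, neg_one_mul]; ring

variable {a α x z : ℝ}

theorem rateX_ofReal (ha : 0 < a) (lam : ℝ) (hα : 0 ≤ α) (γ : ℝ) (hr : 0 ≤ r) :
    0 ≤ r + α * (rateZ a lam r).re ∧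
      rateX a lam α γ r = passageRate γ (r + α * (rateZ a lam r).re : ℝ) := by
  refine ⟨add_nonneg hr (mul_nonneg hα (re_rateZ_nonneg ha lam (q := (r : ℂ)) hr)), ?_⟩
  rw [rateX, re_rateZ]
  push_cast
  rw [ofReal_re_passageRate_ofReal _ hr, rateZ]

theorem passageDensity_mul_exp_mul_exp_eq (γ x r K α z τ : ℝ) :
    passageDensity γ x τ * (exp (-r * τ) * exp (-K * (z + α * τ))) =
      exp (-K * z) * (exp (-(r + α * K) * τ) * passageDensity γ x τ) := by
  rw [← exp_add, ← mul_assoc, ← exp_add, mul_comm]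
  ring_nf

theorem integrable_passageDensity_mul_exp_rateZ (ha : 0 < a) (lam : ℝ) (hα : 0 ≤ α) (γ x z : ℝ)
    (hr : 0 ≤ r) : Integrable fun τ => passageDensity γ x τ *
      (exp (-r * τ) * exp (-(rateZ a lam r).re * (z + α * τ))) := by
  simp only [passageDensity_mul_exp_mul_exp_eq]
  exact (integrable_exp_neg_mul_mul_passageDensity γ x
    (rateX_ofReal ha lam hα γ hr).1).const_mul _

theorem integral_passageDensity_mul_exp_rateZ (ha : 0 < a) (lam : ℝ) (hα : 0 ≤ α) (γ : ℝ)
    (hx : 0 < x) (z : ℝ) (hr : 0 ≤ r) :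
    ∫ τ, passageDensity γ x τ * (exp (-r * τ) * exp (-(rateZ a lam r).re * (z + α * τ))) =
      exp (-(rateX a lam α γ r).re * x) * exp (-(rateZ a lam r).re * z) := by
  obtain ⟨hr', hX⟩ := rateX_ofReal ha lam hα γ hr
  simp only [passageDensity_mul_exp_mul_exp_eq]
  rw [integral_const_mul, integral_exp_neg_mul_mul_passageDensity γ hx hr', hX, mul_comm]

theorem abs_lumped_sub_le {c p q : ℝ} (ha : 0 < a) (hα : 0 ≤ α) (hδ₀ : 0 < δ) (hδ₁ : δ < 1)
    (lam γ : ℝ) (hh : AEStronglyMeasurable h) (hx : 0 < x) (hz : 0 < z)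
    (hle : ∀ τ > 0, |subordinate δ h τ t - c| ≤ p - q * exp (-τ)) :
    |lumped a lam α γ δ h x z t -
        c * (exp (-(rateX a lam α γ (0 : ℝ)).re * x) * exp (-(rateZ a lam (0 : ℝ)).re * z))| ≤
      p * (exp (-(rateX a lam α γ (0 : ℝ)).re * x) * exp (-(rateZ a lam (0 : ℝ)).re * z)) -
        q * (exp (-(rateX a lam α γ (1 : ℝ)).re * x) * exp (-(rateZ a lam (1 : ℝ)).re * z)) := by
  have hint (r : ℝ) (hr : 0 ≤ r) := integrable_passageDensity_mul_exp_rateZ ha lam hα γ x z hr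
  rw [← integral_passageDensity_mul_exp_rateZ ha lam hα γ hx z le_rfl,
    ← integral_passageDensity_mul_exp_rateZ ha lam hα γ hx z zero_le_one, lumped]
  refine abs_integral_sub_const_mul_le
    (aestronglyMeasurable_passageDensity_mul_halfLineAverage hδ₀ hδ₁ hh a lam α γ x z t)
    (hint 0 le_rfl) (hint 1 zero_le_one) fun τ => ?_
  rcases le_or_gt τ 0 with hτ | hτ
  · simp [passageDensity_of_nonpos _ _ hτ]
  have hnonneg := passageDensity_nonneg γ hx.le τ
  have hinner := mul_le_mul_of_nonneg_left (abs_halfLineAverage_sub_le ha hδ₀ hδ₁ lam hh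
    (by positivity : 0 < z + α * τ) hτ hle) hnonneg
  rw [← abs_of_nonneg hnonneg, ← abs_mul, abs_of_nonneg hnonneg] at hinner
  simp only [neg_zero, zero_mul, exp_zero, neg_one_mul, one_mul]
  simpa only [mul_sub, mul_left_comm (passageDensity γ x τ)] using hinner

theorem tendsto_lumped_nhds_corner (ha : 0 < a) (hα : 0 ≤ α) (hδ₀ : 0 < δ) (hδ₁ : δ < 1)
    (lam γ : ℝ) (hh : Integrable h) (hB : ∀ r, |h r| ≤ B) (hcont : ContinuousAt h t) :
    Tendsto (fun w : ℝ × ℝ => lumped a lam α γ δ h w.1 w.2 t)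
      (nhdsWithin (0, 0) (Ioi 0 ×ˢ Ioi 0)) (nhds (h t)) := by
  let m (r : ℝ) (w : ℝ × ℝ) : ℝ :=
    exp (-(rateX a lam α γ r).re * w.1) * exp (-(rateZ a lam r).re * w.2)
  have hm (r : ℝ) : Tendsto (m r) (nhdsWithin (0, 0) (Ioi 0 ×ˢ Ioi 0)) (nhds 1) := by
    have hcont : Continuous (m r) := by fun_prop
    simpa [m] using (hcont.tendsto (0, 0)).mono_left nhdsWithin_le_nhds
  suffices hdiff : Tendsto (fun w : ℝ × ℝ => lumped a lam α γ δ h w.1 w.2 t - h t * m 0 w)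
      (nhdsWithin (0, 0) (Ioi 0 ×ˢ Ioi 0)) (nhds 0) by
    simpa using hdiff.add ((hm 0).const_mul (h t))
  rw [Metric.tendsto_nhds]
  intro ε hε
  obtain ⟨C, hC⟩ := exists_abs_subordinate_sub_le hδ₀ hδ₁ hh hB hcont (half_pos hε)
  have hbound : ∀ᶠ w in nhdsWithin (0, 0) (Ioi 0 ×ˢ Ioi 0),
      (ε / 2 + C) * m 0 w - C * m 1 w < ε :=
    (((hm 0).const_mul _).sub ((hm 1).const_mul C)).eventually_lt_const (by linarith)
  filter_upwards [hbound, self_mem_nhdsWithin] with w hw hpos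
  rw [dist_zero_right, Real.norm_eq_abs]
  exact (abs_lumped_sub_le ha hα hδ₀ hδ₁ lam γ hh.1 hpos.1 hpos.2 fun τ hτ =>
    (hC τ hτ).trans_eq (by ring)).trans_lt hw

end Corner

section Infinity

variable {a α δ : ℝ} {h : ℝ → ℝ}

theorem re_passageRate_pos (b : ℝ) {q : ℂ} (hq : 0 < q.re) : 0 < (passageRate b q).re := by
  have hlt : b < √(b ^ 2 + q.re) := lt_sqrt_of_sq_lt (by linarith)
  linarith [sqrt_sub_le_re_passageRate b q]

theorem norm_lumpedSymbol_le (lam γ : ℝ) {m x z : ℝ} {q : ℂ}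
    (hX : m ≤ (rateX a lam α γ q).re) (hZ : m ≤ (rateZ a lam q).re) (hx : 0 ≤ x) (hz : 0 ≤ z) :
    ‖lumpedSymbol a lam α γ x z q‖ ≤ exp (-(m * (x + z))) := by
  rw [lumpedSymbol_eq_exp_neg, Complex.norm_exp, Complex.neg_re, Complex.add_re,
    Complex.re_mul_ofReal, Complex.re_mul_ofReal, mul_add]
  gcongr

theorem tendsto_add_atTop_of_tendsto_sq_add_sq {l : Filter (ℝ × ℝ)}
    (hl : Tendsto (fun w : ℝ × ℝ => w.1 ^ 2 + w.2 ^ 2) l atTop)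
    (hpos : ∀ᶠ w in l, 0 ≤ w.1 ∧ 0 ≤ w.2) : Tendsto (fun w : ℝ × ℝ => w.1 + w.2) l atTop :=
  tendsto_atTop_mono' l (hpos.mono fun w hw => sqrt_le_iff.2
    ⟨add_nonneg hw.1 hw.2, by nlinarith [mul_nonneg hw.1 hw.2]⟩) (tendsto_sqrt_atTop.comp hl)

theorem exists_norm_rpow_sub_le_min_rates (ha : 0 < a) (hα : 0 ≤ α) (hδ₀ : 0 < δ)
    (hδ₁ : δ < 1) (lam γ : ℝ) : ∃ κ > 0, ∃ C, ∀ ξ, κ * ‖vline 1 ξ‖ ^ (δ / 2) - C ≤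
      min (rateX a lam α γ (vline 1 ξ ^ (δ : ℂ))).re (rateZ a lam (vline 1 ξ ^ (δ : ℂ))).re := by
  obtain ⟨κ, hκ, C, hC⟩ := exists_norm_rpow_sub_le_re_symbol_exponent ha hα hδ₀ hδ₁ lam γ
  refine ⟨κ, hκ, C, fun ξ => le_min ?_ ?_⟩
  · simpa using hC 1 0 zero_le_one le_rfl ξ
  · simpa using hC 0 1 le_rfl zero_le_one ξ

theorem min_rates_pos (ha : 0 < a) (hα : 0 ≤ α) (lam γ : ℝ) {q : ℂ} (hq : 0 < q.re) :
    0 < min (rateX a lam α γ q).re (rateZ a lam q).re := by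
  refine lt_min (re_passageRate_pos γ (hq.trans_le (re_le_re_add_mul_rateZ ha lam hα hq.le))) ?_
  rw [re_rateZ]
  exact div_pos (re_passageRate_pos _ hq) ha

theorem tendsto_lumped_zero_of_tendsto_add_atTop (ha : 0 < a) (hα : 0 < α) (hδ₀ : 0 < δ)
    (hδ₁ : δ < 1) (lam γ : ℝ) (hh : Integrable h) (hneg : ∀ r ≤ 0, h r = 0) (t : ℝ)
    {l : Filter (ℝ × ℝ)} [l.IsCountablyGenerated] (hpos : ∀ᶠ w in l, 0 < w.1 ∧ 0 < w.2)
    (hl : Tendsto (fun w : ℝ × ℝ => w.1 + w.2) l atTop) :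
    Tendsto (fun w : ℝ × ℝ => lumped a lam α γ δ h w.1 w.2 t) l (nhds 0) := by
  have hG := HasPolynomialGrowth.laplace_vline hh hneg
  have hX := hasPolynomialGrowth_rateX hδ₀ hδ₁ a lam α γ
  have hZ := hasPolynomialGrowth_rateZ hδ₀ hδ₁ a lam
  obtain ⟨κ, hκ, C, hC⟩ := exists_norm_rpow_sub_le_min_rates ha hα.le hδ₀ hδ₁ lam γ
  set m : ℝ → ℝ := fun ξ =>
    min (rateX a lam α γ (vline 1 ξ ^ (δ : ℂ))).re (rateZ a lam (vline 1 ξ ^ (δ : ℂ))).re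
  have hm (ξ : ℝ) : 0 < m ξ := min_rates_pos ha hα.le lam γ (re_vline_cpow_pos hδ₀ hδ₁ ξ)
  have hmeas : Measurable fun ξ => (m ξ : ℂ) := Complex.measurable_ofReal.comp
    ((Complex.measurable_re.comp hX.1).min (Complex.measurable_re.comp hZ.1))
  have hsymbol (ξ : ℝ) {w : ℝ × ℝ} (hw : 0 < w.1 ∧ 0 < w.2) :
      ‖Complex.exp (vline 1 ξ * t) * (laplace h (vline 1 ξ) *
        lumpedSymbol a lam α γ w.1 w.2 (vline 1 ξ ^ (δ : ℂ)))‖ ≤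
      exp (1 * t) * (‖laplace h (vline 1 ξ)‖ * exp (-(m ξ * (w.1 + w.2)))) := by
    rw [norm_mul, norm_mul, norm_exp_vline_mul]
    gcongr
    exact norm_lumpedSymbol_le lam γ (min_le_left _ _) (min_le_right _ _) hw.1.le hw.2.le
  have hlim : Tendsto (fun w : ℝ × ℝ =>
      lumpedBromwich a lam α γ δ (fun ξ => laplace h (vline 1 ξ)) w.1 w.2 t) l
      (nhds (∫ _ : ℝ, (0 : ℂ))) := by
    refine tendsto_integral_filter_of_dominated_convergence
      (fun ξ => exp (1 * t) * ‖laplace h (vline 1 ξ) * Complex.exp (-(m ξ : ℂ))‖)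
      (hpos.mono fun w hw => (integrable_exp_vline_mul_mul (hG.integrable_mul_lumpedSymbol ha
        hα.le hδ₀ hδ₁ lam γ hw.1.le hw.2.le (add_pos hw.1 hw.2)) 1 t).1) ?_
      ((hG.integrable_mul_exp_neg hmeas hκ (half_pos hδ₀) hC).norm.const_mul _)
      (Eventually.of_forall fun ξ => squeeze_zero_norm' (hpos.mono fun w => hsymbol ξ) ?_)
    · filter_upwards [hpos, hl.eventually_ge_atTop 1] with w hw hge
      refine Eventually.of_forall fun ξ => (hsymbol ξ hw).trans ?_
      rw [norm_mul, Complex.norm_exp, Complex.neg_re, Complex.ofReal_re]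
      gcongr
      exact le_mul_of_one_le_right (hm ξ).le hge
    · simpa using ((tendsto_exp_neg_atTop_nhds_zero.comp
        (hl.const_mul_atTop (hm ξ))).const_mul ‖laplace h (vline 1 ξ)‖).const_mul (exp (1 * t))
  rw [integral_zero] at hlim
  exact (Complex.continuous_re.tendsto 0).comp (hlim.congr' (hpos.mono fun w hw =>
    (lumped_eq_lumpedBromwich ha hα hδ₀ hδ₁ lam γ hh hneg hw.1 hw.2.le t).symm))

theorem tendsto_lumped_comap_sq_add_sq (ha : 0 < a) (hα : 0 < α) (hδ₀ : 0 < δ) (hδ₁ : δ < 1)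
    (lam γ : ℝ) (hh : Integrable h) (hneg : ∀ r ≤ 0, h r = 0) (t : ℝ) :
    Tendsto (fun w : ℝ × ℝ => lumped a lam α γ δ h w.1 w.2 t)
      (comap (fun w : ℝ × ℝ => w.1 ^ 2 + w.2 ^ 2) atTop ⊓ 𝓟 (Ioi 0 ×ˢ Ioi 0)) (nhds 0) := by
  have hpos : ∀ᶠ w : ℝ × ℝ in comap (fun w => w.1 ^ 2 + w.2 ^ 2) atTop ⊓ 𝓟 (Ioi 0 ×ˢ Ioi 0),
      0 < w.1 ∧ 0 < w.2 := mem_inf_of_right (mem_principal_self _)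
  exact tendsto_lumped_zero_of_tendsto_add_atTop ha hα hδ₀ hδ₁ lam γ hh hneg t hpos
    (tendsto_add_atTop_of_tendsto_sq_add_sq (tendsto_comap.mono_left inf_le_left)
      (hpos.mono fun w hw => ⟨hw.1.le, hw.2.le⟩))

end Infinity

theorem tendsto_lumped_nhdsGT_zero {a α δ x z : ℝ} {h : ℝ → ℝ} (ha : 0 < a) (hα : 0 < α)
    (hδ₀ : 0 < δ) (hδ₁ : δ < 1) (lam γ : ℝ) (hh : Integrable h) (hneg : ∀ r ≤ 0, h r = 0)
    (hx : 0 < x) (hz : 0 ≤ z) :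
    Tendsto (lumped a lam α γ δ h x z) (nhdsWithin 0 (Ioi 0)) (nhds 0) := by
  have hlim := (continuous_lumped ha hα hδ₀ hδ₁ lam γ hh hneg hx hz).tendsto 0
  rw [lumped_of_nonpos _ _ _ _ _ _ _ hneg le_rfl] at hlim
  exact hlim.mono_left nhdsWithin_le_nhds

theorem caputo_congr_const_mul {u v : ℝ → ℝ} {A t T : ℝ} (δ : ℝ) (ht : 0 ≤ t) (htT : t < T)
    (huv : ∀ s ∈ Icc 0 T, u s = A * v s) : caputo δ u t = A * caputo δ v t := by
  have hderiv : ∫ s in (0 : ℝ)..t, deriv u s * (t - s) ^ (-δ) =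
      ∫ s in (0 : ℝ)..t, A * (deriv v s * (t - s) ^ (-δ)) := by
    rw [intervalIntegral.integral_of_le ht, intervalIntegral.integral_of_le ht]
    refine setIntegral_congr_fun measurableSet_Ioc fun s hs => ?_
    have hnhds : u =ᶠ[nhds s] fun s => A * v s :=
      eventually_of_mem (Icc_mem_nhds hs.1 (hs.2.trans_lt htT)) huv
    rw [hnhds.deriv_eq, deriv_const_mul_field, mul_assoc]
  rw [caputo, caputo, hderiv, intervalIntegral.integral_const_mul, mul_left_comm]

theorem iteratedDeriv_two_const_mul (A : ℝ) (f : ℝ → ℝ) (x : ℝ) :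
    iteratedDeriv 2 (fun y => A * f y) x = A * deriv (deriv f) x := by
  rw [iteratedDeriv_const_mul_field, iteratedDeriv_succ, iteratedDeriv_one]

theorem exists_integrable_bounded_eqOn_Icc {h : ℝ → ℝ}
    (hcont : ContinuousOn h (Ici 0)) (h0 : h 0 = 0) (T : ℝ) :
    ∃ k : ℝ → ℝ, Integrable k ∧ (∃ B, ∀ r, |k r| ≤ B) ∧ (∀ r ≤ 0, k r = 0) ∧
      EqOn k h (Icc 0 T) ∧ ∀ t ∈ Ioo 0 T, ContinuousAt k t := by
  have hIcc : ContinuousOn h (Icc 0 T) := hcont.mono Icc_subset_Ici_self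
  obtain ⟨B, hB⟩ := isCompact_Icc.exists_bound_of_continuousOn hIcc
  refine ⟨(Icc 0 T).indicator h, hIcc.integrableOn_Icc.integrable_indicator measurableSet_Icc,
    ⟨max B 0, fun r => ?_⟩, fun r hr => ?_, eqOn_indicator, fun t ht =>
      (hIcc.congr eqOn_indicator).continuousAt (Icc_mem_nhds ht.1 ht.2)⟩
  · by_cases hr : r ∈ Icc 0 T
    · rw [indicator_of_mem hr]
      exact (hB r hr).trans (le_max_left _ _)
    · simp [indicator_of_notMem hr]
  · refine indicator_apply_eq_zero.2 fun hmem => ?_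
    rw [hr.antisymm hmem.1, h0]

theorem fractional_incomplete_lumped_linear_general
    (a lam α γ A β : ℝ) (ha : 0 < a) (hα : 0 < α) (hβ₁ : 0 < β) (hβ₂ : β < 1 / 2)
    (h : ℝ → ℝ) (hcont : ContinuousOn h (Ici 0)) (h0 : h 0 = 0)
    (f₁ : ℝ → ℝ → ℝ)
    (hf₁ : ∀ τ s : ℝ, f₁ τ s =
      (2 * β * τ / s ^ (2 * β + 1)) * Mwr (τ / s ^ (2 * β)) (2 * β))
    (f₂ : ℝ → ℝ → ℝ → ℝ)
    (hf₂ : ∀ τ z s : ℝ, f₂ τ z s =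
      (β * (z + α * τ) / (a * Real.sqrt π * s ^ (2 * β + 1))) *
        ∫ w in Ioi (0 : ℝ), w ^ (-(1 / 2 : ℝ)) *
          Real.exp (-(z + α * τ) ^ 2 / (4 * a ^ 2 * w) - lam ^ 2 * w / (4 * a ^ 2)) *
          Mwr (w / s ^ (2 * β)) (2 * β))
    (g₁ : ℝ → ℝ → ℝ → ℝ)
    (hg₁ : ∀ t τ z : ℝ, g₁ t τ z = lconv (lconv (f₁ τ) h) (f₂ τ z) t)
    (u : ℝ → ℝ → ℝ → ℝ)
    (hu : ∀ x z t : ℝ, u x z t =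
      (A * Real.exp (γ * x) / (2 * Real.sqrt π)) *
        ∫ τ in Ioi (0 : ℝ), x * τ ^ (-(3 / 2 : ℝ)) *
          Real.exp (-x ^ 2 / (4 * τ) - γ ^ 2 * τ) *
          Real.exp (lam * (z + α * τ) / (2 * a ^ 2)) * g₁ t τ z) :
    (∀ x z t : ℝ, 0 < x → 0 < z → 0 < t →
      caputo (2 * β) (fun t' => u x z t') t =
        a ^ 2 * iteratedDeriv 2 (fun z' => u x z' t) z -
          lam * deriv (fun z' => u x z' t) z) ∧
    (∀ x t : ℝ, 0 < x → 0 < t →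
      caputo (2 * β) (fun t' => u x 0 t') t =
        iteratedDeriv 2 (fun x' => u x' 0 t) x -
          2 * γ * deriv (fun x' => u x' 0 t) x +
          α * deriv (fun z' => u x z' t) 0) ∧
    (∀ t : ℝ, 0 < t →
      Tendsto (fun w : ℝ × ℝ => u w.1 w.2 t)
        (nhdsWithin (0, 0) (Ioi (0 : ℝ) ×ˢ Ioi (0 : ℝ))) (nhds (A * h t))) ∧
    (∀ t : ℝ, 0 < t →
      Tendsto (fun w : ℝ × ℝ => u w.1 w.2 t)
        ((comap (fun w : ℝ × ℝ => w.1 ^ 2 + w.2 ^ 2) atTop) ⊓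
          𝓟 (Ioi (0 : ℝ) ×ˢ Ioi (0 : ℝ))) (nhds 0)) ∧
    (∀ x z : ℝ, 0 < x → 0 < z →
      Tendsto (fun t => u x z t) (nhdsWithin 0 (Ioi 0)) (nhds 0)) := by
  have hδ₀ : 0 < 2 * β := by positivity
  have hδ₁ : 2 * β < 1 := by linarith
  choose k hk hB hneg hkh hkc using exists_integrable_bounded_eqOn_Icc hcont h0
  choose B hB using hB
  have hlink (T x z : ℝ) : ∀ t ∈ Icc 0 T,
      u x z t = A * lumped a lam α γ (2 * β) (k T) x z t := fun t ht => by
    rw [hu, mul_integral_eq_mul_lumped A x z fun τ hτ => ?_]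
    rw [hg₁, exp_mul_lconv_lconv_eq_halfLineAverage ha hβ₁ hβ₂ (hk T) (hB T) (hneg T)
      (fun r hr => (hkh T ⟨hr.1.le, hr.2.le.trans ht.2⟩).symm) ht.1 hτ (hf₁ τ) (hf₂ τ z)]
  have hnow {t : ℝ} (ht : 0 < t) (x z : ℝ) :=
    hlink (t + 1) x z t ⟨ht.le, (lt_add_one t).le⟩
  refine ⟨fun x z t hx hz ht => ?_, fun x t hx ht => ?_, fun t ht => ?_, fun t ht => ?_,
    fun x z hx hz => ?_⟩
  · rw [caputo_congr_const_mul _ ht.le (lt_add_one t) (hlink _ x z),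
      caputo_lumped_eq ha hα hδ₀ hδ₁ lam γ (hk _) (hneg _) hx hz ht.le]
    simp only [hnow ht, iteratedDeriv_two_const_mul, deriv_const_mul_field]
    ring
  · rw [caputo_congr_const_mul _ ht.le (lt_add_one t) (hlink _ x 0),
      caputo_lumped_zero_eq ha hα hδ₀ hδ₁ lam γ (hk _) (hneg _) (hB _) hx ht.le]
    simp only [hnow ht, iteratedDeriv_two_const_mul, deriv_const_mul_field]
    ring
  · simp only [hnow ht, ← hkh (t + 1) ⟨ht.le, (lt_add_one t).le⟩]
    exact (tendsto_lumped_nhds_corner ha hα.le hδ₀ hδ₁ lam γ (hk _) (hB _)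
      (hkc _ t ⟨ht, lt_add_one t⟩)).const_mul A
  · simpa only [hnow ht, mul_zero] using
      (tendsto_lumped_comap_sq_add_sq ha hα hδ₀ hδ₁ lam γ (hk _) (hneg _) t).const_mul A
  · have hlim := (tendsto_lumped_nhdsGT_zero ha hα hδ₀ hδ₁ lam γ (hk 1) (hneg 1) hx
      hz.le).const_mul A
    rw [mul_zero] at hlim
    exact hlim.congr' (eventually_of_mem (Ioo_mem_nhdsGT one_pos) fun t ht =>
      (hlink 1 x z t ⟨ht.1.le, ht.2.le⟩).symm)

/-- Theorem 1: the fractional incomplete lumped formulation in the linear case.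
The function `u(x,z,t) = (A e^{γx}/(2√π)) ∫_0^∞ x τ^{−3/2} e^{−x²/(4τ)−γ²τ}
e^{λ(z+ατ)/(2a²)} g₁(t,τ,z) dτ`, with `g₁ = f₁ ⋆ h ⋆ f₂` a double Laplace
convolution, solves the boundary value problem (1.5)–(1.7). -/
theorem fractional_incomplete_lumped_linear
    (a lam α γ A β : ℝ) (ha : 0 < a) (hlam : 0 < lam) (hα : 0 < α) (hγ : 0 < γ)
    (hA : 0 < A) (hβ₁ : 0 < β) (hβ₂ : β < 1 / 2)
    (h : ℝ → ℝ) (hcont : ContinuousOn h (Ici 0))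
    (hbdd : ∃ Cb : ℝ, ∀ t : ℝ, 0 ≤ t → |h t| ≤ Cb) (h0 : h 0 = 0)
    (f₁ : ℝ → ℝ → ℝ)
    (hf₁ : ∀ τ s : ℝ, f₁ τ s =
      (2 * β * τ / s ^ (2 * β + 1)) * Mwr (τ / s ^ (2 * β)) (2 * β))
    (f₂ : ℝ → ℝ → ℝ → ℝ)
    (hf₂ : ∀ τ z s : ℝ, f₂ τ z s =
      (β * (z + α * τ) / (a * Real.sqrt π * s ^ (2 * β + 1))) *
        ∫ w in Ioi (0 : ℝ), w ^ (-(1 / 2 : ℝ)) *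
          Real.exp (-(z + α * τ) ^ 2 / (4 * a ^ 2 * w) - lam ^ 2 * w / (4 * a ^ 2)) *
          Mwr (w / s ^ (2 * β)) (2 * β))
    (g₁ : ℝ → ℝ → ℝ → ℝ)
    (hg₁ : ∀ t τ z : ℝ, g₁ t τ z = lconv (lconv (f₁ τ) h) (f₂ τ z) t)
    (u : ℝ → ℝ → ℝ → ℝ)
    (hu : ∀ x z t : ℝ, u x z t =
      (A * Real.exp (γ * x) / (2 * Real.sqrt π)) *
        ∫ τ in Ioi (0 : ℝ), x * τ ^ (-(3 / 2 : ℝ)) *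
          Real.exp (-x ^ 2 / (4 * τ) - γ ^ 2 * τ) *
          Real.exp (lam * (z + α * τ) / (2 * a ^ 2)) * g₁ t τ z) :
    -- (i) the fractional heat equation for `x, z, t > 0`
    (∀ x z t : ℝ, 0 < x → 0 < z → 0 < t →
      caputo (2 * β) (fun t' => u x z t') t =
        a ^ 2 * iteratedDeriv 2 (fun z' => u x z' t) z -
          lam * deriv (fun z' => u x z' t) z) ∧
    -- (ii) the boundary condition at `z = 0`
    (∀ x t : ℝ, 0 < x → 0 < t →
      caputo (2 * β) (fun t' => u x 0 t') t =
        iteratedDeriv 2 (fun x' => u x' 0 t) x -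
          2 * γ * deriv (fun x' => u x' 0 t) x +
          α * deriv (fun z' => u x z' t) 0) ∧
    -- (iii) `u → A h(t)` as `(x,z) → (0,0)`
    (∀ t : ℝ, 0 < t →
      Tendsto (fun w : ℝ × ℝ => u w.1 w.2 t)
        (nhdsWithin (0, 0) (Ioi (0 : ℝ) ×ˢ Ioi (0 : ℝ))) (nhds (A * h t))) ∧
    -- (iv) `u → 0` as `x² + z² → ∞`
    (∀ t : ℝ, 0 < t →
      Tendsto (fun w : ℝ × ℝ => u w.1 w.2 t)
        ((comap (fun w : ℝ × ℝ => w.1 ^ 2 + w.2 ^ 2) atTop) ⊓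
          𝓟 (Ioi (0 : ℝ) ×ˢ Ioi (0 : ℝ))) (nhds 0)) ∧
    -- (v) `u → 0` as `t → 0⁺`
    (∀ x z : ℝ, 0 < x → 0 < z →
      Tendsto (fun t => u x z t) (nhdsWithin 0 (Ioi 0)) (nhds 0)) :=
  fractional_incomplete_lumped_linear_general a lam α γ A β ha hα hβ₁ hβ₂ h hcont h0 f₁ hf₁ f₂ hf₂
    g₁ hg₁ u hu
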